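/- arXiv:2010.09502 — 2 statements merged into one kernel-verified Lean document; each statement's English description precedes it below -/
import Mathlib

section
/- For every u ∈ [−π, π] with u ≠ 0 and every n ∈ ℕ, n ≥ 1, the integral ∫₀^∞ ( x·K₀ˢ(2x·cosh u) − 1/(π·cosh u) ) · Im[J_{in/2}(x)²] dx converges absolutely and equals sin(nu) / (π·sinh(2u)·cosh(πn/2)). -/
open MeasureTheory Filter Topology

/-- Bessel function of the first kind of complex order `ν` at real `x > 0`. -/
noncomputable def besselJ (ν : ℂ) (x : ℝ) : ℂ :=
  ∑' k : ℕ, ((-1 : ℂ) ^ k * Complex.exp ((ν + 2 * k) * (Real.log (x / 2) : ℂ))) /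
    ((Nat.factorial k : ℂ) * Complex.Gamma (ν + k + 1))

/-- Bessel function of the second kind of complex order `ν` at real `x > 0`. -/
noncomputable def besselY (ν : ℂ) (x : ℝ) : ℂ :=
  (besselJ ν x * Complex.cos (Real.pi * ν) - besselJ (-ν) x) / Complex.sin (Real.pi * ν)

/-- Bessel function of the first kind of order `0` (real-valued). -/
noncomputable def besselJ0 (x : ℝ) : ℝ :=
  ∑' k : ℕ, (-1 : ℝ) ^ k * (x / 2) ^ (2 * k) / (Nat.factorial k : ℝ) ^ 2

/-- Lommel function `S_{-1,0}` for `x > 0`. -/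
noncomputable def lommelS (x : ℝ) : ℝ :=
  ∫ t in Set.Ioi (0 : ℝ), t * Real.exp (-x * Real.sinh t)

/-- Struve function `K₀` for `x > 0`. -/
noncomputable def struveK0 (x : ℝ) : ℝ :=
  (2 / Real.pi) * ∫ t in Set.Ioi (0 : ℝ), Real.exp (-x * Real.sinh t)

/-- Bessel function of the second kind of order `0` (real-valued, for `x > 0`). -/
noncomputable def besselY0 (x : ℝ) : ℝ :=
  (2 / Real.pi) * ((Real.log (x / 2) + Real.eulerMascheroniConstant) * besselJ0 x +
    ∑' k : ℕ, (-1 : ℝ) ^ k * ((harmonic (k + 1) : ℚ) : ℝ) * (x / 2) ^ (2 * (k + 1)) /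
      (Nat.factorial (k + 1) : ℝ) ^ 2)

/-- Struve function `H₀`: `H₀ = K₀ˢ + Y₀`. -/
noncomputable def struveH0 (x : ℝ) : ℝ := struveK0 x + besselY0 x

/-- Gamma ratio as a generalized binomial coefficient. -/
lemma aux_choose (z : ℂ) (hz : 0 ≤ z.re) (m j : ℕ) :
    Ring.choose (z + m + j) m * (m.factorial : ℂ) * Complex.Gamma (z + j + 1)
      = Complex.Gamma (z + m + j + 1) := by
  induction m generalizing j with
  | zero => simp
  | succ m ih =>
    have hne : z + m + j + 1 ≠ 0 := by
      intro h
      have := congrArg Complex.re h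
      simp at this
      have h1 : (0:ℝ) ≤ m := Nat.cast_nonneg m
      have h2 : (0:ℝ) ≤ j := Nat.cast_nonneg j
      linarith
    have h1 := ih (j + 1)
    have hne2 : z + j + 1 ≠ 0 := by
      intro h
      have := congrArg Complex.re h
      simp at this
      have h2 : (0:ℝ) ≤ j := Nat.cast_nonneg j
      linarith
    have e1 : z + ((j + 1 : ℕ) : ℂ) + 1 = (z + j + 1) + 1 := by push_cast; ring
    have e2 : z + m + ((j + 1 : ℕ) : ℂ) + 1 = z + ((m + 1 : ℕ) : ℂ) + j + 1 := by push_cast; ring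
    have e3 : z + m + ((j + 1 : ℕ) : ℂ) = z + ((m + 1 : ℕ) : ℂ) + j := by push_cast; ring
    rw [e1, e2, e3, Complex.Gamma_add_one _ hne2] at h1
    rw [← h1]
    have h3 : (Ring.choose (z + ((m + 1 : ℕ) : ℂ) + j) (m+1)) * ((m+1).factorial : ℂ)
      = Ring.choose (z + ((m + 1 : ℕ) : ℂ) + j) m * (m.factorial : ℂ) * (z + j + 1) := by
      have d1 := Ring.descPochhammer_eq_factorial_smul_choose (z + ((m + 1 : ℕ) : ℂ) + j) (m+1)
      have d2 := Ring.descPochhammer_eq_factorial_smul_choose (z + ((m + 1 : ℕ) : ℂ) + j) m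
      rw [nsmul_eq_mul] at d1 d2
      rw [mul_comm _ (m.factorial : ℂ), mul_comm _ ((m+1).factorial : ℂ), ← d1, ← d2,
        descPochhammer_succ_right, Polynomial.smeval_mul, Polynomial.smeval_sub]
      simp [Polynomial.smeval_natCast]
      left
      ring
    rw [h3]
    ring

lemma aux_vandermonde (z : ℂ) (hz : z.re = 0) (k : ℕ) :
    ∑ ij ∈ Finset.HasAntidiagonal.antidiagonal k, 1 / ((ij.1.factorial : ℂ) * Complex.Gamma (z + ij.1 + 1)) *
      (1 / ((ij.2.factorial : ℂ) * Complex.Gamma (z + ij.2 + 1)))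
    = Complex.Gamma (2 * z + 2 * k + 1) /
      (k.factorial * Complex.Gamma (z + k + 1) ^ 2 * Complex.Gamma (2 * z + k + 1)) := by
  have hG : ∀ (w : ℂ) (hw : w.re = 0) (j : ℕ), Complex.Gamma (w + j + 1) ≠ 0 := by
    intro w hw j
    apply Complex.Gamma_ne_zero_of_re_pos
    simp [hw]; positivity
  have hz2 : (2 * z).re = 0 := by simp [hz]
  have hv := Ring.add_choose_eq k (Commute.all (z + k) (z + k))
  have h0 := aux_choose (2 * z) hz2.ge k k
  have e0 : z + k + (z + k) = 2 * z + k + k := by ring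
  rw [e0] at hv
  rw [hv] at h0
  have e1 : 2 * z + 2 * k + 1 = 2 * z + k + k + 1 := by ring
  rw [e1, ← h0, eq_div_iff (by
    have := hG z hz k
    have := hG (2*z) hz2 k
    have : (k.factorial : ℂ) ≠ 0 := by exact_mod_cast k.factorial_ne_zero
    positivity), Finset.sum_mul, Finset.sum_mul, Finset.sum_mul]
  refine Finset.sum_congr rfl fun ij hij => ?_
  obtain ⟨i, j⟩ := ij
  have hk : i + j = k := by simpa using hij
  subst hk
  have hi := aux_choose z hz.ge i j
  have hj := aux_choose z hz.ge j i
  have f1 := hG z hz i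
  have f2 := hG z hz j
  have e2 : z + ((i + j : ℕ) : ℂ) = z + i + j := by push_cast; ring
  have e3 : z + i + j = z + j + i := by ring
  have fi : (i.factorial : ℂ) ≠ 0 := by exact_mod_cast i.factorial_ne_zero
  have fj : (j.factorial : ℂ) ≠ 0 := by exact_mod_cast j.factorial_ne_zero
  simp only
  rw [e2, sq]
  nth_rewrite 1 [← hi]
  rw [e3, ← hj]
  field_simp

lemma aux_gamma_lower (z : ℂ) (hz : z.re = 0) (k : ℕ) :
    ‖Complex.Gamma (z + 1)‖ ≤ ‖Complex.Gamma (z + k + 1)‖ := by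
  induction k with
  | zero => simp
  | succ k ih =>
    have hre : (z + k + 1).re = k + 1 := by simp [hz]
    have hne : z + k + 1 ≠ 0 := by
      intro h
      rw [h] at hre
      simp at hre
      have : (0:ℝ) ≤ k := Nat.cast_nonneg k
      linarith
    have e : z + ((k + 1 : ℕ) : ℂ) + 1 = (z + k + 1) + 1 := by push_cast; ring
    rw [e, Complex.Gamma_add_one _ hne, norm_mul]
    have h1 : 1 ≤ ‖z + k + 1‖ := by
      have := Complex.re_le_norm (z + k + 1)
      rw [hre] at this
      have : (0:ℝ) ≤ k := Nat.cast_nonneg k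
      linarith
    nlinarith [norm_nonneg (Complex.Gamma (z + k + 1))]

lemma aux_term_norm (z : ℂ) (hz : z.re = 0) (l : ℝ) (k : ℕ) :
    ‖((-1 : ℂ) ^ k * Complex.exp ((z + 2 * k) * (l : ℂ))) /
      ((Nat.factorial k : ℂ) * Complex.Gamma (z + k + 1))‖
    ≤ (Real.exp (2 * l)) ^ k / k.factorial * (1 / ‖Complex.Gamma (z + 1)‖) := by
  have h1 : ‖Complex.exp ((z + 2 * k) * (l : ℂ))‖ = (Real.exp (2 * l)) ^ k := by
    rw [Complex.norm_exp, ← Real.exp_nat_mul]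
    congr 1
    simp [hz]; ring
  have hp : 0 < ‖Complex.Gamma (z + 1)‖ := norm_pos_iff.2
    (Complex.Gamma_ne_zero_of_re_pos (by simp [hz]))
  rw [norm_div, norm_mul, norm_mul, h1]
  simp only [norm_pow, norm_neg, norm_one, one_pow, one_mul, Complex.norm_natCast]
  rw [← div_div, div_eq_mul_one_div (_ / _)]
  gcongr
  exact aux_gamma_lower z hz k

lemma aux_summable_norm (z : ℂ) (hz : z.re = 0) (l : ℝ) :
    Summable fun k : ℕ => ‖((-1 : ℂ) ^ k * Complex.exp ((z + 2 * k) * (l : ℂ))) /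
      ((Nat.factorial k : ℂ) * Complex.Gamma (z + k + 1))‖ :=
  Summable.of_nonneg_of_le (fun _ => norm_nonneg _) (aux_term_norm z hz l)
    ((Real.summable_pow_div_factorial _).mul_right _)

lemma measurable_besselJ (z : ℂ) (hz : z.re = 0) : Measurable (besselJ z) := by
  refine measurable_of_tendsto_metrizable (f := fun (n : ℕ) (x : ℝ) => ∑ k ∈ Finset.range n,
    ((-1 : ℂ) ^ k * Complex.exp ((z + 2 * k) * (Real.log (x / 2) : ℂ))) /
      ((Nat.factorial k : ℂ) * Complex.Gamma (z + k + 1))) (fun n => ?_) ?_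
  · fun_prop
  · rw [tendsto_pi_nhds]
    intro x
    exact (aux_summable_norm z hz (Real.log (x/2))).of_norm.hasSum.tendsto_sum_nat

lemma betaTrig (a b : ℂ) :
    Complex.betaIntegral a b = 2 * ∫ φ in Set.Ioo (0:ℝ) (Real.pi / 2),
      Complex.exp ((2 * a - 1) * (Real.log (Real.sin φ) : ℂ)) *
      Complex.exp ((2 * b - 1) * (Real.log (Real.cos φ) : ℂ)) := by
  have himg : (fun φ : ℝ => Real.sin φ ^ 2) '' Set.Ioo 0 (Real.pi / 2) = Set.Ioo 0 1 := by
    ext r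
    constructor
    · rintro ⟨φ, ⟨h0, h1⟩, rfl⟩
      have hs : 0 < Real.sin φ := Real.sin_pos_of_pos_of_lt_pi h0 (by linarith [Real.pi_pos])
      have hc : 0 < Real.cos φ := Real.cos_pos_of_mem_Ioo ⟨by linarith, h1⟩
      constructor
      · positivity
      · simp only
        nlinarith [Real.sin_sq_add_cos_sq φ]
    · rintro ⟨h0, h1⟩
      refine ⟨Real.arcsin (Real.sqrt r), ⟨?_, ?_⟩, ?_⟩
      · rw [Real.arcsin_pos]; exact Real.sqrt_pos.2 h0
      · rw [Real.arcsin_lt_pi_div_two, Real.sqrt_lt' one_pos]; simpa using h1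
      · simp only
        rw [Real.sin_arcsin (by linarith [Real.sqrt_nonneg r]), Real.sq_sqrt h0.le]
        exact Real.sqrt_le_one.2 h1.le
  have hinj : Set.InjOn (fun φ : ℝ => Real.sin φ ^ 2) (Set.Ioo 0 (Real.pi / 2)) := by
    intro x hx y hy hxy
    have hsx : 0 < Real.sin x := Real.sin_pos_of_pos_of_lt_pi hx.1 (by linarith [Real.pi_pos, hx.2])
    have hsy : 0 < Real.sin y := Real.sin_pos_of_pos_of_lt_pi hy.1 (by linarith [Real.pi_pos, hy.2])
    have h : Real.sin x = Real.sin y := by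
      have := (sq_eq_sq₀ hsx.le hsy.le).1 hxy
      exact this
    exact Real.injOn_sin ⟨by linarith [hx.1, Real.pi_pos], hx.2.le⟩
      ⟨by linarith [hy.1, Real.pi_pos], hy.2.le⟩ h
  rw [Complex.betaIntegral, intervalIntegral.integral_of_le zero_le_one,
    integral_Ioc_eq_integral_Ioo, ← himg,
    integral_image_eq_integral_abs_deriv_smul measurableSet_Ioo
      (f' := fun φ => 2 * Real.sin φ * Real.cos φ) (fun x _ => ?_) hinj,
    ← integral_const_mul]
  · refine setIntegral_congr_fun measurableSet_Ioo fun φ hφ => ?_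
    have hs : 0 < Real.sin φ := Real.sin_pos_of_pos_of_lt_pi hφ.1 (by linarith [Real.pi_pos, hφ.2])
    have hc : 0 < Real.cos φ := Real.cos_pos_of_mem_Ioo ⟨by linarith [hφ.1, Real.pi_pos], hφ.2⟩
    have hl : ∀ (s : ℝ) (hs : 0 < s) (c : ℂ), (((s ^ 2 : ℝ) : ℂ)) ^ (c - 1) * s
        = Complex.exp ((2 * c - 1) * (Real.log s : ℂ)) := by
      intro s hs c
      have hs2 : ((s ^ 2 : ℝ) : ℂ) ≠ 0 := by exact_mod_cast (pow_pos hs 2).ne'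
      rw [Complex.cpow_def_of_ne_zero hs2, ← Complex.ofReal_log (by positivity), Real.log_pow]
      nth_rewrite 2 [← Real.exp_log hs]
      rw [Complex.ofReal_exp, ← Complex.exp_add]
      congr 1
      push_cast
      ring
    rw [abs_of_pos (by positivity), ← hl _ hs, ← hl _ hc, Complex.real_smul]
    have : (1 - ((Real.sin φ ^ 2 : ℝ) : ℂ)) = ((Real.cos φ ^ 2 : ℝ) : ℂ) := by
      rw [← Complex.ofReal_one, ← Complex.ofReal_sub, Real.cos_sq']
    rw [this, Complex.ofReal_mul, Complex.ofReal_mul, Complex.ofReal_ofNat]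
    ring
  · have h := (Real.hasDerivAt_sin x).fun_pow 2
    have h2 : HasDerivAt (fun φ : ℝ => Real.sin φ ^ 2) (2 * Real.sin x * Real.cos x) x :=
      h.congr_deriv (by push_cast; ring)
    exact h2.hasDerivWithinAt

lemma aux_cos_int (z : ℂ) (hz : z.re = 0) (k : ℕ) :
    Integrable (fun θ : ℝ => Complex.exp ((2 * z + 2 * k) * (Real.log (Real.cos θ) : ℂ)))
      (volume.restrict (Set.Ioo 0 (Real.pi / 2))) ∧
    ∀ θ : ℝ, ‖Complex.exp ((2 * z + 2 * k) * (Real.log (Real.cos θ) : ℂ))‖ ≤ 1 := by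
  have hb : ∀ θ : ℝ, ‖Complex.exp ((2 * z + 2 * k) * (Real.log (Real.cos θ) : ℂ))‖ ≤ 1 := by
    intro θ
    rw [Complex.norm_exp, Real.exp_le_one_iff]
    simp [hz]
    have : Real.log (Real.cos θ) ≤ 0 := by
      rw [← Real.log_abs]
      exact Real.log_nonpos (abs_nonneg _) (Real.abs_cos_le_one θ)
    nlinarith [(Nat.cast_nonneg k : (0:ℝ) ≤ k)]
  refine ⟨?_, hb⟩
  refine Integrable.of_bound (C := 1) ?_ (ae_of_all _ hb)
  apply Measurable.aestronglyMeasurable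
  fun_prop

lemma besselJ_sq (z : ℂ) (hz : z.re = 0) (x : ℝ) (hx : 0 < x) :
    besselJ z x ^ 2 = (2 / Real.pi : ℂ) * ∫ θ in Set.Ioo (0:ℝ) (Real.pi / 2),
      besselJ (2 * z) (2 * x * Real.cos θ) := by
  have hz2 : (2 * z).re = 0 := by simp [hz]
  set D : ℕ → ℂ := fun k => ((-1 : ℂ) ^ k * Complex.exp ((2 * z + 2 * k) * (Real.log x : ℂ))) /
      ((Nat.factorial k : ℂ) * Complex.Gamma (2 * z + k + 1)) with hD
  have hDs : Summable fun k => ‖D k‖ := aux_summable_norm (2 * z) hz2 (Real.log x)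
  set μ0 := (volume.restrict (Set.Ioo (0:ℝ) (Real.pi / 2))) with hμ0
  have hsum := hasSum_integral_of_summable_integral_norm (μ := μ0)
    (F := fun k θ => D k * Complex.exp ((2 * z + 2 * k) * (Real.log (Real.cos θ) : ℂ)))
    (fun k => ((aux_cos_int z hz k).1.const_mul _)) (by
      refine Summable.of_nonneg_of_le (fun k => integral_nonneg fun _ => norm_nonneg _)
        (fun k => ?_) (hDs.mul_right (μ0.real Set.univ))
      have : ‖D k‖ * μ0.real Set.univ = ∫ _, ‖D k‖ ∂μ0 := by
        rw [integral_const, smul_eq_mul, mul_comm]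
      rw [this]
      refine integral_mono_of_nonneg (ae_of_all _ fun _ => norm_nonneg _) (integrable_const _)
        (ae_of_all _ fun θ => ?_)
      simp only [norm_mul]
      exact mul_le_of_le_one_right (norm_nonneg _) ((aux_cos_int z hz k).2 θ))
  have hI : ∫ θ in Set.Ioo (0:ℝ) (Real.pi / 2), besselJ (2 * z) (2 * x * Real.cos θ)
      = ∫ θ, (∑' k, D k * Complex.exp ((2 * z + 2 * k) * (Real.log (Real.cos θ) : ℂ))) ∂μ0 := by
    refine setIntegral_congr_fun measurableSet_Ioo fun θ hθ => ?_
    have hc : 0 < Real.cos θ :=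
      Real.cos_pos_of_mem_Ioo ⟨by linarith [hθ.1, Real.pi_pos], hθ.2⟩
    simp only [besselJ]
    refine tsum_congr fun k => ?_
    have : 2 * x * Real.cos θ / 2 = x * Real.cos θ := by ring
    rw [this, Real.log_mul hx.ne' hc.ne', Complex.ofReal_add, mul_add, Complex.exp_add]
    simp only [hD]
    ring
  rw [hI, ← hsum.tsum_eq, ← tsum_mul_left, sq]
  have hS := aux_summable_norm z hz (Real.log (x / 2))
  rw [besselJ, tsum_mul_tsum_eq_tsum_sum_antidiagonal_of_summable_norm hS hS]
  refine tsum_congr fun k => ?_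
  have hv := aux_vandermonde z hz k
  have hL : ∑ kl ∈ Finset.HasAntidiagonal.antidiagonal k,
      ((-1 : ℂ) ^ kl.1 * Complex.exp ((z + 2 * kl.1) * (Real.log (x / 2) : ℂ))) /
        ((Nat.factorial kl.1 : ℂ) * Complex.Gamma (z + kl.1 + 1)) *
      (((-1 : ℂ) ^ kl.2 * Complex.exp ((z + 2 * kl.2) * (Real.log (x / 2) : ℂ))) /
        ((Nat.factorial kl.2 : ℂ) * Complex.Gamma (z + kl.2 + 1)))
      = (-1 : ℂ) ^ k * Complex.exp ((2 * z + 2 * k) * (Real.log (x / 2) : ℂ)) *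
        (Complex.Gamma (2 * z + 2 * k + 1) /
        (k.factorial * Complex.Gamma (z + k + 1) ^ 2 * Complex.Gamma (2 * z + k + 1))) := by
    rw [← hv, Finset.mul_sum]
    refine Finset.sum_congr rfl fun ij hij => ?_
    obtain ⟨i, j⟩ := ij
    have hk : i + j = k := by simpa using hij
    subst hk
    have e : (2 * z + 2 * ((i + j : ℕ) : ℂ)) * (Real.log (x / 2) : ℂ)
      = (z + 2 * i) * (Real.log (x / 2) : ℂ) + (z + 2 * j) * (Real.log (x / 2) : ℂ) := by
      push_cast; ring
    rw [e, Complex.exp_add, pow_add]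
    simp only
    ring
  rw [hL, integral_const_mul]
  have hre : (z + k + 1 / 2).re = k + 1 / 2 := by simp [hz]
  have hB := betaTrig (1 / 2) (z + k + 1 / 2)
  rw [Complex.betaIntegral_eq_Gamma_mul_div _ _ (by norm_num) (by rw [hre]; positivity)] at hB
  have e1 : (2 * (1 / 2 : ℂ) - 1) = 0 := by norm_num
  have e2 : 2 * (z + k + 1 / 2) - 1 = 2 * z + 2 * k := by ring
  have e3 : 1 / 2 + (z + k + 1 / 2) = z + k + 1 := by ring
  rw [e1, e2, e3] at hB
  simp only [zero_mul, Complex.exp_zero, one_mul] at hB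
  have hd := Complex.Gamma_mul_Gamma_add_half (z + k + 1 / 2)
  have e4 : z + k + 1 / 2 + 1 / 2 = z + k + 1 := by ring
  have e5 : 2 * (z + k + 1 / 2) = 2 * z + 2 * k + 1 := by ring
  have e6 : 1 - (2 * z + 2 * k + 1) = -(2 * z + 2 * (k : ℂ)) := by ring
  rw [e4, e5, e6] at hd
  have hlog : (Real.log (x / 2) : ℂ) = (Real.log x : ℂ) - (Real.log 2 : ℂ) := by
    rw [Real.log_div hx.ne' two_ne_zero]; push_cast; rfl
  have h2 : (2 : ℂ) ^ (-(2 * z + 2 * (k : ℂ)))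
      = Complex.exp (-((2 * z + 2 * k) * (Real.log 2 : ℂ))) := by
    rw [Complex.cpow_def_of_ne_zero two_ne_zero]
    congr 1
    have : Complex.log 2 = (Real.log 2 : ℂ) := by simp
    rw [this]; ring
  have hG1 : Complex.Gamma (z + k + 1) ≠ 0 := Complex.Gamma_ne_zero_of_re_pos (by
    simp [hz]; positivity)
  have hG2 : Complex.Gamma (2 * z + k + 1) ≠ 0 := Complex.Gamma_ne_zero_of_re_pos (by
    simp [hz]; positivity)
  have hk : (k.factorial : ℂ) ≠ 0 := by exact_mod_cast k.factorial_ne_zero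
  have hpi : (Real.pi : ℂ) ≠ 0 := by exact_mod_cast Real.pi_ne_zero
  have hhalf : Complex.Gamma (1 / 2) = (Real.sqrt Real.pi : ℂ) := by
    rw [Complex.Gamma_one_half_eq, ]
    rw [Real.sqrt_eq_rpow, Complex.ofReal_cpow Real.pi_pos.le]
    push_cast
    rfl
  have hsq : (Real.sqrt Real.pi : ℂ) * (Real.sqrt Real.pi : ℂ) = Real.pi := by
    rw [← Complex.ofReal_mul, Real.mul_self_sqrt Real.pi_pos.le]
  have hint : (∫ θ, Complex.exp ((2 * z + 2 * k) * (Real.log (Real.cos θ) : ℂ)) ∂μ0)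
      = Real.pi * Complex.Gamma (2 * z + 2 * k + 1) *
        Complex.exp (-((2 * z + 2 * k) * (Real.log 2 : ℂ))) /
        (2 * Complex.Gamma (z + k + 1) ^ 2) := by
    have : (∫ θ, Complex.exp ((2 * z + 2 * k) * (Real.log (Real.cos θ) : ℂ)) ∂μ0)
      = (Complex.Gamma (1 / 2) * Complex.Gamma (z + k + 1 / 2) / Complex.Gamma (z + k + 1)) / 2 := by
      rw [hB, mul_div_cancel_left₀ _ two_ne_zero]
    rw [this, hhalf]
    have hd' : Complex.Gamma (z + k + 1 / 2) = Complex.Gamma (2 * z + 2 * k + 1) *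
      Complex.exp (-((2 * z + 2 * k) * (Real.log 2 : ℂ))) * (Real.sqrt Real.pi : ℂ)
        / Complex.Gamma (z + k + 1) := by
      rw [eq_div_iff hG1, hd, h2]
    rw [hd', ← hsq]
    field_simp
  rw [hint, hlog, mul_sub, sub_eq_add_neg, Complex.exp_add]
  simp only [hD]
  field_simp

lemma aux_norm_cpowcos (z : ℂ) (hz : z.re = 0) (θ : ℝ) :
    ‖Complex.exp (2 * z * (Real.log (Real.cos θ) : ℂ))‖ = 1 := by
  rw [Complex.norm_exp]
  simp [hz]

lemma aux_gamma_half : Complex.Gamma (1 / 2) = (Real.sqrt Real.pi : ℂ) := by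
  rw [Complex.Gamma_one_half_eq, Real.sqrt_eq_rpow, Complex.ofReal_cpow Real.pi_pos.le]
  push_cast
  rfl

lemma poisson_half (z : ℂ) (hz : z.re = 0) (y : ℝ) (hy : 0 < y) :
    besselJ z y = 2 * Complex.exp (z * (Real.log (y / 2) : ℂ)) /
      (Complex.Gamma (z + 1 / 2) * (Real.sqrt Real.pi : ℂ)) *
      ∫ φ in Set.Ioo (0:ℝ) (Real.pi / 2),
        Complex.exp (2 * z * (Real.log (Real.cos φ) : ℂ)) * (Real.cos (y * Real.sin φ) : ℂ) := by
  set μ0 := (volume.restrict (Set.Ioo (0:ℝ) (Real.pi / 2))) with hμ0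
  set F : ℕ → ℝ → ℂ := fun k φ => Complex.exp (2 * z * (Real.log (Real.cos φ) : ℂ)) *
      (((-1) ^ k * (y * Real.sin φ) ^ (2 * k) / ((2 * k).factorial : ℝ) : ℝ) : ℂ) with hF
  have hFn : ∀ k φ, ‖F k φ‖ ≤ y ^ (2 * k) / ((2 * k).factorial : ℝ) := by
    intro k φ
    simp only [hF]
    rw [norm_mul, aux_norm_cpowcos z hz, one_mul, Complex.norm_real, norm_div, norm_mul]
    simp only [norm_pow, norm_neg, norm_one, one_pow, one_mul, norm_mul, Nat.abs_cast,
      Real.norm_eq_abs, abs_of_pos hy]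
    gcongr
    exact mul_le_of_le_one_right hy.le (Real.abs_sin_le_one φ)
  have hyS : Summable fun k : ℕ => y ^ (2 * k) / ((2 * k).factorial : ℝ) :=
    (Real.summable_pow_div_factorial y).comp_injective
      (i := fun k : ℕ => 2 * k) (fun a b h => by simpa using h)
  have hFi : ∀ k, Integrable (F k) μ0 := fun k =>
    Integrable.of_bound (C := y ^ (2 * k) / ((2 * k).factorial : ℝ))
      (Measurable.aestronglyMeasurable (by simp only [hF]; fun_prop)) (ae_of_all _ (hFn k))
  have hsum := hasSum_integral_of_summable_integral_norm (μ := μ0) (F := F) hFi (by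
      refine Summable.of_nonneg_of_le (fun k => integral_nonneg fun _ => norm_nonneg _)
        (fun k => ?_) (hyS.mul_right (μ0.real Set.univ))
      have : y ^ (2 * k) / ((2 * k).factorial : ℝ) * μ0.real Set.univ
          = ∫ _, y ^ (2 * k) / ((2 * k).factorial : ℝ) ∂μ0 := by
        rw [integral_const, smul_eq_mul, mul_comm]
      rw [this]
      exact integral_mono_of_nonneg (ae_of_all _ fun _ => norm_nonneg _) (integrable_const _)
        (ae_of_all _ fun θ => hFn k θ))
  have hI : ∀ φ, ∑' k, F k φ =
      Complex.exp (2 * z * (Real.log (Real.cos φ) : ℂ)) * (Real.cos (y * Real.sin φ) : ℂ) := by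
    intro φ
    have h1 := (Complex.hasSum_ofReal (L := SummationFilter.unconditional ℕ)).2 (Real.hasSum_cos (y * Real.sin φ))
    exact (h1.mul_left _).tsum_eq
  simp only [hI] at hsum
  rw [← hsum.tsum_eq, ← tsum_mul_left, besselJ]
  refine tsum_congr fun k => ?_
  have hint : ∫ φ, F k φ ∂μ0 = ((-1) ^ k * (y : ℂ) ^ (2 * k) / ((2 * k).factorial : ℂ)) *
      (Complex.betaIntegral (k + 1 / 2) (z + 1 / 2) / 2) := by
    rw [betaTrig, mul_div_cancel_left₀ _ two_ne_zero, ← integral_const_mul]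
    refine setIntegral_congr_fun measurableSet_Ioo fun φ hφ => ?_
    have hs : 0 < Real.sin φ := Real.sin_pos_of_pos_of_lt_pi hφ.1 (by linarith [Real.pi_pos, hφ.2])
    have e1 : 2 * ((k : ℂ) + 1 / 2) - 1 = ((2 * k : ℕ) : ℂ) := by push_cast; ring
    have e2 : 2 * (z + 1 / 2) - 1 = 2 * z := by ring
    simp only [hF]
    rw [e1, e2, Complex.exp_nat_mul, ← Complex.ofReal_exp, Real.exp_log hs]
    push_cast
    ring
  rw [hint, Complex.betaIntegral_eq_Gamma_mul_div _ _ (by simp; positivity) (by simp [hz])]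
  have hd := Complex.Gamma_mul_Gamma_add_half ((k : ℂ) + 1 / 2)
  have e4 : (k : ℂ) + 1 / 2 + 1 / 2 = k + 1 := by ring
  have e5 : 2 * ((k : ℂ) + 1 / 2) = ((2 * k : ℕ) : ℂ) + 1 := by push_cast; ring
  have e6 : 1 - (((2 * k : ℕ) : ℂ) + 1) = -((2 * k : ℕ) : ℂ) := by ring
  rw [e4, e5, e6, Complex.Gamma_nat_eq_factorial, Complex.Gamma_nat_eq_factorial, Complex.cpow_neg,
    Complex.cpow_natCast] at hd
  have e7 : (k : ℂ) + 1 / 2 + (z + 1 / 2) = z + k + 1 := by ring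
  have e8 : Complex.exp ((z + 2 * k) * (Real.log (y / 2) : ℂ))
      = Complex.exp (z * (Real.log (y / 2) : ℂ)) * ((y : ℂ) / 2) ^ (2 * k) := by
    have : (z + 2 * k) * (Real.log (y / 2) : ℂ) = z * (Real.log (y / 2) : ℂ) +
      ((2 * k : ℕ) : ℂ) * (Real.log (y / 2) : ℂ) := by push_cast; ring
    rw [this, Complex.exp_add, Complex.exp_nat_mul ,← Complex.ofReal_exp,
      Real.exp_log (by positivity)]
    push_cast; rfl
  have hG1 : Complex.Gamma (z + k + 1) ≠ 0 := Complex.Gamma_ne_zero_of_re_pos (by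
    simp [hz]; positivity)
  have hG2 : Complex.Gamma (z + 1 / 2) ≠ 0 := Complex.Gamma_ne_zero_of_re_pos (by simp [hz])
  have hk : (k.factorial : ℂ) ≠ 0 := by exact_mod_cast k.factorial_ne_zero
  have hk2 : ((2 * k).factorial : ℂ) ≠ 0 := by exact_mod_cast (2 * k).factorial_ne_zero
  have hpi : (Real.sqrt Real.pi : ℂ) ≠ 0 := by
    exact_mod_cast (Real.sqrt_pos.2 Real.pi_pos).ne'
  have hd' : Complex.Gamma ((k : ℂ) + 1 / 2) = ((2 * k).factorial : ℂ) * (2 ^ (2 * k))⁻¹ *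
      (Real.sqrt Real.pi : ℂ) / (k.factorial : ℂ) := by
    rw [eq_div_iff hk, hd]
  rw [e7, e8, hd', div_pow]
  generalize Complex.Gamma (z + 1 / 2) = g2 at *
  generalize Complex.Gamma (z + k + 1) = g1 at *
  generalize (Real.sqrt Real.pi : ℂ) = sp at *
  field_simp

lemma besselJ_bound (z : ℂ) (hz : z.re = 0) : ∃ C : ℝ, 0 ≤ C ∧ ∀ y : ℝ, 0 < y →
    ‖besselJ z y‖ ≤ C := by
  refine ⟨‖2 / (Complex.Gamma (z + 1 / 2) * (Real.sqrt Real.pi : ℂ))‖ * (1 * (volume.restrict (Set.Ioo (0:ℝ) (Real.pi / 2))).real Set.univ),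
    by positivity, fun y hy => ?_⟩
  rw [poisson_half z hz y hy, norm_mul]
  gcongr
  · rw [mul_div_right_comm, norm_mul]
    refine mul_le_of_le_one_right (norm_nonneg _) ?_
    rw [Complex.norm_exp]; simp [hz]
  · refine norm_integral_le_of_norm_le_const (ae_of_all _ fun φ => ?_)
    rw [norm_mul, aux_norm_cpowcos z hz, one_mul, Complex.norm_real]
    exact Real.abs_cos_le_one _

lemma besselJ_poisson (z : ℂ) (hz : z.re = 0) (y : ℝ) (hy : 0 < y) :
    besselJ z y = Complex.exp (z * (Real.log (y / 2) : ℂ)) /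
      (Complex.Gamma (z + 1 / 2) * (Real.sqrt Real.pi : ℂ)) *
      ∫ φ in (-(Real.pi / 2))..(Real.pi / 2),
        Complex.exp (2 * z * (Real.log (Real.cos φ) : ℂ)) * (Real.cos (y * Real.sin φ) : ℂ) := by
  set f : ℝ → ℂ := fun φ =>
    Complex.exp (2 * z * (Real.log (Real.cos φ) : ℂ)) * (Real.cos (y * Real.sin φ) : ℂ) with hf
  have hfi : ∀ a b : ℝ, IntervalIntegrable f volume a b := by
    intro a b
    rw [intervalIntegrable_iff, Set.uIoc]
    refine Integrable.of_bound (C := 1)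
      (Measurable.aestronglyMeasurable (by simp only [hf]; fun_prop)) (ae_of_all _ fun φ => ?_)
    simp only [hf]
    rw [norm_mul, aux_norm_cpowcos z hz, one_mul, Complex.norm_real]
    exact Real.abs_cos_le_one _
  have h1 : ∫ φ in (-(Real.pi / 2))..0, f φ = ∫ φ in (0:ℝ)..(Real.pi / 2), f φ := by
    have := intervalIntegral.integral_comp_neg (a := 0) (b := Real.pi / 2) f
    rw [neg_zero] at this
    rw [← this]
    refine intervalIntegral.integral_congr fun φ _ => ?_
    simp [hf]
  rw [← intervalIntegral.integral_add_adjacent_intervals (hfi _ 0) (hfi 0 _), h1,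
    poisson_half z hz y hy, intervalIntegral.integral_of_le (by positivity),
    integral_Ioc_eq_integral_Ioo]
  ring

lemma aux_laplace_int (z : ℂ) (hz : z.re = 0) (r : ℂ) (hr : 0 < r.re) :
    IntegrableOn (fun y : ℝ => Complex.exp (z * (Real.log y : ℂ)) * Complex.exp (-(r * y)))
      (Set.Ioi 0) := by
  refine Integrable.mono' (exp_neg_integrableOn_Ioi 0 hr)
    (Measurable.aestronglyMeasurable (by fun_prop)) (ae_of_all _ fun y => ?_)
  rw [norm_mul, Complex.norm_exp, Complex.norm_exp]
  simp [hz]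

lemma aux_laplace_diff (z : ℂ) (hz : z.re = 0) :
    DifferentiableOn ℂ (fun r : ℂ => ∫ y in Set.Ioi (0:ℝ),
      Complex.exp (z * (Real.log y : ℂ)) * Complex.exp (-(r * y))) {r | 0 < r.re} := by
  intro r hr
  have hr' : 0 < r.re := hr
  apply DifferentiableAt.differentiableWithinAt
  set ε := r.re / 2 with hε
  have hε0 : 0 < ε := by positivity
  have hs : {w : ℂ | ε < w.re} ∈ 𝓝 r :=
    (isOpen_lt continuous_const Complex.continuous_re).mem_nhds (by simp [hε]; linarith)
  refine (hasDerivAt_integral_of_dominated_loc_of_deriv_le (𝕜 := ℂ) (s := {w : ℂ | ε < w.re})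
    (F' := fun w y => Complex.exp (z * (Real.log y : ℂ)) * (Complex.exp (-(w * y)) * (-(y:ℂ))))
    (bound := fun y => (2 / ε) * Real.exp (-(ε/2) * y)) hs ?_ ?_ ?_ ?_ ?_ ?_).2.differentiableAt
  · exact Eventually.of_forall fun w => Measurable.aestronglyMeasurable (by fun_prop)
  · exact aux_laplace_int z hz r hr
  · exact Measurable.aestronglyMeasurable (by fun_prop)
  · refine (ae_restrict_iff' measurableSet_Ioi).2 (ae_of_all _ fun y hy w hw => ?_)
    have hy' : 0 < y := hy
    have hw' : ε < w.re := hw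
    rw [norm_mul, norm_mul, Complex.norm_exp, Complex.norm_exp]
    simp [hz, abs_of_pos hy']
    have h1 : y ≤ (2 / ε) * Real.exp (ε / 2 * y) := by
      have := Real.add_one_le_exp (ε / 2 * y)
      have h2 : y = (2 / ε) * (ε / 2 * y) := by field_simp
      calc y = (2 / ε) * (ε / 2 * y) := h2
        _ ≤ _ := by gcongr; linarith
    calc Real.exp (-(w.re * y)) * y ≤ Real.exp (-(ε * y)) * ((2 / ε) * Real.exp (ε / 2 * y)) := by
          gcongr
      _ = (2 / ε) * Real.exp (-(ε/2*y)) := by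
          rw [mul_left_comm, ← Real.exp_add]; congr 2; ring
  · exact (exp_neg_integrableOn_Ioi 0 (half_pos hε0)).const_mul _
  · refine ae_of_all _ fun y w _ => ?_
    have h1 : HasDerivAt (fun w : ℂ => -(w * (y:ℂ))) (-(y:ℂ)) w :=
      (((hasDerivAt_id' w).mul_const (y:ℂ)).fun_neg).congr_deriv (by ring)
    exact (h1.cexp).const_mul _

lemma gamma_laplace (z : ℂ) (hz : z.re = 0) (r : ℂ) (hr : 0 < r.re) :
    ∫ y in Set.Ioi (0:ℝ), Complex.exp (z * (Real.log y : ℂ)) * Complex.exp (-(r * y))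
      = Complex.Gamma (z + 1) * r ^ (-(z + 1)) := by
  have hopen : IsOpen {r : ℂ | 0 < r.re} := isOpen_lt continuous_const Complex.continuous_re
  have hA := (aux_laplace_diff z hz).analyticOnNhd hopen
  have hB : AnalyticOnNhd ℂ (fun r : ℂ => Complex.Gamma (z + 1) * r ^ (-(z + 1)))
      {r | 0 < r.re} := by
    apply DifferentiableOn.analyticOnNhd _ hopen
    intro r hr
    have : r ∈ Complex.slitPlane := Or.inl hr
    apply DifferentiableAt.differentiableWithinAt
    exact ((differentiableAt_id).cpow_const this).const_mul _
  have hconv : IsPreconnected {r : ℂ | 0 < r.re} :=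
    (convex_halfSpace_re_gt 0).isPreconnected
  refine hA.eqOn_of_preconnected_of_frequently_eq hB hconv (z₀ := 1) (by simp) ?_ hr
  have ht : Tendsto (fun x : ℝ => (x : ℂ)) (𝓝[≠] 1) (𝓝[≠] 1) := by
    apply tendsto_nhdsWithin_of_tendsto_nhds_of_eventually_within
    · have : Tendsto (fun x : ℝ => (x : ℂ)) (𝓝 1) (𝓝 ((1:ℝ):ℂ)) :=
        Complex.continuous_ofReal.tendsto 1
      rw [Complex.ofReal_one] at this
      exact this.mono_left nhdsWithin_le_nhds
    · filter_upwards [self_mem_nhdsWithin] with x hx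
      intro h
      apply hx
      have h' : (x : ℂ) = 1 := h
      exact_mod_cast h'
  refine ht.frequently (Eventually.frequently ?_)
  have hpos : ∀ᶠ x : ℝ in 𝓝[≠] 1, 0 < x :=
    (lt_mem_nhds one_pos).filter_mono nhdsWithin_le_nhds
  filter_upwards [hpos] with x hx
  have h := Complex.integral_cpow_mul_exp_neg_mul_Ioi (a := z + 1) (r := x) (by simp [hz]) hx
  have hx' : (x : ℂ) ≠ 0 := by exact_mod_cast hx.ne'
  rw [one_div, Complex.inv_cpow _ _ (by rw [Complex.arg_ofReal_of_nonneg hx.le]; exact Real.pi_pos.ne),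
    ← Complex.cpow_neg, mul_comm] at h
  rw [← h]
  refine setIntegral_congr_fun measurableSet_Ioi fun y hy => ?_
  have hy0 : (y : ℂ) ≠ 0 := by exact_mod_cast (ne_of_gt hy : y ≠ 0)
  rw [Complex.cpow_def_of_ne_zero hy0, ← Complex.ofReal_log (le_of_lt hy)]
  congr 2
  ring

lemma aux_slit (p s : ℝ) (hp : 0 < p) : (p : ℂ) - Complex.I * s ∈ Complex.slitPlane := by
  left; simp [hp]

lemma aux_cpow_bound (c : ℂ) (lo hi : ℝ) (hlo : 0 < lo) : ∃ K : ℝ, 0 ≤ K ∧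
    ∀ q ∈ Set.Icc lo hi, ∀ s ∈ Set.Icc (-1:ℝ) 1, ‖((q : ℂ) - Complex.I * s) ^ c‖ ≤ K := by
  have hcomp : IsCompact (Set.Icc lo hi ×ˢ Set.Icc (-1:ℝ) 1) := isCompact_Icc.prod isCompact_Icc
  have hcont : ContinuousOn (fun w : ℝ × ℝ => ((w.1 : ℂ) - Complex.I * w.2) ^ c)
      (Set.Icc lo hi ×ˢ Set.Icc (-1:ℝ) 1) := by
    apply ContinuousOn.cpow_const
    · fun_prop
    · rintro ⟨q, s⟩ ⟨hq, _⟩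
      exact aux_slit q s (lt_of_lt_of_le hlo hq.1)
  obtain ⟨K, hK⟩ := hcomp.exists_bound_of_continuousOn hcont
  exact ⟨max K 0, le_max_right _ _, fun q hq s hs => (hK (q, s) ⟨hq, hs⟩).trans (le_max_left _ _)⟩

/-- The integrand. -/
noncomputable def aaF (z e : ℂ) (p : ℝ) (φ : ℝ) : ℂ :=
  Complex.exp (2 * z * (Real.log (Real.cos φ) : ℂ)) * ((p : ℂ) - Complex.I * Real.sin φ) ^ (-e)

/-- The parametric integral. -/
noncomputable def aaI (z e : ℂ) (p : ℝ) : ℂ :=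
  ∫ φ in (-(Real.pi / 2))..(Real.pi / 2), aaF z e p φ

lemma aaF_meas (z e : ℂ) (p : ℝ) : Measurable (aaF z e p) := by
  unfold aaF; fun_prop

lemma aaF_norm (z e : ℂ) (hz : z.re = 0) (p φ : ℝ) :
    ‖aaF z e p φ‖ = ‖((p : ℂ) - Complex.I * Real.sin φ) ^ (-e)‖ := by
  unfold aaF
  rw [norm_mul, aux_norm_cpowcos z hz, one_mul]

lemma aaF_int (z e : ℂ) (hz : z.re = 0) (p : ℝ) (hp : 0 < p) (a b : ℝ) :
    IntervalIntegrable (aaF z e p) volume a b := by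
  obtain ⟨K, _, hK⟩ := aux_cpow_bound (-e) p p hp
  rw [intervalIntegrable_iff, Set.uIoc]
  refine Integrable.of_bound (C := K) (aaF_meas z e p).aestronglyMeasurable
    (ae_of_all _ fun φ => ?_)
  rw [aaF_norm z e hz]
  exact hK p ⟨le_rfl, le_rfl⟩ _ ⟨Real.neg_one_le_sin φ, Real.sin_le_one φ⟩

lemma aaI_deriv (z e : ℂ) (hz : z.re = 0) (p : ℝ) (hp : 0 < p) :
    HasDerivAt (aaI z e) (-e * aaI z (e + 1) p) p := by
  obtain ⟨K, _, hK⟩ := aux_cpow_bound (-(e + 1)) (p / 2) (2 * p) (by positivity)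
  have h := intervalIntegral.hasDerivAt_integral_of_dominated_loc_of_deriv_le (𝕜 := ℝ)
    (F := aaF z e) (F' := fun q φ => -e * aaF z (e + 1) q φ) (x₀ := p) (μ := volume)
    (a := -(Real.pi / 2)) (b := Real.pi / 2) (s := Set.Icc (p / 2) (2 * p))
    (bound := fun _ => ‖e‖ * K) (Icc_mem_nhds (by linarith) (by linarith))
    (Eventually.of_forall fun q => (aaF_meas z e q).aestronglyMeasurable)
    (aaF_int z e hz p hp _ _)
    ((aaF_meas z (e + 1) p).const_mul (-e)).aestronglyMeasurable
    (ae_of_all _ fun φ _ q hq => ?_)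
    intervalIntegrable_const
    (ae_of_all _ fun φ _ q hq => ?_)
  · have h2 := h.2
    rw [intervalIntegral.integral_const_mul] at h2
    exact h2
  · rw [norm_mul, norm_neg, aaF_norm z _ hz]
    gcongr
    exact hK q hq _ ⟨Real.neg_one_le_sin φ, Real.sin_le_one φ⟩
  · have hq0 : 0 < q := lt_of_lt_of_le (by positivity) hq.1
    have h1 : HasDerivAt (fun q : ℝ => (q : ℂ) - Complex.I * Real.sin φ) 1 q :=
      (Complex.ofRealCLM.hasDerivAt (x := q)).sub_const _
    have h3 : HasDerivAt (fun w : ℂ => w ^ (-e)) (-e * ((q : ℂ) - Complex.I * Real.sin φ) ^ (-e - 1))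
        ((q : ℂ) - Complex.I * Real.sin φ) :=
      (((hasDerivAt_id' _).cpow_const (c := -e) (aux_slit q _ hq0))).congr_deriv (by ring)
    have h4 := (h3.comp_of_eq q h1 rfl).const_mul
      (Complex.exp (2 * z * (Real.log (Real.cos φ) : ℂ)))
    refine h4.congr_deriv ?_
    unfold aaF
    rw [show -(e + 1) = -e - 1 by ring]
    ring

lemma aaI_rel (z : ℂ) (hz : z.re = 0) (p : ℝ) (hp : 0 < p) :
    ((p : ℂ) ^ 2 + 1) * (z + 2) * aaI z (z + 3) p - 3 * p * aaI z (z + 2) p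
      + (1 - z) * aaI z (z + 1) p = 0 := by
  set U : ℝ → ℂ := fun φ => (Real.cos φ : ℂ) * aaF z (z + 2) p φ with hU
  have hpi := Real.pi_pos
  have hlim : ∀ (x : ℝ) (l : Filter ℝ), l ≤ 𝓝 x → Real.cos x = 0 → Tendsto U l (𝓝 0) := by
    intro x l hl hx
    obtain ⟨K, _, hK⟩ := aux_cpow_bound (-(z + 2)) p p hp
    refine squeeze_zero_norm (a := fun φ => |Real.cos φ| * K) (fun φ => ?_) ?_
    · simp only [hU]
      rw [norm_mul, Complex.norm_real, Real.norm_eq_abs, aaF_norm z _ hz]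
      gcongr
      exact hK p ⟨le_rfl, le_rfl⟩ _ ⟨Real.neg_one_le_sin φ, Real.sin_le_one φ⟩
    · have : Tendsto (fun φ => |Real.cos φ| * K) (𝓝 x) (𝓝 (|Real.cos x| * K)) :=
        (by fun_prop : Continuous fun φ => |Real.cos φ| * K).tendsto x
      rw [hx, abs_zero, zero_mul] at this
      exact this.mono_left hl
  have hint : IntervalIntegrable (fun φ => Complex.I * (((p : ℂ) ^ 2 + 1) * (z + 2) * aaF z (z + 3) p φ
      - 3 * p * aaF z (z + 2) p φ + (1 - z) * aaF z (z + 1) p φ)) volume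
      (-(Real.pi / 2)) (Real.pi / 2) :=
    (((aaF_int z _ hz p hp _ _).const_mul _).sub ((aaF_int z _ hz p hp _ _).const_mul _)).add
      ((aaF_int z _ hz p hp _ _).const_mul _) |>.const_mul _
  have hftc := intervalIntegral.integral_eq_sub_of_hasDerivAt_of_tendsto
    (f := U) (a := -(Real.pi / 2)) (b := Real.pi / 2) (fa := 0) (fb := 0)
    (f' := fun φ => Complex.I * (((p : ℂ) ^ 2 + 1) * (z + 2) * aaF z (z + 3) p φ
      - 3 * p * aaF z (z + 2) p φ + (1 - z) * aaF z (z + 1) p φ)) (by linarith) ?_ hint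
    (hlim _ _ nhdsWithin_le_nhds (by simp)) (hlim _ _ nhdsWithin_le_nhds (by simp))
  · rw [intervalIntegral.integral_const_mul, intervalIntegral.integral_add
        (((aaF_int z _ hz p hp _ _).const_mul _).sub ((aaF_int z _ hz p hp _ _).const_mul _))
        ((aaF_int z _ hz p hp _ _).const_mul _),
      intervalIntegral.integral_sub ((aaF_int z _ hz p hp _ _).const_mul _)
        ((aaF_int z _ hz p hp _ _).const_mul _), intervalIntegral.integral_const_mul,
        intervalIntegral.integral_const_mul, intervalIntegral.integral_const_mul, sub_zero] at hftc
    have := (mul_eq_zero.1 hftc).resolve_left Complex.I_ne_zero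
    exact this
  · intro φ hφ
    have hc : 0 < Real.cos φ := Real.cos_pos_of_mem_Ioo hφ
    have hcc : (Real.cos φ : ℂ) ≠ 0 := by exact_mod_cast hc.ne'
    have d1 : HasDerivAt (fun φ : ℝ => (Real.cos φ : ℂ)) ((-Real.sin φ : ℝ) : ℂ) φ :=
      (Real.hasDerivAt_cos φ).ofReal_comp
    have d2 : HasDerivAt (fun φ : ℝ => (Real.log (Real.cos φ) : ℂ))
        ((-Real.sin φ / Real.cos φ : ℝ) : ℂ) φ :=
      ((Real.hasDerivAt_cos φ).log hc.ne').ofReal_comp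
    have d3 := (d2.const_mul (2 * z)).cexp
    have d4 : HasDerivAt (fun φ : ℝ => (p : ℂ) - Complex.I * Real.sin φ)
        (-(Complex.I * (Real.cos φ : ℂ))) φ :=
      (((Real.hasDerivAt_sin φ).ofReal_comp).const_mul Complex.I).const_sub _
    have hq := aux_slit p (Real.sin φ) hp
    have hq0 := Complex.slitPlane_ne_zero hq
    have d5 : HasDerivAt (fun w : ℂ => w ^ (-(z + 2)))
        (-(z + 2) * ((p : ℂ) - Complex.I * Real.sin φ) ^ (-(z + 2) - 1))
        ((p : ℂ) - Complex.I * Real.sin φ) :=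
      (((hasDerivAt_id' _).cpow_const (c := -(z + 2)) hq)).congr_deriv (by ring)
    have d6 := d5.comp_of_eq φ d4 rfl
    have d7 := d1.mul (d3.mul d6)
    refine d7.congr_deriv ?_
    have hs2 : (Real.cos φ : ℂ) ^ 2 = 1 - (Real.sin φ : ℂ) ^ 2 := by
      have := Real.cos_sq' φ
      exact_mod_cast congrArg (fun x : ℝ => (x : ℂ)) this
    unfold aaF
    set q := (p : ℂ) - Complex.I * Real.sin φ with hqd
    have c3 : q ^ (-(z + 2) - 1) = q ^ (-(z + 3)) := by congr 1; ring
    have c2 : q ^ (-(z + 2)) = q ^ (-(z + 3)) * q := by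
      rw [show -(z + 2) = -(z + 3) + 1 by ring, Complex.cpow_add _ _ hq0, Complex.cpow_one]
    have c1 : q ^ (-(z + 1)) = q ^ (-(z + 3)) * q ^ 2 := by
      rw [show -(z + 1) = -(z + 3) + 2 by ring, Complex.cpow_add _ _ hq0]
      norm_cast
    have hpq : (p : ℂ) = q + Complex.I * Real.sin φ := by rw [hqd]; ring
    simp only [Pi.mul_apply, Function.comp_apply]
    rw [← hqd, c3, c2, c1, hpq]
    clear d7 d6 d5 d4 d3 d2 d1
    clear_value q
    generalize q ^ (-(z + 3)) = Q at *
    generalize Complex.exp (2 * z * (Real.log (Real.cos φ) : ℂ)) = Ex at *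
    push_cast at *
    generalize Complex.cos φ = c at *
    generalize Complex.sin φ = s at *
    have hI : Complex.I ^ 2 = -1 := Complex.I_sq
    field_simp
    linear_combination (Complex.I * (2 + z)) * hs2 * Ex * Q -
      Ex * Q * (s * q * (1 + 2 * z) + s ^ 2 * Complex.I * (2 + z)) * hI

lemma aux_sinh_atTop : Tendsto Real.sinh atTop atTop := by
  refine tendsto_atTop_mono' _ ?_ tendsto_id
  filter_upwards [eventually_ge_atTop 0] with w hw
  exact Real.self_le_sinh_iff.2 hw

lemma aaI_lim (z : ℂ) (hz : z.re = 0) :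
    Tendsto (fun w : ℝ => Complex.exp (z * w) * (Real.cosh w * aaI z (z + 1) (Real.sinh w)))
      atTop (𝓝 (Complex.exp (z * (Real.log 2 : ℂ)) *
        ∫ φ in (-(Real.pi / 2))..(Real.pi / 2),
          Complex.exp (2 * z * (Real.log (Real.cos φ) : ℂ)))) := by
  set E : ℝ → ℂ := fun ε => ∫ φ in (-(Real.pi / 2))..(Real.pi / 2),
    Complex.exp (2 * z * (Real.log (Real.cos φ) : ℂ)) *
      (1 - Complex.I * ((Real.sin φ * ε : ℝ) : ℂ)) ^ (-(z + 1)) with hE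
  have hEc : ContinuousAt E 0 := by
    obtain ⟨K, _, hK⟩ := aux_cpow_bound (-(z + 1)) 1 1 one_pos
    refine intervalIntegral.continuousAt_of_dominated_interval (bound := fun _ => K)
      (Eventually.of_forall fun ε => Measurable.aestronglyMeasurable (by fun_prop)) ?_
      intervalIntegrable_const (ae_of_all _ fun φ _ => ?_)
    · filter_upwards [Icc_mem_nhds (show (-1:ℝ) < 0 by norm_num) (show (0:ℝ) < 1 by norm_num)]
        with ε hε
      refine ae_of_all _ fun φ _ => ?_
      rw [norm_mul, aux_norm_cpowcos z hz, one_mul]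
      have := hK 1 ⟨le_rfl, le_rfl⟩ (Real.sin φ * ε) (by
        rw [Set.mem_Icc, ← abs_le] at hε ⊢
        rw [abs_mul]
        exact mul_le_one₀ (Real.abs_sin_le_one φ) (abs_nonneg _) hε)
      simpa using this
    · apply ContinuousAt.mul continuousAt_const
      refine ContinuousAt.cpow ?_ continuousAt_const ?_
      · fun_prop
      · have := aux_slit 1 (Real.sin φ * 0) one_pos
        simpa using this
  have hE0 : E 0 = ∫ φ in (-(Real.pi / 2))..(Real.pi / 2),
          Complex.exp (2 * z * (Real.log (Real.cos φ) : ℂ)) := by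
    simp [hE]
  rw [← hE0]
  have hsinh : Tendsto Real.sinh atTop atTop := aux_sinh_atTop
  have t1 : Tendsto (fun w => E (Real.sinh w)⁻¹) atTop (𝓝 (E 0)) :=
    hEc.tendsto.comp (tendsto_inv_atTop_zero.comp hsinh)
  have e2 : Tendsto (fun w : ℝ => Real.exp (-2 * w)) atTop (𝓝 0) := by
    have : Tendsto (fun w : ℝ => -2 * w) atTop atBot :=
      tendsto_id.const_mul_atTop_of_neg (by norm_num)
    exact Real.tendsto_exp_atBot.comp this
  have hform : ∀ w : ℝ, 0 < w → Real.sinh w = Real.exp w * ((1 - Real.exp (-2 * w)) / 2) ∧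
      Real.cosh w = Real.exp w * ((1 + Real.exp (-2 * w)) / 2) := by
    intro w hw
    have : Real.exp (-w) = Real.exp w * Real.exp (-2 * w) := by
      rw [← Real.exp_add]; congr 1; ring
    rw [Real.sinh_eq, Real.cosh_eq, this]
    constructor <;> ring
  have hfpos : ∀ w : ℝ, 0 < w → 0 < (1 - Real.exp (-2 * w)) / 2 := by
    intro w hw
    have : Real.exp (-2 * w) < 1 := by rw [Real.exp_lt_one_iff]; linarith
    linarith
  have t2 : Tendsto (fun w : ℝ => (((1 + Real.exp (-2 * w)) / (1 - Real.exp (-2 * w)) : ℝ) : ℂ))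
      atTop (𝓝 ((1:ℝ):ℂ)) := by
    apply (Complex.continuous_ofReal.tendsto _).comp
    have := (e2.const_add 1).div (e2.const_sub 1) (by norm_num)
    have h1 : ((1:ℝ) + 0) / (1 - 0) = 1 := by norm_num
    rw [h1] at this
    exact this
  have t3 : Tendsto (fun w : ℝ => Complex.exp (-z * (Real.log ((1 - Real.exp (-2 * w)) / 2) : ℂ)))
      atTop (𝓝 (Complex.exp (-z * (Real.log (1 / 2) : ℂ)))) := by
    apply (Complex.continuous_exp.tendsto _).comp
    apply Tendsto.const_mul
    apply (Complex.continuous_ofReal.tendsto _).comp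
    apply (Real.continuousAt_log (by norm_num)).tendsto.comp
    have := (e2.const_sub 1).div_const 2
    simpa using this
  have t4 := (t3.mul t2).mul t1
  have hl2 : Complex.exp (-z * (Real.log (1 / 2) : ℂ)) * ((1:ℝ):ℂ) * E 0
      = Complex.exp (z * (Real.log 2 : ℂ)) * E 0 := by
    rw [one_div, Real.log_inv]; push_cast; simp
  rw [hl2] at t4
  refine t4.congr' ?_
  filter_upwards [eventually_gt_atTop 0] with w hw
  have hS : 0 < Real.sinh w := Real.sinh_pos_iff.2 hw
  have hS0 : (Real.sinh w : ℂ) ≠ 0 := by exact_mod_cast hS.ne'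
  have hA : aaI z (z + 1) (Real.sinh w) = (Real.sinh w : ℂ) ^ (-(z + 1)) * E (Real.sinh w)⁻¹ := by
    simp only [hE, aaI]
    rw [← intervalIntegral.integral_const_mul]
    refine intervalIntegral.integral_congr fun φ _ => ?_
    simp only [aaF]
    have hne : (1 - Complex.I * ((Real.sin φ * (Real.sinh w)⁻¹ : ℝ) : ℂ)) ≠ 0 := by
      have := Complex.slitPlane_ne_zero (aux_slit 1 (Real.sin φ * (Real.sinh w)⁻¹) one_pos)
      simpa using this
    have hsplit : (Real.sinh w : ℂ) - Complex.I * Real.sin φ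
        = (Real.sinh w : ℂ) * (1 - Complex.I * ((Real.sin φ * (Real.sinh w)⁻¹ : ℝ) : ℂ)) := by
      rw [Complex.ofReal_mul, Complex.ofReal_inv]
      generalize (Real.sinh w : ℂ) = S at *
      field_simp
    rw [hsplit, Complex.cpow_def_of_ne_zero (mul_ne_zero hS0 hne),
      Complex.log_ofReal_mul hS hne, add_mul, Complex.exp_add,
      Complex.cpow_def_of_ne_zero hS0, Complex.cpow_def_of_ne_zero hne, Complex.ofReal_log hS.le]
    ring
  rw [hA]
  obtain ⟨hs, hc⟩ := hform w hw
  have hf := hfpos w hw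
  have hp1 : (Real.sinh w : ℂ) ^ (-(z + 1)) = Complex.exp (-z * w) *
      Complex.exp (-z * (Real.log ((1 - Real.exp (-2 * w)) / 2) : ℂ)) * (Real.sinh w : ℂ)⁻¹ := by
    rw [show -(z + 1) = -z + -1 by ring, Complex.cpow_add _ _ hS0, Complex.cpow_neg_one,
      Complex.cpow_def_of_ne_zero hS0, ← Complex.ofReal_log hS.le, ← Complex.exp_add]
    congr 2
    nth_rewrite 1 [hs]
    rw [Real.log_mul (Real.exp_pos w).ne' hf.ne', Real.log_exp]
    push_cast; ring
  have hq : ((1 + Real.exp (-2 * w)) / (1 - Real.exp (-2 * w)) : ℝ) = Real.cosh w * (Real.sinh w)⁻¹ := by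
    rw [hs, hc]
    have : 1 - Real.exp (-2 * w) ≠ 0 := by linarith
    have := (Real.exp_pos w).ne'
    field_simp
  rw [hp1, hq]
  have hee : Complex.exp (z * w) * Complex.exp (-z * w) = 1 := by
    rw [← Complex.exp_add]; simp
  push_cast
  linear_combination (-Complex.exp (-z * (Real.log ((1 - Real.exp (-2 * w)) / 2) : ℂ)) *
    Complex.cosh w * (Complex.sinh w)⁻¹ * E (Real.sinh w)⁻¹) * hee

lemma aaI_closed (τ : ℝ) (hτ : τ ≠ 0) (z : ℂ) (hzτ : z = Complex.I * τ) (w : ℝ) (hw : 0 < w) :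
    Complex.exp (z * w) * (Real.cosh w * aaI z (z + 1) (Real.sinh w))
      = Complex.exp (z * (Real.log 2 : ℂ)) *
        ∫ φ in (-(Real.pi / 2))..(Real.pi / 2),
          Complex.exp (2 * z * (Real.log (Real.cos φ) : ℂ)) := by
  have hz : z.re = 0 := by simp [hzτ]
  have hz0 : z ≠ 0 := by
    rw [hzτ]; simp [hτ]
  set M : ℝ → ℂ := fun w => Real.cosh w * aaI z (z + 1) (Real.sinh w) with hM
  set N : ℝ → ℂ := fun w => Real.sinh w * aaI z (z + 1) (Real.sinh w)
    - (z + 1) * (Real.cosh w : ℂ) ^ 2 * aaI z (z + 2) (Real.sinh w) with hN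
  have dA : ∀ (e : ℂ) (w : ℝ), 0 < w → HasDerivAt (fun w => aaI z e (Real.sinh w))
      (Real.cosh w * (-e * aaI z (e + 1) (Real.sinh w))) w := by
    intro e w hw
    have := (aaI_deriv z e hz _ (Real.sinh_pos_iff.2 hw)).scomp w (Real.hasDerivAt_sinh w)
    refine this.congr_deriv ?_
    rw [Complex.real_smul]
  have dc : ∀ w : ℝ, HasDerivAt (fun w : ℝ => (Real.cosh w : ℂ)) (Real.sinh w : ℂ) w :=
    fun w => (Real.hasDerivAt_cosh w).ofReal_comp
  have ds : ∀ w : ℝ, HasDerivAt (fun w : ℝ => (Real.sinh w : ℂ)) (Real.cosh w : ℂ) w :=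
    fun w => (Real.hasDerivAt_sinh w).ofReal_comp
  have e12 : z + 1 + 1 = z + 2 := by ring
  have e23 : z + 2 + 1 = z + 3 := by ring
  have dM : ∀ w : ℝ, 0 < w → HasDerivAt M (N w) w := by
    intro w hw
    refine ((dc w).mul (dA (z + 1) w hw)).congr_deriv ?_
    simp only [hN]
    rw [e12]; ring
  have dN : ∀ w : ℝ, 0 < w → HasDerivAt N (z ^ 2 * M w) w := by
    intro w hw
    have h1 := (ds w).mul (dA (z + 1) w hw)
    have h2 := ((((dc w).fun_pow 2).const_mul (z + 1)).mul (dA (z + 2) w hw))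
    refine (h1.sub h2).congr_deriv ?_
    have hrel := aaI_rel z hz _ (Real.sinh_pos_iff.2 hw)
    have hcs : (Real.cosh w : ℂ) ^ 2 = (Real.sinh w : ℂ) ^ 2 + 1 := by
      have := Real.cosh_sq w
      exact_mod_cast congrArg (fun x : ℝ => (x : ℂ)) this
    simp only [hM]
    rw [e12, e23]
    rw [← hcs] at hrel
    simp only [Nat.cast_ofNat, show 2 - 1 = 1 from rfl, pow_one]
    linear_combination (Real.cosh w : ℂ) * (z + 1) * hrel
  have dE : ∀ (c : ℂ) (w : ℝ), HasDerivAt (fun w : ℝ => Complex.exp (c * w))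
      (Complex.exp (c * w) * c) w := by
    intro c w
    have h1 : HasDerivAt (fun w : ℝ => c * (w : ℂ)) c w :=
      ((Complex.ofRealCLM.hasDerivAt (x := w)).const_mul c).congr_deriv (by simp)
    exact h1.cexp
  have key : ∀ (σ : ℂ), σ ^ 2 = z ^ 2 → ∀ w₁ w₂ : ℝ, 0 < w₁ → 0 < w₂ →
      Complex.exp (σ * w₁) * (N w₁ - σ * M w₁) = Complex.exp (σ * w₂) * (N w₂ - σ * M w₂) := by
    intro σ hσ w₁ w₂ h1 h2
    have hd : ∀ w : ℝ, 0 < w → HasDerivAt (fun w : ℝ => Complex.exp (σ * w) * (N w - σ * M w)) 0 w := by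
      intro w hw
      refine ((dE σ w).mul ((dN w hw).sub ((dM w hw).const_mul σ))).congr_deriv ?_
      simp only [Pi.sub_apply]
      linear_combination (-Complex.exp (σ * w) * M w) * hσ
    exact IsOpen.is_const_of_deriv_eq_zero (𝕜 := ℝ) isOpen_Ioi (isPreconnected_Ioi (a := (0:ℝ)))
      (fun w hw => (hd w hw).differentiableAt.differentiableWithinAt)
      (fun w hw => (hd w hw).deriv) h1 h2
  set C2 := Complex.exp (z * w) * (N w - z * M w) with hC2
  set C1 := Complex.exp (-z * w) * (N w - (-z) * M w) with hC1
  have hrep : ∀ v : ℝ, 0 < v → 2 * z * (Complex.exp (z * v) * M v)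
      = C1 * Complex.exp (2 * z * v) - C2 := by
    intro v hv
    have k1 : C1 = _ := key (-z) (by ring) w v hw hv
    have k2 : C2 = _ := key z rfl w v hw hv
    rw [k1, k2]
    have : Complex.exp (2 * z * v) = Complex.exp (z * v) * Complex.exp (z * v) := by
      rw [← Complex.exp_add]; congr 1; ring
    have h1 : Complex.exp (-z * v) * Complex.exp (z * v) = 1 := by
      rw [← Complex.exp_add]; simp
    rw [this]
    linear_combination (-(Complex.exp (z * v) * (N v + z * M v))) * h1
  set ℓ := Complex.exp (z * (Real.log 2 : ℂ)) *
        ∫ φ in (-(Real.pi / 2))..(Real.pi / 2),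
          Complex.exp (2 * z * (Real.log (Real.cos φ) : ℂ)) with hℓ
  have hlim : Tendsto (fun v : ℝ => C1 * Complex.exp (2 * z * v) - C2) atTop (𝓝 (2 * z * ℓ)) := by
    refine ((aaI_lim z hz).const_mul (2 * z)).congr' ?_
    filter_upwards [eventually_gt_atTop 0] with v hv
    exact hrep v hv
  have hseq : ∀ β : ℝ, Tendsto (fun k : ℕ => β + k * (Real.pi / |τ|)) atTop atTop := by
    intro β
    have : 0 < Real.pi / |τ| := div_pos Real.pi_pos (abs_pos.2 hτ)
    exact tendsto_atTop_add_const_left _ _ (tendsto_natCast_atTop_atTop.atTop_mul_const this)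
  have hper : ∀ (β : ℝ) (k : ℕ), Complex.exp (2 * z * ((β + k * (Real.pi / |τ|) : ℝ) : ℂ))
      = Complex.exp (2 * z * β) := by
    intro β k
    rcases abs_choice τ with h | h
    · rw [Complex.exp_eq_exp_iff_exists_int]
      refine ⟨k, ?_⟩
      rw [h, hzτ]; push_cast
      have : (τ : ℂ) ≠ 0 := by exact_mod_cast hτ
      field_simp
    · rw [Complex.exp_eq_exp_iff_exists_int]
      refine ⟨-k, ?_⟩
      rw [h, hzτ]; push_cast
      have : (τ : ℂ) ≠ 0 := by exact_mod_cast hτ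
      field_simp
  have hval : ∀ β : ℝ, C1 * Complex.exp (2 * z * β) - C2 = 2 * z * ℓ := by
    intro β
    have h1 := hlim.comp (hseq β)
    have h2 : ((fun v : ℝ => C1 * Complex.exp (2 * z * v) - C2) ∘
        fun k : ℕ => β + k * (Real.pi / |τ|)) = fun _ => C1 * Complex.exp (2 * z * β) - C2 := by
      funext k
      simp only [Function.comp_apply]
      rw [hper]
    rw [h2] at h1
    exact tendsto_nhds_unique tendsto_const_nhds h1
  have := hrep w hw
  rw [hval w] at this
  exact mul_left_cancel₀ (mul_ne_zero two_ne_zero hz0) this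

lemma coscpow_int (z : ℂ) (hz : z.re = 0) :
    Complex.Gamma (z + 1) * ∫ φ in (-(Real.pi / 2))..(Real.pi / 2),
      Complex.exp (2 * z * (Real.log (Real.cos φ) : ℂ))
      = (Real.sqrt Real.pi : ℂ) * Complex.Gamma (z + 1 / 2) := by
  set g : ℝ → ℂ := fun φ => Complex.exp (2 * z * (Real.log (Real.cos φ) : ℂ)) with hg
  have hpi := Real.pi_pos
  have hgi : ∀ a b : ℝ, IntervalIntegrable g volume a b := by
    intro a b
    rw [intervalIntegrable_iff, Set.uIoc]
    exact Integrable.of_bound (C := 1) (Measurable.aestronglyMeasurable (by fun_prop))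
      (ae_of_all _ fun φ => (aux_norm_cpowcos z hz φ).le)
  have hneg : ∫ φ in (-(Real.pi / 2))..0, g φ = ∫ φ in (0:ℝ)..(Real.pi / 2), g φ := by
    have := intervalIntegral.integral_comp_neg (a := 0) (b := Real.pi / 2) g
    rw [neg_zero] at this
    rw [← this]
    refine intervalIntegral.integral_congr fun φ _ => ?_
    simp [hg]
  have hb := betaTrig (1 / 2) (z + 1 / 2)
  have hB : Complex.betaIntegral (1 / 2) (z + 1 / 2) =
      ∫ φ in (-(Real.pi / 2))..(Real.pi / 2), g φ := by
    rw [hb, ← intervalIntegral.integral_add_adjacent_intervals (hgi (-(Real.pi / 2)) 0) (hgi 0 _),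
      hneg, ← two_mul, intervalIntegral.integral_of_le (by positivity : (0:ℝ) ≤ Real.pi / 2),
      integral_Ioc_eq_integral_Ioo]
    congr 1
    refine setIntegral_congr_fun measurableSet_Ioo fun φ _ => ?_
    simp only [hg]
    rw [show (2 * (1 / 2) - 1 : ℂ) = 0 by ring, zero_mul, Complex.exp_zero, one_mul]
    congr 2; ring
  have := Complex.Gamma_mul_Gamma_eq_betaIntegral (s := 1 / 2) (t := z + 1 / 2)
    (by norm_num) (by simp [hz])
  rw [← hB, ← aux_gamma_half, this]
  congr 2; ring

lemma laplace_besselJ (τ : ℝ) (hτ : τ ≠ 0) (z : ℂ) (hzτ : z = Complex.I * τ) (w : ℝ) (hw : 0 < w) :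
    ∫ y in Set.Ioi (0:ℝ), ((Real.exp (-(Real.sinh w * y)) : ℝ) : ℂ) * besselJ z y
      = Complex.exp (-z * w) / Real.cosh w := by
  have hz : z.re = 0 := by simp [hzτ]
  have hpi := Real.pi_pos
  set p := Real.sinh w with hp
  have hp0 : 0 < p := Real.sinh_pos_iff.2 hw
  have hG2 : Complex.Gamma (z + 1 / 2) ≠ 0 :=
    Complex.Gamma_ne_zero_of_re_pos (by simp [hz])
  have hG1 : Complex.Gamma (z + 1) ≠ 0 :=
    Complex.Gamma_ne_zero_of_re_pos (by simp [hz])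
  have hsp : (Real.sqrt Real.pi : ℂ) ≠ 0 := by
    exact_mod_cast (Real.sqrt_pos.2 hpi).ne'
  set K : ℂ := Complex.exp (-z * (Real.log 2 : ℂ)) /
      (Complex.Gamma (z + 1 / 2) * (Real.sqrt Real.pi : ℂ)) with hK
  set f : ℝ → ℝ → ℂ := fun y φ => (Complex.exp (z * (Real.log y : ℂ)) *
    ((Real.exp (-(p * y)) : ℝ) : ℂ)) *
    (Complex.exp (2 * z * (Real.log (Real.cos φ) : ℂ)) * (Real.cos (y * Real.sin φ) : ℂ)) with hf
  have h1 : ∫ y in Set.Ioi (0:ℝ), ((Real.exp (-(p * y)) : ℝ) : ℂ) * besselJ z y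
      = K * ∫ y in Set.Ioi (0:ℝ), ∫ φ in Set.Ioc (-(Real.pi / 2)) (Real.pi / 2), f y φ := by
    rw [← integral_const_mul]
    refine setIntegral_congr_fun measurableSet_Ioi fun y hy => ?_
    simp only [hf]
    rw [integral_const_mul, besselJ_poisson z hz y hy,
      intervalIntegral.integral_of_le (by linarith), Real.log_div (ne_of_gt hy) (by norm_num), hK]
    rw [show z * ((Real.log y - Real.log 2 : ℝ) : ℂ) = -z * (Real.log 2 : ℂ) + z * (Real.log y : ℂ) by
      push_cast; ring, Complex.exp_add]
    ring
  have hexp : IntegrableOn (fun y : ℝ => Real.exp (-(p * y))) (Set.Ioi 0) := by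
    simpa using exp_neg_integrableOn_Ioi 0 hp0
  have hint : Integrable (Function.uncurry f) ((volume.restrict (Set.Ioi (0:ℝ))).prod
      (volume.restrict (Set.Ioc (-(Real.pi / 2)) (Real.pi / 2)))) := by
    have hone : Integrable (fun _ : ℝ => (1:ℝ))
      (volume.restrict (Set.Ioc (-(Real.pi / 2)) (Real.pi / 2))) := integrable_const 1
    refine Integrable.mono' (hexp.mul_prod hone)
      (Measurable.aestronglyMeasurable (by simp only [hf, Function.uncurry_def]; fun_prop)) (ae_of_all _ ?_)
    rintro ⟨y, φ⟩
    simp only [Function.uncurry_apply_pair, hf]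
    rw [norm_mul, norm_mul, norm_mul, aux_norm_cpowcos z hz, Complex.norm_exp, Complex.norm_real,
      Complex.norm_real]
    have : (z * (Real.log y : ℂ)).re = 0 := by simp [hz]
    rw [this, Real.exp_zero, one_mul, one_mul, Real.norm_eq_abs, Real.norm_eq_abs,
      abs_of_pos (Real.exp_pos _)]
    gcongr
    exact Real.abs_cos_le_one _
  have hinner : ∀ φ : ℝ, ∫ y in Set.Ioi (0:ℝ), f y φ
      = Complex.Gamma (z + 1) / 2 * (aaF z (z + 1) p φ + aaF z (z + 1) p (-φ)) := by
    intro φ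
    have r1 : 0 < ((p : ℂ) - Complex.I * Real.sin φ).re := by
      simp [hp0, -Complex.ofReal_sin]
    have r2 : 0 < ((p : ℂ) - Complex.I * Real.sin (-φ)).re := by
      simp [hp0, -Complex.ofReal_sin]
    have : ∀ y : ℝ, f y φ = Complex.exp (2 * z * (Real.log (Real.cos φ) : ℂ)) / 2 *
        (Complex.exp (z * (Real.log y : ℂ)) * Complex.exp (-(((p : ℂ) - Complex.I * Real.sin φ) * y))
        + Complex.exp (z * (Real.log y : ℂ)) *
          Complex.exp (-(((p : ℂ) - Complex.I * Real.sin (-φ)) * y))) := by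
      intro y
      simp only [hf]
      rw [Real.sin_neg, Complex.ofReal_cos, Complex.cos, Complex.ofReal_exp,
        show -(((p : ℂ) - Complex.I * Real.sin φ) * y) =
          ((-(p * y) : ℝ) : ℂ) + ((y * Real.sin φ : ℝ) : ℂ) * Complex.I by push_cast; ring,
        show -(((p : ℂ) - Complex.I * ((-Real.sin φ : ℝ) : ℂ)) * y) =
          ((-(p * y) : ℝ) : ℂ) + -((y * Real.sin φ : ℝ) : ℂ) * Complex.I by push_cast; ring,
        Complex.exp_add, Complex.exp_add]
      ring
    simp_rw [this]
    rw [integral_const_mul, integral_add (aux_laplace_int z hz _ r1) (aux_laplace_int z hz _ r2),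
      gamma_laplace z hz _ r1, gamma_laplace z hz _ r2]
    simp only [aaF, Real.cos_neg]
    ring
  have hi1 := aaF_int z (z + 1) hz p hp0 (-(Real.pi / 2)) (Real.pi / 2)
  have hi2 : IntervalIntegrable (fun φ => aaF z (z + 1) p (-φ)) volume (-(Real.pi / 2)) (Real.pi / 2) := by
    have := aaF_int z (z + 1) hz p hp0 (Real.pi / 2) (-(Real.pi / 2))
    have := (IntervalIntegrable.iff_comp_neg (f := aaF z (z + 1) p)).1 this
    simpa using this
  rw [h1, integral_integral_swap hint]
  simp_rw [hinner]
  rw [integral_const_mul, ← intervalIntegral.integral_of_le (by linarith),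
    intervalIntegral.integral_add hi1 hi2, intervalIntegral.integral_comp_neg, neg_neg]
  have hcl := aaI_closed τ hτ z hzτ w hw
  have hco := coscpow_int z hz
  set Q := ∫ φ in (-(Real.pi / 2))..(Real.pi / 2),
      Complex.exp (2 * z * (Real.log (Real.cos φ) : ℂ)) with hQ
  have hch : (Real.cosh w : ℂ) ≠ 0 := by exact_mod_cast (Real.cosh_pos w).ne'
  change K * (Complex.Gamma (z + 1) / 2 * (aaI z (z + 1) p + aaI z (z + 1) p)) = _
  rw [← hp] at hcl
  have e1 : Complex.exp (-z * w) * Complex.exp (z * w) = 1 := by rw [← Complex.exp_add]; simp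
  have e2 : Complex.exp (-z * (Real.log 2 : ℂ)) * Complex.exp (z * (Real.log 2 : ℂ)) = 1 := by
    rw [← Complex.exp_add]; simp
  rw [eq_div_iff hch, hK]
  generalize Complex.exp (-z * w) = A at *
  generalize Complex.exp (z * w) = A' at *
  generalize Complex.exp (-z * (Real.log 2 : ℂ)) = B at *
  generalize Complex.exp (z * (Real.log 2 : ℂ)) = B' at *
  generalize Complex.Gamma (z + 1) = g1 at *
  generalize Complex.Gamma (z + 1 / 2) = g2 at *
  generalize (Real.sqrt Real.pi : ℂ) = sp at *
  generalize aaI z (z + 1) p = a at *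
  generalize (Real.cosh w : ℂ) = c at *
  field_simp
  have : c * a = A * (B' * Q) := by
    linear_combination A * hcl - (c * a) * e1
  linear_combination 2 * (B * g1 * this + A * g1 * Q * e2 + A * hco)

lemma laplace_im (τ : ℝ) (hτ : τ ≠ 0) (w : ℝ) (hw : 0 < w) :
    ∫ y in Set.Ioi (0:ℝ), Real.exp (-(Real.sinh w * y)) * (besselJ (Complex.I * τ) y).im
      = -Real.sin (τ * w) / Real.cosh w := by
  have hz : (Complex.I * τ : ℂ).re = 0 := by simp
  have h := laplace_besselJ τ hτ _ rfl w hw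
  obtain ⟨C, hC, hb⟩ := besselJ_bound _ hz
  have hexp : IntegrableOn (fun y : ℝ => Real.exp (-(Real.sinh w * y))) (Set.Ioi 0) := by
    simpa using exp_neg_integrableOn_Ioi 0 (Real.sinh_pos_iff.2 hw)
  have hm := measurable_besselJ _ hz
  have hint : IntegrableOn (fun y : ℝ => ((Real.exp (-(Real.sinh w * y)) : ℝ) : ℂ) *
      besselJ (Complex.I * τ) y) (Set.Ioi 0) := by
    refine Integrable.mono' (hexp.mul_const C)
      (Measurable.aestronglyMeasurable (by fun_prop)) ?_
    filter_upwards [self_mem_ae_restrict measurableSet_Ioi] with y hy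
    rw [norm_mul, Complex.norm_real, Real.norm_eq_abs, abs_of_pos (Real.exp_pos _)]
    gcongr
    exact hb y hy
  have h2 := congrArg Complex.im h
  have h3 := integral_im hint
  simp only [RCLike.im_to_complex] at h3
  rw [← h3] at h2
  simp_rw [Complex.im_ofReal_mul] at h2
  rw [h2, Complex.div_ofReal_im, Complex.exp_im]
  simp

/-- Auxiliary square root. -/
noncomputable def rr (a c w : ℝ) : ℝ := Real.sqrt (a ^ 2 + c ^ 2 * Real.sinh w ^ 2)

lemma rr_pos (a c w : ℝ) (ha : 0 < a) : 0 < rr a c w := Real.sqrt_pos.2 (by positivity)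
lemma rr_sq (a c w : ℝ) : rr a c w ^ 2 = a ^ 2 + c ^ 2 * Real.sinh w ^ 2 :=
  Real.sq_sqrt (by positivity)
lemma rr_zero (a c : ℝ) (ha : 0 < a) : rr a c 0 = a := by simp [rr, ha.le]
lemma rr_ge (a c w : ℝ) : a ≤ rr a c w :=
  Real.le_sqrt_of_sq_le (by nlinarith [sq_nonneg (c * Real.sinh w)])
lemma rr_meas (a : ℝ) : Measurable (fun p : ℝ × ℝ => rr a p.1 p.2) := by
  unfold rr
  fun_prop

lemma rr_deriv (a c w : ℝ) (ha : 0 < a) : HasDerivAt (rr a c)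
    (c ^ 2 * Real.sinh w * Real.cosh w / rr a c w) w := by
  have h1 : HasDerivAt (fun w => a ^ 2 + c ^ 2 * Real.sinh w ^ 2)
      (c ^ 2 * (2 * Real.sinh w * Real.cosh w)) w :=
    ((((Real.hasDerivAt_sinh w).fun_pow 2).const_mul (c ^ 2)).const_add (a ^ 2)).congr_deriv
      (by simp)
  refine (h1.sqrt (by positivity)).congr_deriv ?_
  have := rr_pos a c w ha
  change _ / (2 * rr a c w) = _
  field_simp

lemma rr_deriv_inv (a c w : ℝ) (ha : 0 < a) : HasDerivAt (fun w => (rr a c w)⁻¹)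
    (-(c ^ 2 * Real.sinh w * Real.cosh w * (rr a c w)⁻¹ ^ 3)) w := by
  have := rr_pos a c w ha
  refine ((rr_deriv a c w ha).fun_inv this.ne').congr_deriv ?_
  field_simp

lemma rr_cont (a c : ℝ) : Continuous (rr a c) := by
  unfold rr
  have := Real.continuous_sinh
  fun_prop

lemma wint (a c : ℝ) (ha : 0 < a) (hc : 0 < c) :
    IntegrableOn (fun w => c * Real.cosh w * (rr a c w)⁻¹ ^ 3) (Set.Ioi 0) ∧
    ∫ w in Set.Ioi (0:ℝ), c * Real.cosh w * (rr a c w)⁻¹ ^ 3 = 1 / a ^ 2 := by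
  have hd : ∀ w ∈ Set.Ici (0:ℝ), HasDerivAt (fun w => 1 / a ^ 2 * (c * Real.sinh w * (rr a c w)⁻¹))
      (c * Real.cosh w * (rr a c w)⁻¹ ^ 3) w := by
    intro w _
    have hR := rr_pos a c w ha
    refine ((((Real.hasDerivAt_sinh w).const_mul c).mul (rr_deriv_inv a c w ha)).const_mul
      (1 / a ^ 2)).congr_deriv ?_
    have h2 := rr_sq a c w
    field_simp
    rw [h2]; ring
  have hpos : ∀ w ∈ Set.Ioi (0:ℝ), 0 ≤ c * Real.cosh w * (rr a c w)⁻¹ ^ 3 := by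
    intro w _
    have := rr_pos a c w ha
    have := Real.cosh_pos w
    positivity
  have hlim : Tendsto (fun w => 1 / a ^ 2 * (c * Real.sinh w * (rr a c w)⁻¹)) atTop
      (𝓝 (1 / a ^ 2)) := by
    have hq : Tendsto (fun w => c * Real.sinh w) atTop atTop :=
      aux_sinh_atTop.const_mul_atTop hc
    have t1 : Tendsto (fun w => (Real.sqrt (a ^ 2 * ((c * Real.sinh w)⁻¹) ^ 2 + 1))⁻¹) atTop (𝓝 1) := by
      have h0 := tendsto_inv_atTop_zero.comp hq
      have hcts : Continuous (fun s : ℝ => Real.sqrt (a ^ 2 * s ^ 2 + 1)) := by fun_prop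
      have h1 := (hcts.tendsto 0).comp h0
      have h2 := h1.inv₀ (by simp)
      simpa [Function.comp_def] using h2
    have t2 := t1.const_mul (1 / a ^ 2)
    rw [mul_one] at t2
    refine t2.congr' ?_
    filter_upwards [eventually_gt_atTop 0] with w hw
    have hS : 0 < Real.sinh w := Real.sinh_pos_iff.2 hw
    have hR := rr_pos a c w ha
    congr 1
    have : Real.sqrt (a ^ 2 * ((c * Real.sinh w)⁻¹) ^ 2 + 1) = rr a c w / (c * Real.sinh w) := by
      rw [Real.sqrt_eq_iff_mul_self_eq (by positivity) (by positivity), div_mul_div_comm,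
        ← sq, rr_sq]
      field_simp
    rw [this]
    field_simp
  refine ⟨integrableOn_Ioi_deriv_of_nonneg' hd hpos hlim, ?_⟩
  rw [integral_Ioi_of_hasDerivAt_of_nonneg' hd hpos hlim]
  simp

lemma thetaint (a w : ℝ) (ha : 0 < a) :
    ∫ θ in Set.Ioo (0:ℝ) (Real.pi / 2), Real.cos θ * Real.sinh w * (rr a (Real.cos θ) w)⁻¹ ^ 3
      = Real.sinh w / (a * (a ^ 2 + Real.sinh w ^ 2)) := by
  have hpi := Real.pi_pos
  rw [← integral_Ioc_eq_integral_Ioo, ← intervalIntegral.integral_of_le (by positivity)]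
  set S := Real.sinh w with hS
  have hA : 0 < a ^ 2 + S ^ 2 := by positivity
  have hR : ∀ θ, 0 < rr a (Real.cos θ) w := fun θ => rr_pos _ _ _ ha
  have hcont : Continuous (fun θ => rr a (Real.cos θ) w) := by unfold rr; fun_prop
  have hd : ∀ θ : ℝ, HasDerivAt (fun θ => S / (a ^ 2 + S ^ 2) *
      (Real.sin θ * (rr a (Real.cos θ) w)⁻¹))
      (Real.cos θ * S * (rr a (Real.cos θ) w)⁻¹ ^ 3) θ := by
    intro θ
    have hR0 := hR θ
    have h1 : HasDerivAt (fun θ => a ^ 2 + Real.cos θ ^ 2 * S ^ 2)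
        (2 * Real.cos θ * (-Real.sin θ) * S ^ 2) θ :=
      ((((Real.hasDerivAt_cos θ).fun_pow 2).mul_const (S ^ 2)).const_add (a ^ 2)).congr_deriv
        (by simp)
    have h2 : HasDerivAt (fun θ => rr a (Real.cos θ) w)
        (-(Real.cos θ * Real.sin θ * S ^ 2) / rr a (Real.cos θ) w) θ := by
      refine (h1.sqrt (by positivity)).congr_deriv ?_
      change _ / (2 * rr a (Real.cos θ) w) = _
      field_simp
    refine (((Real.hasDerivAt_sin θ).mul (h2.fun_inv hR0.ne')).const_mul _).congr_deriv ?_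
    have h3 := rr_sq a (Real.cos θ) w
    rw [← hS] at h3
    have h4 := Real.sin_sq_add_cos_sq θ
    field_simp
    rw [h3]
    linear_combination S ^ 3 * Real.cos θ * h4
  rw [intervalIntegral.integral_eq_sub_of_hasDerivAt (fun θ _ => hd θ)]
  · simp [rr, ha.le]
    field_simp
  · apply Continuous.intervalIntegrable
    have : Continuous (fun θ => (rr a (Real.cos θ) w)⁻¹) := hcont.inv₀ (fun θ => (hR θ).ne')
    fun_prop

lemma kernel (x a c : ℝ) (hx : 0 < x) (ha : 0 < a) (hc : 0 < c) :
    x * struveK0 (2 * x * a) - 1 / (Real.pi * a) = -(c ^ 2 / Real.pi) *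
      ∫ w in Set.Ioi (0:ℝ), Real.exp (-(2 * x * c * Real.sinh w)) *
        (Real.sinh w * Real.cosh w * (rr a c w)⁻¹ ^ 3) := by
  have hpi := Real.pi_pos
  set f : ℝ → ℝ := fun w => Real.arsinh (c * Real.sinh w / a) with hf
  have himg : f '' Set.Ioi 0 = Set.Ioi 0 := by
    ext t
    constructor
    · rintro ⟨w, hw, rfl⟩
      have : 0 < Real.sinh w := Real.sinh_pos_iff.2 hw
      exact Real.arsinh_pos_iff.2 (by positivity)
    · intro ht
      have : 0 < Real.sinh t := Real.sinh_pos_iff.2 ht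
      refine ⟨Real.arsinh (a * Real.sinh t / c), Real.arsinh_pos_iff.2 (by positivity), ?_⟩
      simp only [hf, Real.sinh_arsinh]
      rw [show c * (a * Real.sinh t / c) / a = Real.sinh t by field_simp, Real.arsinh_sinh]
  have hinj : Set.InjOn f (Set.Ioi 0) := by
    intro w₁ _ w₂ _ h
    have := Real.arsinh_injective h
    have h2 : Real.sinh w₁ = Real.sinh w₂ := by
      field_simp at this
      exact this
    exact Real.sinh_injective h2
  have hfd : ∀ w ∈ Set.Ioi (0:ℝ), HasDerivWithinAt f (c * Real.cosh w * (rr a c w)⁻¹) (Set.Ioi 0) w := by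
    intro w _
    have h1 := (((Real.hasDerivAt_sinh w).const_mul c).div_const a).arsinh
    refine (h1.congr_deriv ?_).hasDerivWithinAt
    have h2 : Real.sqrt (1 + (c * Real.sinh w / a) ^ 2) = rr a c w / a := by
      have hR := rr_pos a c w ha
      rw [Real.sqrt_eq_iff_mul_self_eq (by positivity) (by positivity), ← sq, div_pow, div_pow, rr_sq]
      field_simp
    have hR := rr_pos a c w ha
    rw [h2, smul_eq_mul]
    field_simp
  have hsub := integral_image_eq_integral_abs_deriv_smul measurableSet_Ioi hfd hinj
    (fun t => Real.exp (-(2 * x * a) * Real.sinh t))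
  rw [himg] at hsub
  have hsub2 : ∫ t in Set.Ioi (0:ℝ), Real.exp (-(2 * x * a) * Real.sinh t)
      = ∫ w in Set.Ioi (0:ℝ), Real.exp (-(2 * x * c * Real.sinh w)) *
        (c * Real.cosh w * (rr a c w)⁻¹) := by
    rw [hsub]
    refine setIntegral_congr_fun measurableSet_Ioi fun w _ => ?_
    have hR := rr_pos a c w ha
    have hC := Real.cosh_pos w
    simp only [hf, Real.sinh_arsinh, smul_eq_mul]
    rw [abs_of_pos (by positivity), show -(2 * x * a) * (c * Real.sinh w / a) =
      -(2 * x * c * Real.sinh w) by field_simp]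
    ring
  set P : ℝ → ℝ := fun w => Real.exp (-(2 * x * c * Real.sinh w)) *
        (c * Real.cosh w * (rr a c w)⁻¹) with hP
  set Q : ℝ → ℝ := fun w => Real.exp (-(2 * x * c * Real.sinh w)) *
        (Real.sinh w * Real.cosh w * (rr a c w)⁻¹ ^ 3) with hQ
  have hd : ∀ w ∈ Set.Ici (0:ℝ), HasDerivAt (fun w => Real.exp (-(2 * x * c * Real.sinh w)) *
      (rr a c w)⁻¹) (-(2 * x * P w + c ^ 2 * Q w)) w := by
    intro w _
    refine (((((Real.hasDerivAt_sinh w).const_mul (2 * x * c)).fun_neg).exp).mul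
      (rr_deriv_inv a c w ha)).congr_deriv ?_
    simp only [hP, hQ]
    ring
  have hPQ : ∀ w ∈ Set.Ioi (0:ℝ), 0 ≤ P w ∧ 0 ≤ Q w := by
    intro w hw
    have hR := rr_pos a c w ha
    have hC := Real.cosh_pos w
    have : 0 < Real.sinh w := Real.sinh_pos_iff.2 hw
    constructor <;> simp only [hP, hQ] <;> positivity
  have hneg : ∀ w ∈ Set.Ioi (0:ℝ), -(2 * x * P w + c ^ 2 * Q w) ≤ 0 := by
    intro w hw
    obtain ⟨h1, h2⟩ := hPQ w hw
    have : 0 ≤ 2 * x * P w + c ^ 2 * Q w := by positivity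
    linarith
  have hlim : Tendsto (fun w => Real.exp (-(2 * x * c * Real.sinh w)) * (rr a c w)⁻¹) atTop (𝓝 0) := by
    have h1 : Tendsto (fun w => Real.exp (-(2 * x * c * Real.sinh w))) atTop (𝓝 0) := by
      apply Real.tendsto_exp_atBot.comp
      apply tendsto_neg_atTop_atBot.comp
      exact aux_sinh_atTop.const_mul_atTop (by positivity)
    have h2 := h1.mul_const (a⁻¹)
    rw [zero_mul] at h2
    refine squeeze_zero (fun w => ?_) (fun w => ?_) h2
    · have hR := rr_pos a c w ha
      positivity
    · have := rr_ge a c w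
      gcongr
  have hI := integrableOn_Ioi_deriv_of_nonpos' hd hneg hlim
  have hV := integral_Ioi_of_hasDerivAt_of_tendsto' hd hI hlim
  have hmeasR : Measurable (rr a c) := (rr_cont a c).measurable
  have hchm : Measurable Real.cosh := Real.continuous_cosh.measurable
  have hshm : Measurable Real.sinh := Real.continuous_sinh.measurable
  have hIP : IntegrableOn P (Set.Ioi 0) := by
    refine Integrable.mono' (hI.neg.const_mul (1 / (2 * x)))
      (Measurable.aestronglyMeasurable (by simp only [hP]; fun_prop)) ?_
    filter_upwards [self_mem_ae_restrict measurableSet_Ioi] with w hw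
    obtain ⟨h1, h2⟩ := hPQ w hw
    rw [Real.norm_eq_abs, abs_of_nonneg h1, Pi.neg_apply, neg_neg, mul_add]
    have : 0 ≤ 1 / (2 * x) * (c ^ 2 * Q w) := by positivity
    have : 1 / (2 * x) * (2 * x * P w) = P w := by field_simp
    linarith
  have hIQ : IntegrableOn Q (Set.Ioi 0) := by
    refine Integrable.mono' (hI.neg.const_mul (1 / c ^ 2))
      (Measurable.aestronglyMeasurable (by simp only [hQ]; fun_prop)) ?_
    filter_upwards [self_mem_ae_restrict measurableSet_Ioi] with w hw
    obtain ⟨h1, h2⟩ := hPQ w hw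
    rw [Real.norm_eq_abs, abs_of_nonneg h2, Pi.neg_apply, neg_neg, mul_add]
    have : 0 ≤ 1 / c ^ 2 * (2 * x * P w) := by positivity
    have : 1 / c ^ 2 * (c ^ 2 * Q w) = Q w := by field_simp
    linarith
  rw [integral_neg, integral_add (hIP.const_mul _) (hIQ.const_mul _), integral_const_mul,
    integral_const_mul] at hV
  rw [rr_zero a c ha] at hV
  simp only [Real.sinh_zero, mul_zero, neg_zero, Real.exp_zero, one_mul, zero_sub] at hV
  unfold struveK0
  simp only [neg_mul] at hsub2 ⊢
  rw [hsub2]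
  field_simp
  field_simp at hV
  linear_combination -hV

lemma atexp_img : (fun w : ℝ => Real.arctan (Real.exp w)) '' Set.univ = Set.Ioo 0 (Real.pi / 2) := by
  ext t
  constructor
  · rintro ⟨w, _, rfl⟩
    exact ⟨Real.arctan_pos.2 (Real.exp_pos w), Real.arctan_lt_pi_div_two _⟩
  · rintro ⟨h1, h2⟩
    refine ⟨Real.log (Real.tan t), trivial, ?_⟩
    simp only
    rw [Real.exp_log (Real.tan_pos_of_pos_of_lt_pi_div_two h1 h2), Real.arctan_tan (by linarith) h2]

lemma atexp_inj : Set.InjOn (fun w : ℝ => Real.arctan (Real.exp w)) Set.univ := by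
  intro w₁ _ w₂ _ h
  exact Real.exp_injective (Real.arctan_injective h)

lemma atexp_der (w : ℝ) : HasDerivWithinAt (fun w : ℝ => Real.arctan (Real.exp w))
    ((2 * Real.cosh w)⁻¹) Set.univ w := by
  have := (Real.hasDerivAt_exp w).arctan
  refine (this.congr_deriv ?_).hasDerivWithinAt
  rw [Real.cosh_eq, Real.exp_neg]
  have := Real.exp_pos w
  field_simp
  ring

lemma sech_int : Integrable (fun w : ℝ => (Real.cosh w)⁻¹) := by
  have h := (integrableOn_image_iff_integrableOn_abs_deriv_smul MeasurableSet.univ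
    (fun w _ => atexp_der w) atexp_inj (fun _ => (1:ℝ))).1 (by
      rw [atexp_img]; exact integrableOn_const (by simp))
  rw [integrableOn_univ] at h
  refine (h.const_mul 2).congr (ae_of_all _ fun w => ?_)
  have := Real.cosh_pos w
  simp only [smul_eq_mul, mul_one]
  rw [abs_of_pos (by positivity)]
  field_simp

lemma sech_ft (τ : ℝ) : ∫ w : ℝ, Complex.exp (Complex.I * τ * w) * (((Real.cosh w)⁻¹ : ℝ) : ℂ)
    = ((Real.pi / Real.cosh (Real.pi * τ / 2) : ℝ) : ℂ) := by
  set s : ℂ := 1 / 2 + Complex.I * τ / 2 with hs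
  have hre : s.re = 1 / 2 := by simp [hs]
  have hre2 : (1 - s).re = 1 / 2 := by simp [hs]; norm_num
  have h1 := Complex.Gamma_mul_Gamma_eq_betaIntegral (s := s) (t := 1 - s)
    (by rw [hre]; norm_num) (by rw [hre2]; norm_num)
  rw [Complex.Gamma_mul_Gamma_one_sub, add_sub_cancel, Complex.Gamma_one, one_mul, betaTrig,
    ← atexp_img, integral_image_eq_integral_abs_deriv_smul MeasurableSet.univ
    (fun w _ => atexp_der w) atexp_inj, setIntegral_univ, ← integral_const_mul] at h1
  have hsin : Complex.sin (Real.pi * s) = (Real.cosh (Real.pi * τ / 2) : ℂ) := by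
    rw [hs, show (Real.pi : ℂ) * (1 / 2 + Complex.I * τ / 2)
      = (Real.pi * τ / 2 : ℂ) * Complex.I + Real.pi / 2 by ring, Complex.sin_add_pi_div_two,
      Complex.cos_mul_I]
    push_cast; rfl
  rw [hsin] at h1
  rw [Complex.ofReal_div, h1]
  refine integral_congr_ae (ae_of_all _ fun w => ?_)
  have hw := Real.cosh_pos w
  have he := Real.exp_pos w
  simp only
  rw [abs_of_pos (by positivity), Real.sin_arctan, Real.cos_arctan, ← Complex.exp_add,
    Real.log_div he.ne' (by positivity), Real.log_div (by norm_num) (by positivity), Real.log_exp,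
    Real.log_one, Complex.real_smul, hs]
  rw [show (2 * (1 / 2 + Complex.I * τ / 2) - 1) * ((w - Real.log (Real.sqrt (1 + Real.exp w ^ 2)) : ℝ) : ℂ) +
    (2 * (1 - (1 / 2 + Complex.I * τ / 2)) - 1) * ((0 - Real.log (Real.sqrt (1 + Real.exp w ^ 2)) : ℝ) : ℂ)
    = Complex.I * τ * w by push_cast; ring]
  rw [mul_inv, Complex.ofReal_mul]
  push_cast
  ring

lemma sech_ft_int (τ : ℝ) : Integrable (fun w : ℝ => Complex.exp (Complex.I * τ * w) *
    (((Real.cosh w)⁻¹ : ℝ) : ℂ)) := by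
  have hchm : Measurable Real.cosh := Real.continuous_cosh.measurable
  refine Integrable.mono' sech_int (Measurable.aestronglyMeasurable (by fun_prop))
    (ae_of_all _ fun w => ?_)
  rw [norm_mul, Complex.norm_exp, Complex.norm_real, Real.norm_eq_abs,
    abs_of_pos (inv_pos.2 (Real.cosh_pos w))]
  simp

lemma sech_cos (τ : ℝ) : ∫ w : ℝ, Real.cos (τ * w) * (Real.cosh w)⁻¹
    = Real.pi / Real.cosh (Real.pi * τ / 2) := by
  have h := congrArg Complex.re (sech_ft τ)
  have h3 := integral_re (sech_ft_int τ)
  simp only [RCLike.re_to_complex] at h3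
  rw [← h3] at h
  simp_rw [Complex.re_mul_ofReal, Complex.exp_re] at h
  rw [Complex.ofReal_re] at h
  simpa using h

lemma sech_sin (τ : ℝ) : ∫ w : ℝ, Real.sin (τ * w) * (Real.cosh w)⁻¹ = 0 := by
  have h := congrArg Complex.im (sech_ft τ)
  have h3 := integral_im (sech_ft_int τ)
  simp only [RCLike.im_to_complex] at h3
  rw [← h3] at h
  simp_rw [Complex.im_mul_ofReal, Complex.exp_im] at h
  rw [Complex.ofReal_im] at h
  simpa using h

lemma final_int (τ u : ℝ) (hu : u ≠ 0) :
    ∫ w in Set.Ioi (0:ℝ), Real.sin (τ * w) * (Real.sinh w / (Real.cosh u ^ 2 + Real.sinh w ^ 2))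
      = Real.pi * Real.sin (τ * u) / (2 * Real.sinh u * Real.cosh (Real.pi * τ / 2)) := by
  have hchm : Measurable Real.cosh := Real.continuous_cosh.measurable
  have hb : ∀ (g : ℝ → ℝ), Measurable g → (∀ w, |g w| ≤ 1) →
      Integrable (fun w : ℝ => g w * (Real.cosh w)⁻¹) := by
    intro g hg hg1
    refine Integrable.mono' sech_int (Measurable.aestronglyMeasurable (by fun_prop))
      (ae_of_all _ fun w => ?_)
    have := inv_pos.2 (Real.cosh_pos w)
    rw [norm_mul, Real.norm_eq_abs, Real.norm_eq_abs, abs_of_pos this]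
    exact mul_le_of_le_one_left this.le (hg1 w)
  set h : ℝ → ℝ := fun w => Real.sin (τ * w) * (Real.cosh (w - u))⁻¹ with hh
  have hshift : ∀ w, h (w + u) = Real.sin (τ * u) * (Real.cos (τ * w) * (Real.cosh w)⁻¹)
      + Real.cos (τ * u) * (Real.sin (τ * w) * (Real.cosh w)⁻¹) := by
    intro w
    simp only [hh]
    rw [mul_add, Real.sin_add, add_sub_cancel_right]; ring
  have i1 := hb (fun w => Real.cos (τ * w)) (by fun_prop) (fun w => Real.abs_cos_le_one _)
  have i2 := hb (fun w => Real.sin (τ * w)) (by fun_prop) (fun w => Real.abs_sin_le_one _)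
  have hI2 : Integrable (fun w => h (w + u)) := by
    simp_rw [hshift]
    exact (i1.const_mul _).add (i2.const_mul _)
  have hI : Integrable h := by
    have := hI2.comp_add_right (-u)
    simpa using this
  have htot : ∫ w, h w = Real.sin (τ * u) * (Real.pi / Real.cosh (Real.pi * τ / 2)) := by
    rw [← integral_add_right_eq_self h u]
    simp_rw [hshift]
    rw [integral_add (i1.const_mul _) (i2.const_mul _), integral_const_mul, integral_const_mul,
      sech_cos, sech_sin]
    ring
  have hneg : ∫ w in Set.Iic (0:ℝ), h w = ∫ w in Set.Ioi (0:ℝ), h (-w) := by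
    have := integral_comp_neg_Ioi 0 h
    rw [this, neg_zero]
  have hIn : Integrable (fun w => h (-w)) := hI.comp_neg
  rw [← intervalIntegral.integral_Iic_add_Ioi (b := 0) hI.integrableOn hI.integrableOn, hneg,
    ← integral_add hIn.integrableOn hI.integrableOn] at htot
  have hs : Real.sinh u ≠ 0 := by simpa using hu
  have hc := (Real.cosh_pos (Real.pi * τ / 2)).ne'
  have : ∀ w, Real.sin (τ * w) * (Real.sinh w / (Real.cosh u ^ 2 + Real.sinh w ^ 2))
      = (2 * Real.sinh u)⁻¹ * (h (-w) + h w) := by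
    intro w
    simp only [hh]
    rw [show -w - u = -(w + u) by ring, Real.cosh_neg, mul_neg, Real.sin_neg]
    have c1 := Real.cosh_pos (w + u)
    have c2 := Real.cosh_pos (w - u)
    have hprod : Real.cosh u ^ 2 + Real.sinh w ^ 2 = Real.cosh (w + u) * Real.cosh (w - u) := by
      rw [Real.cosh_add, Real.cosh_sub]
      have e1 := Real.cosh_sq w
      have e2 := Real.cosh_sq u
      have e3 : Real.sinh u ^ 2 = Real.cosh u ^ 2 - 1 := by linarith
      ring_nf
      rw [e1, e3]; ring
    have hdiff : Real.cosh (w + u) - Real.cosh (w - u) = 2 * Real.sinh w * Real.sinh u := by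
      rw [Real.cosh_add, Real.cosh_sub]; ring
    rw [hprod]
    field_simp
    linear_combination (-Real.sin (τ * w)) * hdiff
  simp_rw [this]
  rw [integral_const_mul, htot]
  field_simp

/-- Threefold integrand. -/
noncomputable def gg (z : ℂ) (a x : ℝ) (p : ℝ × ℝ) : ℝ :=
  -(2 * Real.cos p.1 ^ 2 / Real.pi ^ 2) * (Real.exp (-(2 * x * Real.cos p.1 * Real.sinh p.2)) *
    (Real.sinh p.2 * Real.cosh p.2 * (rr a (Real.cos p.1) p.2)⁻¹ ^ 3)) *
    (besselJ z (2 * x * Real.cos p.1)).im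

/-- Measure on the two inner variables. -/
noncomputable def nuu : Measure (ℝ × ℝ) :=
  (volume.restrict (Set.Ioo (0:ℝ) (Real.pi / 2))).prod (volume.restrict (Set.Ioi (0:ℝ)))

instance : SFinite nuu := by unfold nuu; infer_instance

lemma nuu_ae : ∀ᵐ p ∂nuu, p.1 ∈ Set.Ioo (0:ℝ) (Real.pi / 2) ∧ p.2 ∈ Set.Ioi (0:ℝ) := by
  unfold nuu
  rw [Measure.prod_restrict]
  filter_upwards [self_mem_ae_restrict (measurableSet_Ioo.prod measurableSet_Ioi)] with p hp
  exact hp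

lemma rrc_meas (a : ℝ) : Measurable (fun p : ℝ × ℝ => rr a (Real.cos p.1) p.2) := by
  unfold rr; fun_prop

lemma gg_meas (z : ℂ) (hz : z.re = 0) (a : ℝ) :
    Measurable (Function.uncurry (gg z a)) := by
  have hm := measurable_besselJ z hz
  have h1 : Measurable (fun q : ℝ × ℝ × ℝ => rr a (Real.cos q.2.1) q.2.2) :=
    (rrc_meas a).comp measurable_snd
  have h2 : Measurable (fun q : ℝ × ℝ × ℝ => besselJ z (2 * q.1 * Real.cos q.2.1)) :=
    hm.comp (by fun_prop)
  have h3 : Measurable (fun q : ℝ × ℝ × ℝ => (besselJ z (2 * q.1 * Real.cos q.2.1)).im) :=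
    Complex.measurable_im.comp h2
  have hchm : Measurable Real.cosh := Real.continuous_cosh.measurable
  have hshm : Measurable Real.sinh := Real.continuous_sinh.measurable
  simp only [Function.uncurry_def, gg]
  fun_prop

lemma nu_bound_int (a : ℝ) (ha : 0 < a) :
    Integrable (fun p : ℝ × ℝ => Real.cos p.1 * Real.cosh p.2 * (rr a (Real.cos p.1) p.2)⁻¹ ^ 3) nuu := by
  have h1 := rrc_meas a
  have hchm : Measurable Real.cosh := Real.continuous_cosh.measurable
  have hcpos : ∀ θ ∈ Set.Ioo (0:ℝ) (Real.pi / 2), 0 < Real.cos θ := fun θ hθ =>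
    Real.cos_pos_of_mem_Ioo ⟨by linarith [hθ.1, Real.pi_pos], hθ.2⟩
  unfold nuu
  rw [integrable_prod_iff (Measurable.aestronglyMeasurable (by fun_prop))]
  constructor
  · filter_upwards [self_mem_ae_restrict measurableSet_Ioo] with θ hθ
    exact (wint a _ ha (hcpos θ hθ)).1
  · have hc : Integrable (fun _ : ℝ => 1 / a ^ 2) (volume.restrict (Set.Ioo (0:ℝ) (Real.pi / 2))) :=
      integrable_const _
    refine hc.congr ?_
    filter_upwards [self_mem_ae_restrict measurableSet_Ioo] with θ hθ
    rw [← (wint a _ ha (hcpos θ hθ)).2]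
    refine integral_congr_ae (ae_of_all _ fun w => ?_)
    have h2 := rr_pos a (Real.cos θ) w ha
    have h3 := Real.cosh_pos w
    have h4 := hcpos θ hθ
    simp only
    rw [Real.norm_eq_abs, abs_of_nonneg (by positivity)]

lemma gg_int (z : ℂ) (hz : z.re = 0) (a : ℝ) (ha : 0 < a) :
    Integrable (Function.uncurry (gg z a)) ((volume.restrict (Set.Ioi (0:ℝ))).prod nuu) := by
  obtain ⟨C, hC, hb⟩ := besselJ_bound z hz
  have hpi := Real.pi_pos
  have hcpos : ∀ θ ∈ Set.Ioo (0:ℝ) (Real.pi / 2), 0 < Real.cos θ := fun θ hθ =>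
    Real.cos_pos_of_mem_Ioo ⟨by linarith [hθ.1, Real.pi_pos], hθ.2⟩
  set B : ℝ × ℝ × ℝ → ℝ := fun q => C * (2 * Real.cos q.2.1 ^ 2 / Real.pi ^ 2) *
    (Real.sinh q.2.2 * Real.cosh q.2.2 * (rr a (Real.cos q.2.1) q.2.2)⁻¹ ^ 3) *
    Real.exp (-(2 * Real.cos q.2.1 * Real.sinh q.2.2) * q.1) with hB
  have hBm : Measurable B := by
    have h1 : Measurable (fun q : ℝ × ℝ × ℝ => rr a (Real.cos q.2.1) q.2.2) :=
      (rrc_meas a).comp measurable_snd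
    have hchm : Measurable Real.cosh := Real.continuous_cosh.measurable
    have hshm : Measurable Real.sinh := Real.continuous_sinh.measurable
    simp only [hB]
    fun_prop
  have hBint : Integrable B ((volume.restrict (Set.Ioi (0:ℝ))).prod nuu) := by
    rw [integrable_prod_iff' hBm.aestronglyMeasurable]
    constructor
    · filter_upwards [nuu_ae] with p hp
      have h4 := hcpos _ hp.1
      have hS : 0 < Real.sinh p.2 := Real.sinh_pos_iff.2 hp.2
      have hpp : 0 < 2 * Real.cos p.1 * Real.sinh p.2 := by positivity
      simp only [hB]
      exact (exp_neg_integrableOn_Ioi 0 hpp).const_mul _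
    · refine ((nu_bound_int a ha).const_mul (C / Real.pi ^ 2)).congr ?_
      filter_upwards [nuu_ae] with p hp
      have h4 := hcpos _ hp.1
      have hS : 0 < Real.sinh p.2 := Real.sinh_pos_iff.2 hp.2
      have h2 := rr_pos a (Real.cos p.1) p.2 ha
      have h3 := Real.cosh_pos p.2
      have : ∀ x : ℝ, ‖B (x, p)‖ = B (x, p) := fun x => by
        rw [Real.norm_eq_abs, abs_of_nonneg]
        simp only [hB]; positivity
      simp_rw [this]
      simp only [hB]
      rw [integral_const_mul, integral_exp_mul_Ioi (by
        have : 0 < 2 * Real.cos p.1 * Real.sinh p.2 := by positivity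
        linarith)]
      simp only [mul_zero, Real.exp_zero]
      field_simp
  refine Integrable.mono' hBint (gg_meas z hz a).aestronglyMeasurable ?_
  have hae : ∀ᵐ q ∂((volume.restrict (Set.Ioi (0:ℝ))).prod nuu),
      q.1 ∈ Set.Ioi (0:ℝ) ∧ q.2.1 ∈ Set.Ioo (0:ℝ) (Real.pi / 2) ∧ q.2.2 ∈ Set.Ioi (0:ℝ) := by
    unfold nuu
    rw [Measure.prod_restrict, Measure.prod_restrict]
    filter_upwards [self_mem_ae_restrict
      (measurableSet_Ioi.prod (measurableSet_Ioo.prod measurableSet_Ioi))] with q hq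
    exact hq
  filter_upwards [hae] with q hq
  obtain ⟨hx, hθ, hw⟩ := hq
  have h4 := hcpos _ hθ
  have hx' : 0 < q.1 := hx
  have hS : 0 < Real.sinh q.2.2 := Real.sinh_pos_iff.2 hw
  have h2 := rr_pos a (Real.cos q.2.1) q.2.2 ha
  have h3 := Real.cosh_pos q.2.2
  have h5 : |(besselJ z (2 * q.1 * Real.cos q.2.1)).im| ≤ C :=
    (Complex.abs_im_le_norm _).trans (hb _ (by positivity))
  simp only [Function.uncurry_def, gg, hB]
  rw [norm_mul, norm_mul, norm_neg, Real.norm_eq_abs, Real.norm_eq_abs, Real.norm_eq_abs,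
    abs_of_nonneg (by positivity), abs_of_nonneg (by positivity)]
  calc _ ≤ 2 * Real.cos q.2.1 ^ 2 / Real.pi ^ 2 *
      (Real.exp (-(2 * q.1 * Real.cos q.2.1 * Real.sinh q.2.2)) *
        (Real.sinh q.2.2 * Real.cosh q.2.2 * (rr a (Real.cos q.2.1) q.2.2)⁻¹ ^ 3)) * C := by
        gcongr
    _ = _ := by
        rw [show -(2 * q.1 * Real.cos q.2.1 * Real.sinh q.2.2) =
          -(2 * Real.cos q.2.1 * Real.sinh q.2.2) * q.1 by ring]
        ring

lemma gg_slice (z : ℂ) (hz : z.re = 0) (a x : ℝ) (ha : 0 < a) (hx : 0 < x)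
    (hi : Integrable (gg (2 * z) a x) nuu) :
    ∫ p, gg (2 * z) a x p ∂nuu =
      (x * struveK0 (2 * x * a) - 1 / (Real.pi * a)) * (besselJ z x ^ 2).im := by
  have hpi := Real.pi_pos
  have hz2 : (2 * z).re = 0 := by simp [hz]
  have hcpos : ∀ θ ∈ Set.Ioo (0:ℝ) (Real.pi / 2), 0 < Real.cos θ := fun θ hθ =>
    Real.cos_pos_of_mem_Ioo ⟨by linarith [hθ.1, Real.pi_pos], hθ.2⟩
  obtain ⟨C, hC, hb⟩ := besselJ_bound (2 * z) hz2
  have hm := measurable_besselJ (2 * z) hz2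
  have hJi : Integrable (fun θ : ℝ => besselJ (2 * z) (2 * x * Real.cos θ))
      (volume.restrict (Set.Ioo (0:ℝ) (Real.pi / 2))) := by
    refine Integrable.of_bound (C := C)
      (Measurable.aestronglyMeasurable (hm.comp (by fun_prop))) ?_
    filter_upwards [self_mem_ae_restrict measurableSet_Ioo] with θ hθ
    have := hcpos θ hθ
    exact hb _ (by positivity)
  have him : (besselJ z x ^ 2).im = 2 / Real.pi * ∫ θ in Set.Ioo (0:ℝ) (Real.pi / 2),
      (besselJ (2 * z) (2 * x * Real.cos θ)).im := by
    have h3 := integral_im hJi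
    simp only [RCLike.im_to_complex] at h3
    rw [besselJ_sq z hz x hx, h3, show (2 / Real.pi : ℂ) = ((2 / Real.pi : ℝ) : ℂ) by push_cast; rfl,
      Complex.im_ofReal_mul]
  rw [him]
  unfold nuu at hi ⊢
  rw [integral_prod _ hi, ← mul_assoc, ← integral_const_mul]
  refine setIntegral_congr_fun measurableSet_Ioo fun θ hθ => ?_
  have := kernel x a (Real.cos θ) hx ha (hcpos θ hθ)
  simp only [gg]
  rw [integral_mul_const, integral_const_mul, this]
  field_simp

lemma gg_xint (τ : ℝ) (hτ : τ ≠ 0) (a θ w : ℝ) (hθ : θ ∈ Set.Ioo (0:ℝ) (Real.pi / 2)) (hw : 0 < w) :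
    ∫ x in Set.Ioi (0:ℝ), gg (Complex.I * τ) a x (θ, w) =
      1 / Real.pi ^ 2 * (Real.sin (τ * w) * (Real.cos θ * Real.sinh w *
        (rr a (Real.cos θ) w)⁻¹ ^ 3)) := by
  have hpi := Real.pi_pos
  have hc : 0 < Real.cos θ := Real.cos_pos_of_mem_Ioo ⟨by linarith [hθ.1, Real.pi_pos], hθ.2⟩
  have h1 := integral_comp_mul_left_Ioi (fun y : ℝ => Real.exp (-(Real.sinh w * y)) *
    (besselJ (Complex.I * τ) y).im) 0 (b := 2 * Real.cos θ) (by positivity)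
  rw [mul_zero, laplace_im τ hτ w hw] at h1
  have h2 : ∀ x, gg (Complex.I * τ) a x (θ, w) = -(2 * Real.cos θ ^ 2 / Real.pi ^ 2) *
      (Real.sinh w * Real.cosh w * (rr a (Real.cos θ) w)⁻¹ ^ 3) *
      (Real.exp (-(Real.sinh w * (2 * Real.cos θ * x))) *
        (besselJ (Complex.I * τ) (2 * Real.cos θ * x)).im) := by
    intro x
    simp only [gg]
    rw [show 2 * x * Real.cos θ = 2 * Real.cos θ * x by ring,
      show 2 * Real.cos θ * x * Real.sinh w = Real.sinh w * (2 * Real.cos θ * x) by ring]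
    ring
  simp_rw [h2]
  rw [integral_const_mul, h1, smul_eq_mul]
  have := Real.cosh_pos w
  field_simp

theorem mainthm (u : ℝ) (hu0 : u ≠ 0) (n : ℕ) (hn : 1 ≤ n) :
    IntegrableOn (fun x : ℝ => (x * struveK0 (2 * x * Real.cosh u) - 1 / (Real.pi * Real.cosh u))
      * ((besselJ (Complex.I * n / 2) x) ^ 2).im) (Set.Ioi (0 : ℝ)) ∧
    ∫ x in Set.Ioi (0 : ℝ), (x * struveK0 (2 * x * Real.cosh u) - 1 / (Real.pi * Real.cosh u))
      * ((besselJ (Complex.I * n / 2) x) ^ 2).im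
      = Real.sin (n * u) / (Real.pi * Real.sinh (2 * u) * Real.cosh (Real.pi * n / 2)) := by
  set a := Real.cosh u with ha'
  have ha : 0 < a := Real.cosh_pos u
  have hpi := Real.pi_pos
  set τ : ℝ := (n : ℝ) with hτ'
  have hτ : τ ≠ 0 := by
    rw [hτ']; exact_mod_cast (by omega : n ≠ 0)
  set z : ℂ := Complex.I * n / 2 with hz'
  have hz : z.re = 0 := by simp [hz']
  have h2z : 2 * z = Complex.I * (τ : ℂ) := by rw [hz', hτ']; push_cast; ring
  have hz2 : (2 * z).re = 0 := by simp [hz]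
  have hG := gg_int (2 * z) hz2 a ha
  have hslice : (fun x => ∫ p, gg (2 * z) a x p ∂nuu) =ᵐ[volume.restrict (Set.Ioi (0:ℝ))]
      fun x : ℝ => (x * struveK0 (2 * x * a) - 1 / (Real.pi * a)) * ((besselJ z x) ^ 2).im := by
    filter_upwards [hG.prod_right_ae, self_mem_ae_restrict measurableSet_Ioi] with x h1 h2
    exact gg_slice z hz a x ha h2 h1
  refine ⟨hG.integral_prod_left.congr hslice, ?_⟩
  rw [← integral_congr_ae hslice, integral_integral_swap hG]
  set f : ℝ × ℝ → ℝ := fun p => 1 / Real.pi ^ 2 * (Real.sin (τ * p.2) * (Real.cos p.1 * Real.sinh p.2 *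
        (rr a (Real.cos p.1) p.2)⁻¹ ^ 3)) with hf
  have hfe : (fun p => ∫ x in Set.Ioi (0:ℝ), gg (2 * z) a x p) =ᵐ[nuu] f := by
    filter_upwards [nuu_ae] with p hp
    rw [h2z]
    exact gg_xint τ hτ a p.1 p.2 hp.1 hp.2
  have hfi : Integrable f nuu := hG.integral_prod_right.congr hfe
  rw [integral_congr_ae hfe]
  unfold nuu at hfi ⊢
  rw [integral_prod_symm _ hfi]
  simp only [hf]
  simp_rw [integral_const_mul, thetaint a _ ha]
  have h1 : ∀ w : ℝ, Real.sin (τ * w) * (Real.sinh w / (a * (a ^ 2 + Real.sinh w ^ 2)))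
      = 1 / a * (Real.sin (τ * w) * (Real.sinh w / (Real.cosh u ^ 2 + Real.sinh w ^ 2))) := by
    intro w
    rw [← ha']
    have : 0 < a ^ 2 + Real.sinh w ^ 2 := by positivity
    field_simp
  simp_rw [h1]
  rw [integral_const_mul, final_int τ u hu0, Real.sinh_two_mul, ← ha']
  have hs : Real.sinh u ≠ 0 := by simpa using hu0
  have hc := (Real.cosh_pos (Real.pi * τ / 2)).ne'
  field_simp

theorem statement9 (u : ℝ) (hu : u ∈ Set.Icc (-Real.pi) Real.pi) (hu0 : u ≠ 0)
    (n : ℕ) (hn : 1 ≤ n) :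
    IntegrableOn (fun x : ℝ =>
      (x * struveK0 (2 * x * Real.cosh u) - 1 / (Real.pi * Real.cosh u)) *
        ((besselJ (Complex.I * n / 2) x) ^ 2).im) (Set.Ioi (0 : ℝ)) ∧
    ∫ x in Set.Ioi (0 : ℝ),
        (x * struveK0 (2 * x * Real.cosh u) - 1 / (Real.pi * Real.cosh u)) *
          ((besselJ (Complex.I * n / 2) x) ^ 2).im
      = Real.sin (n * u) / (Real.pi * Real.sinh (2 * u) * Real.cosh (Real.pi * n / 2)) := by
  exact mainthm u hu0 n hn
end

section
/- Let M ≥ 0 be a constant such that √u · |J₀(u)| ≤ M for all u > 0. Then for every x > 0 and every n ∈ ℕ, n ≥ 1, |Im[J_{in/2}(x)²]| / sinh(πn/2) ≤ Γ(1/4)² · M / (2π·√(πx)). -/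
open MeasureTheory Filter Topology

/-- generic product -/
theorem prod_formula (f g : ℝ → ℂ) (hf : Integrable f) (hg : Integrable g)
    (hfc : Continuous f) (hgc : Continuous g) :
    Integrable (fun b : ℝ => ∫ a : ℝ, f (a + b) * g (a - b)) ∧
    (∫ s, f s) * (∫ t, g t) = 2 * ∫ b : ℝ, ∫ a : ℝ, f (a + b) * g (a - b) := by
  have hs : ∀ t : ℝ, Integrable (fun b : ℝ => f (t + 2 * b)) := fun t => by
    have := (hf.comp_add_left t)
    exact this.comp_mul_left' (two_ne_zero)
  have hi : ∀ t : ℝ, ∀ (k : ℝ → ℂ), ∫ b : ℝ, k (t + 2 * b) = (1/2:ℝ) • ∫ s, k s := fun t k => by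
    rw [Measure.integral_comp_mul_left (fun s => k (t + s)) 2, integral_add_left_eq_self]
    norm_num
  have hi' : ∀ t : ℝ, ∀ (k : ℝ → ℝ), ∫ b : ℝ, k (t + 2 * b) = (1/2:ℝ) • ∫ s, k s := fun t k => by
    rw [Measure.integral_comp_mul_left (fun s => k (t + s)) 2, integral_add_left_eq_self]
    norm_num
  have hprod : Integrable (Function.uncurry fun t b : ℝ => f (t + 2 * b) * g t)
      (volume.prod volume) := by
    have hm : AEStronglyMeasurable (Function.uncurry fun t b : ℝ => f (t + 2 * b) * g t)
      (volume.prod volume) := by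
      apply Continuous.aestronglyMeasurable
      simp only [Function.uncurry_def]
      fun_prop
    rw [integrable_prod_iff hm]
    constructor
    · refine Eventually.of_forall fun t => ?_
      exact (hs t).mul_const (g t)
    · have : ∀ t : ℝ, ∫ b : ℝ, ‖Function.uncurry (fun t b : ℝ => f (t + 2 * b) * g t) (t, b)‖ =
         ((1/2:ℝ) • ∫ s, ‖f s‖) * ‖g t‖ := fun t => by
        simp only [Function.uncurry, norm_mul]
        rw [integral_mul_const, hi' t (fun s => ‖f s‖)]
      simp_rw [this]
      exact hg.norm.const_mul _
  have key : ∀ b : ℝ, ∫ t : ℝ, f (t + 2 * b) * g t = ∫ a : ℝ, f (a + b) * g (a - b) := fun b => by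
    rw [← integral_sub_right_eq_self (fun t => f (t + 2 * b) * g t) b]
    refine integral_congr_ae (Eventually.of_forall fun a => ?_)
    simp only
    congr 2; ring
  constructor
  · have := hprod.integral_prod_right
    simp only [Function.uncurry] at this
    simpa only [key] using this
  · simp_rw [← key]
    rw [← integral_integral_swap hprod]
    simp_rw [integral_mul_const, fun t => hi t f]
    rw [integral_const_mul]
    simp
    ring


/-- `exp (-r e^a + σ a)` decays -/
theorem int_full (r σ : ℝ) (hr : 0 < r) (hσ : 0 < σ) :
    Integrable (fun a : ℝ => Real.exp (-r * Real.exp a + σ * a)) := by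
  have h := (integrableOn_image_iff_integrableOn_abs_deriv_smul (s := Set.univ) (f := Real.exp) (f' := Real.exp)
    MeasurableSet.univ (fun x _ => (Real.hasDerivAt_exp x).hasDerivWithinAt) (Real.exp_injective.injOn)
    (fun t : ℝ => t ^ (σ - 1) * Real.exp (- r * t)))
  rw [Set.image_univ, Real.range_exp, integrableOn_univ] at h
  have h2 := h.1 (by
    have := integrableOn_rpow_mul_exp_neg_mul_rpow (p := 1) (s := σ - 1) (b := r) (by linarith) one_pos hr
    simpa using this)
  refine h2.congr (Eventually.of_forall fun a => ?_)
  simp only [smul_eq_mul, abs_of_pos (Real.exp_pos a)]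
  rw [← Real.exp_mul, ← Real.exp_add, ← Real.exp_add]
  congr 1; ring

theorem int_full_val (r : ℝ) (s : ℂ) (hr : 0 < r) (hs : 0 < s.re) :
    ∫ a : ℝ, Complex.exp (-(r:ℂ) * Complex.exp a + s * a) = (r:ℂ) ^ (-s) * Complex.Gamma s := by
  have h := (integral_image_eq_integral_abs_deriv_smul (s := Set.univ) (f := Real.exp) (f' := Real.exp)
    MeasurableSet.univ (fun x _ => (Real.hasDerivAt_exp x).hasDerivWithinAt) (Real.exp_injective.injOn)
    (fun t : ℝ => (t:ℂ) ^ (s - 1) * Complex.exp (-(r * t))))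
  rw [Set.image_univ, Real.range_exp, setIntegral_univ, Complex.integral_cpow_mul_exp_neg_mul_Ioi hs hr] at h
  rw [one_div, Complex.inv_cpow _ _ (by rw [Complex.arg_ofReal_of_nonneg hr.le]; exact Real.pi_pos.ne), ← Complex.cpow_neg] at h
  rw [h]
  refine integral_congr_ae (Eventually.of_forall fun a => ?_)
  simp only [abs_of_pos (Real.exp_pos a)]
  rw [Complex.cpow_def_of_ne_zero (by simp), ← Complex.ofReal_log (Real.exp_pos a).le, Real.log_exp, Complex.real_smul,
    Complex.ofReal_exp, ← Complex.exp_add, ← Complex.exp_add]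
  congr 1; ring


theorem int_cosh (x : ℝ) (hx : 0 < x) : Integrable (fun a : ℝ => Real.exp (-x * Real.cosh a)) := by
  refine ((int_full (x/2) 1 (by positivity) one_pos).const_mul (2/x)).mono'
    (by apply Continuous.aestronglyMeasurable; fun_prop) (Eventually.of_forall fun a => ?_)
  rw [Real.norm_of_nonneg (Real.exp_pos _).le, Real.cosh_eq]
  have h1 : Real.exp (-x * ((Real.exp a + Real.exp (-a)) / 2)) =
      Real.exp (-(x/2) * Real.exp a) * Real.exp (-((x/2) * Real.exp (-a))) := by
    rw [← Real.exp_add]; congr 1; ring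
  have h2 : Real.exp (-((x/2) * Real.exp (-a))) ≤ (2/x) * Real.exp a := by
    rw [Real.exp_neg]
    have : (x/2) * Real.exp (-a) ≤ Real.exp ((x/2) * Real.exp (-a)) := by
      linarith [Real.add_one_le_exp ((x/2) * Real.exp (-a))]
    calc _ ≤ ((x/2) * Real.exp (-a))⁻¹ := by gcongr
      _ = _ := by rw [Real.exp_neg]; field_simp
  rw [h1, Real.exp_add, one_mul]
  nlinarith [Real.exp_pos (-(x/2) * Real.exp a)]

noncomputable def Kf (η : ℝ) (z : ℂ) : ℂ :=
  ∫ a : ℝ, Complex.exp (-z * Complex.cosh a + Complex.I * η * a)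

theorem norm_kern (η : ℝ) (z : ℂ) (a : ℝ) :
    ‖Complex.exp (-z * Complex.cosh a + Complex.I * η * a)‖ = Real.exp (-z.re * Real.cosh a) := by
  rw [Complex.norm_exp, ← Complex.ofReal_cosh]
  simp

theorem int_kern (η : ℝ) (z : ℂ) (hz : 0 < z.re) :
    Integrable (fun a : ℝ => Complex.exp (-z * Complex.cosh a + Complex.I * η * a)) := by
  refine (int_cosh _ hz).mono' (by apply Continuous.aestronglyMeasurable; fun_prop) (Eventually.of_forall fun a => ?_)
  rw [norm_kern]

theorem Kf_prod (η μ : ℝ) (z : ℂ) (hz : 0 < z.re) :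
    Integrable (fun b : ℝ => Complex.exp (2 * Complex.I * μ * b) * Kf (2 * η) (2 * Real.cosh b * z)) ∧
    Kf (η + μ) z * Kf (η - μ) z =
      2 * ∫ b : ℝ, Complex.exp (2 * Complex.I * μ * b) * Kf (2 * η) (2 * Real.cosh b * z) := by
  have h := prod_formula _ _ (int_kern (η + μ) z hz) (int_kern (η - μ) z hz) (by fun_prop) (by fun_prop)
  have key : ∀ b : ℝ, (∫ a : ℝ, Complex.exp (-z * Complex.cosh (a + b : ℝ) + Complex.I * (η + μ : ℝ) * (a + b : ℝ)) *
      Complex.exp (-z * Complex.cosh (a - b : ℝ) + Complex.I * (η - μ : ℝ) * (a - b : ℝ))) =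
      Complex.exp (2 * Complex.I * μ * b) * Kf (2 * η) (2 * Real.cosh b * z) := fun b => by
    rw [Kf, ← integral_const_mul]
    refine integral_congr_ae (Eventually.of_forall fun a => ?_)
    simp only
    rw [← Complex.exp_add, ← Complex.exp_add]
    congr 1
    push_cast
    rw [Complex.cosh_add, Complex.cosh_sub]
    ring
  simp_rw [key] at h
  exact h

theorem int_full_c (w s : ℂ) (hr : 0 < w.re) (hs : 0 < s.re) :
    Integrable (fun a : ℝ => Complex.exp (-w * Complex.exp a + s * a)) := by
  refine (int_full w.re s.re hr hs).mono' (by apply Continuous.aestronglyMeasurable; fun_prop) (Eventually.of_forall fun a => ?_)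
  rw [Complex.norm_exp, ← Complex.ofReal_exp]
  simp [-Complex.ofReal_exp]

theorem int_full_cval (w : ℂ) (s : ℂ) (hr : 0 < w.re) (hs : 0 < s.re) :
    ∫ a : ℝ, Complex.exp (-w * Complex.exp a + s * a) = w ^ (-s) * Complex.Gamma s := by
  have hopen : IsOpen {w : ℂ | 0 < w.re} := isOpen_lt continuous_const Complex.continuous_re
  have hd : DifferentiableOn ℂ (fun w : ℂ => ∫ a : ℝ, Complex.exp (-w * Complex.exp a + s * a)) {w : ℂ | 0 < w.re} := by
    intro w hw
    have hw' : 0 < w.re := hw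
    have hU : {v : ℂ | w.re / 2 < v.re} ∈ 𝓝 w :=
      (isOpen_lt continuous_const Complex.continuous_re).mem_nhds (by simp; linarith)
    refine (hasDerivAt_integral_of_dominated_loc_of_deriv_le (μ := volume)
      (F := fun (w : ℂ) (a : ℝ) => Complex.exp (-w * Complex.exp a + s * a))
      (F' := fun (w : ℂ) (a : ℝ) => Complex.exp (-w * Complex.exp a + s * a) * (-Complex.exp a))
      (bound := fun a => Real.exp (-(w.re/2) * Real.exp a + (s.re + 1) * a)) hU
      (Eventually.of_forall fun w => by apply Continuous.aestronglyMeasurable; fun_prop)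
      (int_full_c w s hw' hs)
      (by apply Continuous.aestronglyMeasurable; fun_prop)
      (Eventually.of_forall fun a v hv => ?_)
      (int_full _ _ (by linarith) (by linarith))
      (Eventually.of_forall fun a v hv => ?_)).2.differentiableAt.differentiableWithinAt
    · have hv' : w.re / 2 < v.re := hv
      rw [norm_mul, norm_neg, Complex.norm_exp, Complex.norm_exp, ← Real.exp_add, ← Complex.ofReal_exp]
      simp [-Complex.ofReal_exp]
      nlinarith [Real.exp_pos a]
    · refine HasDerivAt.cexp ?_
      have h1 : HasDerivAt (fun w : ℂ => -w * Complex.exp a) (-1 * Complex.exp a) v := (hasDerivAt_neg v).mul_const _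
      simpa using h1.add_const (s * a)
  have hd2 : DifferentiableOn ℂ (fun w : ℂ => w ^ (-s) * Complex.Gamma s) {w : ℂ | 0 < w.re} := by
    intro w hw
    exact ((differentiableAt_id.cpow_const (Or.inl hw)).mul_const _).differentiableWithinAt
  have := (hd.analyticOnNhd hopen).eqOn_of_preconnected_of_frequently_eq (hd2.analyticOnNhd hopen)
    (convex_halfSpace_re_gt 0).isPreconnected (z₀ := 1) (by simp) ?_
  · exact this hr
  · have ht : Tendsto (fun n : ℕ => ((1 + 1 / ((n:ℝ) + 1) : ℝ) : ℂ)) atTop (𝓝[≠] 1) := by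
      rw [tendsto_nhdsWithin_iff]
      constructor
      · have := (tendsto_one_div_add_atTop_nhds_zero_nat (𝕜 := ℝ)).const_add 1
        have h3 := (Complex.continuous_ofReal.tendsto _).comp this
        simpa [Function.comp_def] using h3
      · refine Eventually.of_forall fun n => ?_
        simp only [Set.mem_compl_iff, Set.mem_singleton_iff]
        norm_cast
        have : 0 < 1 / ((n:ℝ) + 1) := by positivity
        intro h
        have h' : (1 + 1 / ((n:ℝ) + 1) : ℝ) = 1 := by exact_mod_cast h
        linarith
    refine ht.frequently (Eventually.of_forall fun n => ?_).frequently
    exact int_full_val _ s (by positivity) hs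


noncomputable def Ef (w s : ℂ) : ℂ := ∫ a in Set.Ioi (0:ℝ), Complex.exp (-w * Complex.exp a + s * a)
noncomputable def Sf (w s : ℂ) : ℂ := ∑' m : ℕ, (-w) ^ m / (m.factorial * (s + m))
noncomputable def hf (ν q : ℂ) : ℂ := ∑' k : ℕ, q ^ k / (k.factorial * Complex.Gamma (ν + k + 1))

theorem Ef_int (w s : ℂ) (hw : 0 < w.re) :
    IntegrableOn (fun a : ℝ => Complex.exp (-w * Complex.exp a + s * a)) (Set.Ioi 0) := by
  refine ((int_full w.re (|s.re| + 1) hw (by positivity)).integrableOn).mono'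
    (by apply Continuous.aestronglyMeasurable; fun_prop) ?_
  refine (ae_restrict_mem measurableSet_Ioi).mono fun a ha => ?_
  have ha' : 0 < a := ha
  rw [Complex.norm_exp, ← Complex.ofReal_exp]
  simp [-Complex.ofReal_exp]
  nlinarith [le_abs_self s.re]

theorem Ef_rec (w s : ℂ) (hw : 0 < w.re) : w * Ef w (s + 1) = Complex.exp (-w) + s * Ef w s := by
  have h1 := Ef_int w s hw
  have h2 := Ef_int w (s+1) hw
  have hd : ∀ a : ℝ, HasDerivAt (fun a : ℝ => Complex.exp (-w * Complex.exp a + s * a))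
      (s * Complex.exp (-w * Complex.exp a + s * a) - w * Complex.exp (-w * Complex.exp a + (s+1) * a)) a := fun a => by
    have e1 : HasDerivAt (fun a : ℂ => Complex.exp (-w * Complex.exp a + s * a))
      (Complex.exp (-w * Complex.exp a + s * a) * (-w * Complex.exp a + s * 1)) (a:ℂ) :=
      (((Complex.hasDerivAt_exp (a:ℂ)).const_mul (-w)).add ((hasDerivAt_id (a:ℂ)).const_mul s)).cexp
    convert e1.comp_ofReal using 1
    rw [show (-w * Complex.exp a + (s+1) * a) = (-w * Complex.exp a + s * a) + a by ring,
      Complex.exp_add _ (a:ℂ)]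
    ring
  have hi := (h1.const_mul s).sub (h2.const_mul w)
  have ht := tendsto_zero_of_hasDerivAt_of_integrableOn_Ioi (fun a _ => hd a) hi h1
  have := integral_Ioi_of_hasDerivAt_of_tendsto' (fun a _ => hd a) hi ht
  rw [integral_sub (h1.const_mul s) (h2.const_mul w), integral_const_mul, integral_const_mul] at this
  simp only [Complex.ofReal_zero, Complex.exp_zero, mul_zero, add_zero, mul_one] at this
  rw [Ef, Ef]
  linear_combination -this

theorem exp_summ (w : ℂ) : Summable (fun m : ℕ => ‖w‖ ^ m / m.factorial) := Real.summable_pow_div_factorial _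

theorem Sf_summ (w s : ℂ) (hs : s.im ≠ 0) : Summable (fun m : ℕ => (-w) ^ m / (m.factorial * (s + m))) := by
  refine Summable.of_norm_bounded ((exp_summ w).mul_right (|s.im|⁻¹)) fun m => ?_
  rw [norm_div, norm_mul, norm_pow, norm_neg, Complex.norm_natCast, ← div_div, div_eq_mul_inv _ ‖s + m‖]
  have : |s.im| ≤ ‖s + m‖ := by
    have := Complex.abs_im_le_norm (s + m)
    simpa using this
  have h0 : 0 < |s.im| := abs_pos.2 hs
  gcongr

theorem Sf_rec (w s : ℂ) (hs : s.im ≠ 0) : s * Sf w s = Complex.exp (-w) + w * Sf w (s + 1) := by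
  have hne : ∀ m : ℕ, s + m ≠ 0 := fun m h => hs (by simpa using congrArg Complex.im h)
  have h1 := (Sf_summ w s hs).hasSum.mul_left s
  have h2 := (Sf_summ w (s+1) (by simpa using hs)).hasSum.mul_left w
  have h3 : HasSum (fun m : ℕ => (-w) ^ m / (m.factorial : ℂ)) (Complex.exp (-w)) := by
    rw [Complex.exp_eq_exp_ℂ]
    exact NormedSpace.exp_series_hasSum_exp' (𝕂 := ℂ) (-w) |>.congr_fun fun m => by simp [div_eq_inv_mul]
  have h4 := h3.sub h1
  rw [← hasSum_nat_add_iff' 1] at h4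
  have h5 := h4.add h2
  have h6 : ∀ m : ℕ, (-w) ^ (m+1) / ((m+1).factorial : ℂ) - s * ((-w) ^ (m+1) / ((m+1).factorial * (s + (m+1 : ℕ)))) +
     w * ((-w) ^ m / (m.factorial * (s + 1 + m))) = 0 := fun m => by
    have e1 := hne (m+1)
    have e2 : (s + 1 + m) ≠ 0 := by have := hne (m+1); push_cast at this; rwa [add_assoc, add_comm 1 (m:ℂ)]
    have e3 : (m.factorial : ℂ) ≠ 0 := by exact_mod_cast m.factorial_ne_zero
    have e4 : (m : ℂ) + 1 ≠ 0 := by exact_mod_cast m.succ_ne_zero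
    rw [Nat.factorial_succ]
    push_cast at e1 ⊢
    have e5 : s + (m + 1) = s + 1 + m := by ring
    rw [e5]
    field_simp
    ring
  simp only [h6] at h5
  have := h5.unique hasSum_zero
  simp only [Finset.sum_range_one, pow_zero, Nat.factorial_zero, Nat.cast_one, Nat.cast_zero, add_zero, one_mul, div_one] at this
  have hs0 : s ≠ 0 := by simpa using hne 0
  rw [mul_one_div_cancel hs0] at this
  rw [Sf, Sf]
  linear_combination -this

theorem Ef_base (w s : ℂ) (hw : 0 < w.re) (hs : 0 < s.re) :
    Ef w s = w ^ (-s) * Complex.Gamma s - Sf w s := by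
  rw [← int_full_cval w s hw hs, Ef]
  have hI := int_full_c w s hw hs
  rw [← intervalIntegral.integral_Iic_add_Ioi hI.integrableOn hI.integrableOn (b := 0)]
  suffices h : ∫ a in Set.Iic (0:ℝ), Complex.exp (-w * Complex.exp a + s * a) = Sf w s by rw [h]; ring
  have hm : ∀ m : ℕ, 0 < (s + m).re := fun m => by simp; positivity
  have hF : ∀ m : ℕ, IntegrableOn (fun a : ℝ => ((-w) ^ m / (m.factorial : ℂ)) * Complex.exp ((s + m) * a)) (Set.Iic 0) :=
    fun m => (integrableOn_exp_mul_complex_Iic (hm m) 0).const_mul _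
  have hsum := hasSum_integral_of_summable_integral_norm hF ?_
  · rw [Sf]
    have e1 : ∀ m : ℕ, ∫ a in Set.Iic (0:ℝ), ((-w) ^ m / (m.factorial : ℂ)) * Complex.exp ((s + m) * a) =
       (-w) ^ m / (m.factorial * (s + m)) := fun m => by
      rw [integral_const_mul, integral_exp_mul_complex_Iic (hm m)]
      simp only [Complex.ofReal_zero, mul_zero, Complex.exp_zero]
      rw [div_mul_div_comm, mul_one]
    simp only [e1] at hsum
    rw [hsum.tsum_eq]
    refine integral_congr_ae (Eventually.of_forall fun a => ?_)
    simp only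
    rw [Complex.exp_add, Complex.exp_eq_exp_ℂ, ← Complex.exp_eq_exp_ℂ]
    have h3 : HasSum (fun m : ℕ => (-w * Complex.exp a) ^ m / (m.factorial : ℂ)) (Complex.exp (-w * Complex.exp a)) := by
      rw [Complex.exp_eq_exp_ℂ]
      exact NormedSpace.exp_series_hasSum_exp' (𝕂 := ℂ) _ |>.congr_fun fun m => by simp [div_eq_inv_mul]
    rw [← (h3.mul_right (Complex.exp (s * a))).tsum_eq]
    refine tsum_congr fun m => ?_
    rw [add_mul, Complex.exp_add, mul_pow, ← Complex.exp_nat_mul]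
    ring
  · refine Summable.of_nonneg_of_le (fun m => by positivity) (fun m => ?_)
      ((exp_summ w).mul_right (∫ a in Set.Iic (0:ℝ), ‖Complex.exp (s * a)‖))
    rw [← integral_const_mul]
    refine setIntegral_mono_on (hF m).norm ((integrableOn_exp_mul_complex_Iic hs 0).norm.const_mul _) measurableSet_Iic
      fun a ha => ?_
    have ha' : a ≤ 0 := ha
    rw [norm_mul, norm_div, norm_pow, norm_neg, Complex.norm_natCast, Complex.norm_exp, Complex.norm_exp]
    refine mul_le_mul_of_nonneg_left (Real.exp_le_exp.2 ?_) (by positivity)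
    simp
    nlinarith [(Nat.cast_nonneg m : (0:ℝ) ≤ m)]

theorem Ef_val (w ν : ℂ) (hw : 0 < w.re) (h0 : ν.re = 0) (h1 : ν.im ≠ 0) (k : ℕ) :
    Ef w (ν + 1 - k) = w ^ (-(ν + 1 - k)) * Complex.Gamma (ν + 1 - k) - Sf w (ν + 1 - k) := by
  have hw0 : w ≠ 0 := fun h => by simp [h] at hw
  induction k with
  | zero => exact Ef_base w _ hw (by simp [h0])
  | succ k ih =>
    set s : ℂ := ν + 1 - (k+1 : ℕ) with hs
    have hs1 : ν + 1 - k = s + 1 := by rw [hs]; push_cast; ring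
    have him : s.im ≠ 0 := by rw [hs]; simpa using h1
    have hs0 : s ≠ 0 := fun h => him (by simp [h])
    rw [hs1] at ih
    have r1 := Ef_rec w s hw
    have r2 := Sf_rec w s him
    rw [ih, Complex.Gamma_add_one s hs0] at r1
    have r3 : w * w ^ (-(s+1)) = w ^ (-s) := by
      rw [show -s = -(s+1) + 1 by ring, Complex.cpow_add _ _ hw0, Complex.cpow_one, mul_comm]
    apply mul_left_cancel₀ hs0
    linear_combination -r1 + s * Complex.Gamma s * r3 + r2


theorem sin_ne (ν : ℂ) (h1 : ν.im ≠ 0) : Complex.sin (Real.pi * ν) ≠ 0 := by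
  rw [Complex.sin_ne_zero_iff]
  intro k hk
  have := congrArg Complex.im hk
  simp at this
  exact h1 this

theorem Gamma_refl (ν : ℂ) (h1 : ν.im ≠ 0) (k : ℕ) :
    Complex.Gamma (ν - k) = (-1) ^ k * (Real.pi / Complex.sin (Real.pi * ν)) / Complex.Gamma (-ν + k + 1) := by
  have h := Complex.Gamma_mul_Gamma_one_sub (ν - k)
  have hne : Complex.Gamma (-ν + k + 1) ≠ 0 := by
    apply Complex.Gamma_ne_zero
    intro m hm
    have := congrArg Complex.im hm
    simp at this
    exact h1 this
  rw [show 1 - (ν - k) = -ν + k + 1 by ring, mul_sub, mul_comm (Real.pi : ℂ) (k:ℂ), Complex.sin_antiperiodic.sub_nat_mul_eq] at h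
  rw [eq_div_iff hne, h]
  have hp : ((-1:ℂ) ^ k) * (-1) ^ k = 1 := by rw [← mul_pow]; simp
  have hs := sin_ne ν h1
  field_simp
  rw [pow_two, hp]

theorem dbl_summ (w ν : ℂ) (h1 : ν.im ≠ 0) :
    Summable (fun p : ℕ × ℕ => (-w) ^ p.1 / (p.1.factorial : ℂ) * ((-w) ^ p.2 / (p.2.factorial * (ν - p.1 + p.2)))) := by
  have hb := ((exp_summ w).mul_of_nonneg (exp_summ w) (fun m => by positivity) (fun m => by positivity)).mul_right (|ν.im|⁻¹)
  refine Summable.of_norm_bounded hb fun p => ?_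
  rw [norm_mul, norm_div, norm_div, norm_mul, norm_pow, norm_pow, norm_neg, Complex.norm_natCast, Complex.norm_natCast,
    ← div_div, div_eq_mul_inv _ ‖ν - p.1 + p.2‖, mul_assoc (_ / _)]
  have : |ν.im| ≤ ‖ν - p.1 + p.2‖ := by
    have := Complex.abs_im_le_norm (ν - p.1 + p.2)
    simpa using this
  have h0 : 0 < |ν.im| := abs_pos.2 h1
  gcongr

/-- half-line integral -/
theorem half_val (w : ℂ) (μ : ℝ) (hw : 0 < w.re) (hμ : μ ≠ 0) :
    ∫ a in Set.Ioi (0:ℝ), Complex.exp (-(2 * w) * Complex.cosh a + Complex.I * μ * a) =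
     Real.pi / Complex.sin (Real.pi * (Complex.I * μ)) * (w ^ (-(Complex.I * μ)) * hf (-(Complex.I * μ)) (w ^ 2)) -
     ∑' k : ℕ, ∑' m : ℕ, (-w) ^ k / (k.factorial : ℂ) * ((-w) ^ m / (m.factorial * (Complex.I * μ - k + m))) := by
  have hw0 : w ≠ 0 := fun h => by simp [h] at hw
  set ν : ℂ := Complex.I * μ with hν
  have h0 : ν.re = 0 := by simp [hν]
  have h1 : ν.im ≠ 0 := by simpa [hν] using hμ
  have hF : ∀ k : ℕ, IntegrableOn (fun a : ℝ => ((-w) ^ k / (k.factorial : ℂ)) * Complex.exp (-w * Complex.exp a + (ν - k) * a)) (Set.Ioi 0) :=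
    fun k => (Ef_int w _ hw).const_mul _
  have hsum := hasSum_integral_of_summable_integral_norm hF ?_
  · have e1 : ∀ a : ℝ, ∑' k : ℕ, ((-w) ^ k / (k.factorial : ℂ)) * Complex.exp (-w * Complex.exp a + (ν - k) * a) =
        Complex.exp (-(2 * w) * Complex.cosh a + ν * a) := fun a => by
      have h3 : HasSum (fun m : ℕ => (-w * Complex.exp (-a)) ^ m / (m.factorial : ℂ)) (Complex.exp (-w * Complex.exp (-a))) := by
        rw [Complex.exp_eq_exp_ℂ]
        exact NormedSpace.exp_series_hasSum_exp' (𝕂 := ℂ) _ |>.congr_fun fun m => by simp [div_eq_inv_mul]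
      have e2 : -(2 * w) * Complex.cosh a + ν * a = -w * Complex.exp (-a) + (-w * Complex.exp a + ν * a) := by
        rw [Complex.cosh]; ring
      rw [e2, Complex.exp_add, ← (h3.mul_right _).tsum_eq]
      refine tsum_congr fun m => ?_
      rw [show -w * Complex.exp a + (ν - m) * a = (m : ℂ) * (-a) + (-w * Complex.exp a + ν * a) by ring,
        Complex.exp_add _ (-w * Complex.exp a + ν * a), mul_pow, ← Complex.exp_nat_mul]
      ring
    simp only [e1] at hsum
    have hS : HasSum (fun k : ℕ => ∑' m : ℕ, (-w) ^ k / (k.factorial : ℂ) * ((-w) ^ m / (m.factorial * (ν - k + m))))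
       (∑' k : ℕ, ∑' m : ℕ, (-w) ^ k / (k.factorial : ℂ) * ((-w) ^ m / (m.factorial * (ν - k + m)))) := by
      apply Summable.hasSum
      have : Summable (fun p : ℕ × ℕ => (-w) ^ p.1 / (p.1.factorial : ℂ) * ((-w) ^ p.2 / (p.2.factorial * (ν - p.1 + p.2)))) :=
        dbl_summ w ν h1
      exact this.prod
    have h2 := hsum.add hS
    have e3 : ∀ k : ℕ, (∫ a in Set.Ioi (0:ℝ), ((-w) ^ k / (k.factorial : ℂ)) * Complex.exp (-w * Complex.exp a + (ν - k) * a)) +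
       ∑' m : ℕ, (-w) ^ k / (k.factorial : ℂ) * ((-w) ^ m / (m.factorial * (ν - k + m))) =
       (Real.pi / Complex.sin (Real.pi * ν) * w ^ (-ν)) * ((w ^ 2) ^ k / (k.factorial * Complex.Gamma (-ν + k + 1))) := fun k => by
      rw [integral_const_mul, tsum_mul_left]
      have := Ef_val w ν hw h0 h1 (k+1)
      rw [show ν + 1 - (k+1 : ℕ) = ν - k by push_cast; ring, Gamma_refl ν h1] at this
      change _ * Ef w (ν - k) + _ * Sf w (ν - k) = _
      rw [this, show -(ν - k) = -ν + k by ring, Complex.cpow_add _ _ hw0, Complex.cpow_natCast]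
      rw [neg_pow w k, ← pow_mul, mul_comm 2 k, pow_mul]
      have hp : ((-1:ℂ) ^ k) * (-1) ^ k = 1 := by rw [← mul_pow]; simp
      linear_combination (w ^ k / (k.factorial : ℂ) * (w ^ (-ν) * w ^ k * ((Real.pi / Complex.sin (Real.pi * ν)) / Complex.Gamma (-ν + k + 1)))) * hp
    simp only [e3] at h2
    have h3 := h2.tsum_eq
    rw [tsum_mul_left] at h3
    rw [hf]
    linear_combination -h3
  · refine Summable.of_nonneg_of_le (fun m => by positivity) (fun k => ?_)
      ((exp_summ w).mul_right (∫ a in Set.Ioi (0:ℝ), ‖Complex.exp (-w * Complex.exp a + ν * a)‖))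
    rw [← integral_const_mul]
    refine setIntegral_mono_on (hF k).norm ((Ef_int w ν hw).norm.const_mul _) measurableSet_Ioi
      fun a ha => ?_
    have ha' : 0 < a := ha
    rw [norm_mul, norm_div, norm_pow, norm_neg, Complex.norm_natCast, Complex.norm_exp, Complex.norm_exp]
    refine mul_le_mul_of_nonneg_left (Real.exp_le_exp.2 ?_) (by positivity)
    simp
    nlinarith [(Nat.cast_nonneg k : (0:ℝ) ≤ k)]


noncomputable def Bf (μ : ℝ) (v : ℂ) : ℂ :=
  Real.pi / Complex.sin (Real.pi * (Complex.I * μ)) *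
    ((v / 2) ^ (-(Complex.I * μ)) * hf (-(Complex.I * μ)) ((v / 2) ^ 2) -
      (v / 2) ^ (Complex.I * μ) * hf (Complex.I * μ) ((v / 2) ^ 2))

theorem Kf_split (μ : ℝ) (z : ℂ) (hz : 0 < z.re) : Kf μ z =
    (∫ a in Set.Ioi (0:ℝ), Complex.exp (-z * Complex.cosh a + Complex.I * μ * a)) +
    ∫ a in Set.Ioi (0:ℝ), Complex.exp (-z * Complex.cosh a + Complex.I * (-μ : ℝ) * a) := by
  have hI := int_kern μ z hz
  rw [Kf, ← intervalIntegral.integral_Iic_add_Ioi hI.integrableOn hI.integrableOn (b := 0), add_comm]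
  congr 1
  have := integral_comp_neg_Ioi (0:ℝ) (fun a : ℝ => Complex.exp (-z * Complex.cosh a + Complex.I * μ * a))
  rw [neg_zero] at this
  rw [← this]
  refine integral_congr_ae (Eventually.of_forall fun a => ?_)
  simp

theorem Kf_val (μ : ℝ) (z : ℂ) (hz : 0 < z.re) (hμ : μ ≠ 0) : Kf μ z = Bf μ z := by
  rw [Kf_split μ z hz]
  have hw : 0 < (z/2).re := by simpa using hz
  have a1 := half_val (z/2) μ hw hμ
  have a2 := half_val (z/2) (-μ) hw (neg_ne_zero.2 hμ)
  rw [mul_div_cancel₀ z two_ne_zero] at a1 a2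
  rw [a1, a2]
  have hsum := dbl_summ (z/2) (Complex.I * μ) (by simpa using hμ)
  have hD : ∑' k : ℕ, ∑' m : ℕ, (-(z/2)) ^ k / (k.factorial : ℂ) * ((-(z/2)) ^ m / (m.factorial * (Complex.I * (-μ:ℝ) - k + m))) =
     - ∑' k : ℕ, ∑' m : ℕ, (-(z/2)) ^ k / (k.factorial : ℂ) * ((-(z/2)) ^ m / (m.factorial * (Complex.I * μ - k + m))) := by
    have hc := Summable.tsum_comm (f := fun (k m : ℕ) => (-(z/2)) ^ k / (k.factorial : ℂ) * ((-(z/2)) ^ m / (m.factorial * (Complex.I * μ - k + m)))) hsum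
    rw [← hc, ← tsum_neg]
    refine tsum_congr fun k => ?_
    rw [← tsum_neg]
    refine tsum_congr fun m => ?_
    rw [show Complex.I * (-μ:ℝ) - k + m = -(Complex.I * μ - m + k) by push_cast; ring]
    rw [mul_neg, div_neg, mul_neg, div_mul_div_comm, div_mul_div_comm]
    congr 2
    · ring
    · ring
  rw [hD, Bf]
  push_cast
  rw [mul_neg, neg_neg, mul_neg, Complex.sin_neg, div_neg]
  ring


theorem inv_sinh_tendsto (c : ℝ) (hc : 0 < c) : Tendsto (fun a : ℝ => c / Real.sinh a) atTop (𝓝 0) := by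
  refine squeeze_zero' ((eventually_gt_atTop 0).mono fun a ha => ?_) ((eventually_gt_atTop 0).mono fun a ha => ?_)
    (tendsto_const_nhds.div_atTop tendsto_id : Tendsto (fun a : ℝ => c / a) atTop (𝓝 0))
  · have := Real.sinh_pos_iff.2 ha
    positivity
  · have := Real.self_le_sinh_iff.2 ha.le
    gcongr

theorem tail_bound (η : ℝ) (hη : |η| ≤ 1) (w : ℂ) (hw : 0 < w.re) (A : ℝ) (hA : 0 < A) :
    ‖∫ a in Set.Ioi A, Complex.exp (-w * Complex.cosh a + Complex.I * η * a)‖ ≤ 3 / (‖w‖ * A) := by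
  have hw0 : w ≠ 0 := fun h => by simp [h] at hw
  have hnw : 0 < ‖w‖ := norm_pos_iff.2 hw0
  have hsA := Real.sinh_pos_iff.2 hA
  have hI := (int_kern η w hw).integrableOn (s := Set.Ioi A)
  set f : ℝ → ℂ := fun a => Complex.exp (-w * Complex.cosh a + Complex.I * η * a) with hf
  have hfn : ∀ a, ‖f a‖ ≤ 1 := fun a => by
    rw [hf]; simp only
    rw [norm_kern, Real.exp_le_one_iff]
    nlinarith [Real.cosh_pos a]
  set G : ℝ → ℂ := fun a => f a / (w * Complex.sinh a) with hG
  set g1 : ℝ → ℂ := fun a => f a * (Complex.I * η * Complex.sinh a - Complex.cosh a) / (w * Complex.sinh a ^ 2) with hg1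
  have hsn : ∀ a : ℝ, 0 < a → Complex.sinh a ≠ 0 := fun a ha => by
    rw [← Complex.ofReal_sinh]; exact_mod_cast (Real.sinh_pos_iff.2 ha).ne'
  have hd : ∀ a ∈ Set.Ici A, HasDerivAt G (g1 a - f a) a := fun a ha => by
    have ha0 : 0 < a := lt_of_lt_of_le hA ha
    have e1 : HasDerivAt (fun a : ℂ => Complex.exp (-w * Complex.cosh a + Complex.I * η * a))
      (Complex.exp (-w * Complex.cosh a + Complex.I * η * a) * (-w * Complex.sinh a + Complex.I * η * 1)) (a:ℂ) :=
      (((Complex.hasDerivAt_cosh (a:ℂ)).const_mul (-w)).add ((hasDerivAt_id (a:ℂ)).const_mul (Complex.I * η))).cexp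
    have e2 : HasDerivAt (fun a : ℂ => w * Complex.sinh a) (w * Complex.cosh a) (a:ℂ) :=
      (Complex.hasDerivAt_sinh (a:ℂ)).const_mul w
    have hs0 := hsn a ha0
    have e3 := (e1.div e2 (mul_ne_zero hw0 hs0)).comp_ofReal
    refine HasDerivAt.congr_deriv (f := G) e3 ?_
    rw [hg1, hf]
    simp only
    field_simp
    ring
  have hgr : ∀ a ∈ Set.Ici A, HasDerivAt (fun a : ℝ => -(2 / ‖w‖ / Real.sinh a)) (2 / ‖w‖ * (Real.cosh a / Real.sinh a ^ 2)) a := fun a ha => by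
    have ha0 : 0 < a := lt_of_lt_of_le hA ha
    have hs := (Real.sinh_pos_iff.2 ha0).ne'
    have := ((hasDerivAt_const a (2 / ‖w‖)).div (Real.hasDerivAt_sinh a) hs).neg
    refine HasDerivAt.congr_deriv (f := fun a : ℝ => -(2 / ‖w‖ / Real.sinh a)) this ?_
    field_simp
    ring
  have hgn : ∀ a ∈ Set.Ioi A, ‖g1 a‖ ≤ 2 / ‖w‖ * (Real.cosh a / Real.sinh a ^ 2) := fun a ha => by
    have ha0 : 0 < a := hA.trans ha
    have hs := (Real.sinh_pos_iff.2 ha0)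
    have e1 : ‖Complex.I * η * Complex.sinh a - Complex.cosh a‖ ≤ 2 * Real.cosh a := by
      rw [← Complex.ofReal_sinh, ← Complex.ofReal_cosh]
      refine (norm_sub_le _ _).trans ?_
      rw [norm_mul, norm_mul, Complex.norm_I, Complex.norm_real, Complex.norm_real, Complex.norm_real, Real.norm_eq_abs,
        Real.norm_eq_abs, Real.norm_eq_abs, abs_of_pos hs, abs_of_pos (Real.cosh_pos a)]
      nlinarith [Real.sinh_lt_cosh a]
    have e2 : ‖w * Complex.sinh a ^ 2‖ = ‖w‖ * Real.sinh a ^ 2 := by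
      rw [← Complex.ofReal_sinh, norm_mul, norm_pow, Complex.norm_real, Real.norm_eq_abs, abs_of_pos hs]
    rw [hg1]; simp only
    rw [norm_div, norm_mul, e2]
    calc _ ≤ 1 * (2 * Real.cosh a) / (‖w‖ * Real.sinh a ^ 2) := by gcongr; exact hfn a
      _ = _ := by field_simp
  have hlim : Tendsto (fun a : ℝ => -(2 / ‖w‖ / Real.sinh a)) atTop (𝓝 0) := by
    simpa using (inv_sinh_tendsto (2 / ‖w‖) (by positivity)).neg
  have hpos : ∀ a ∈ Set.Ioi A, 0 ≤ 2 / ‖w‖ * (Real.cosh a / Real.sinh a ^ 2) := fun a _ => by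
    have := Real.cosh_pos a; positivity
  have hbI := integrableOn_Ioi_deriv_of_nonneg' hgr hpos hlim
  have hbv := integral_Ioi_of_hasDerivAt_of_nonneg' hgr hpos hlim
  have hg1I : IntegrableOn g1 (Set.Ioi A) := by
    refine hbI.mono' ?_ ((ae_restrict_mem measurableSet_Ioi).mono hgn)
    refine ContinuousOn.aestronglyMeasurable (fun a ha => ContinuousAt.continuousWithinAt ?_) measurableSet_Ioi
    have hs0 := hsn a (hA.trans ha)
    rw [hg1, hf]
    refine ContinuousAt.div (by fun_prop) (by fun_prop) (mul_ne_zero hw0 (pow_ne_zero 2 hs0))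
  have hGt : Tendsto G atTop (𝓝 0) := by
    refine squeeze_zero_norm' ((eventually_gt_atTop 0).mono fun a ha => ?_) (inv_sinh_tendsto (1 / ‖w‖) (by positivity))
    have hs := (Real.sinh_pos_iff.2 ha)
    rw [hG]; simp only
    rw [norm_div, norm_mul, ← Complex.ofReal_sinh, Complex.norm_real, Real.norm_eq_abs, abs_of_pos hs, div_div]
    gcongr; exact hfn a
  have hfin := integral_Ioi_of_hasDerivAt_of_tendsto' hd (hg1I.sub hI) hGt
  rw [integral_sub hg1I hI] at hfin
  have hval : ∫ a in Set.Ioi A, f a = (∫ a in Set.Ioi A, g1 a) + G A := by linear_combination -hfin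
  rw [hval]
  have b1 : ‖∫ a in Set.Ioi A, g1 a‖ ≤ 2 / ‖w‖ / Real.sinh A := by
    refine (norm_integral_le_of_norm_le hbI ((ae_restrict_mem measurableSet_Ioi).mono hgn)).trans ?_
    rw [hbv]; simp
  have b2 : ‖G A‖ ≤ 1 / ‖w‖ / Real.sinh A := by
    rw [hG]; simp only
    rw [norm_div, norm_mul, ← Complex.ofReal_sinh, Complex.norm_real, Real.norm_eq_abs, abs_of_pos hsA, div_div]
    gcongr; exact hfn A
  calc _ ≤ 2 / ‖w‖ / Real.sinh A + 1 / ‖w‖ / Real.sinh A := (norm_add_le _ _).trans (add_le_add b1 b2)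
    _ = 3 / (‖w‖ * Real.sinh A) := by field_simp; norm_num
    _ ≤ _ := by have := Real.self_le_sinh_iff.2 hA.le; gcongr

theorem half_bound (η : ℝ) (hη : |η| ≤ 1) (w : ℂ) (hw : 0 < w.re) :
    ‖∫ a in Set.Ioi (0:ℝ), Complex.exp (-w * Complex.cosh a + Complex.I * η * a)‖ ≤ 4 / Real.sqrt ‖w‖ := by
  have hw0 : w ≠ 0 := fun h => by simp [h] at hw
  have hnw : 0 < ‖w‖ := norm_pos_iff.2 hw0
  have hsq : 0 < Real.sqrt ‖w‖ := Real.sqrt_pos.2 hnw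
  set A := 1 / Real.sqrt ‖w‖ with hAdef
  have hA : 0 < A := by positivity
  have hI := (int_kern η w hw)
  rw [← Set.Ioc_union_Ioi_eq_Ioi hA.le, setIntegral_union (Set.Ioc_disjoint_Ioi le_rfl) measurableSet_Ioi hI.integrableOn hI.integrableOn]
  have h1 := tail_bound η hη w hw A hA
  have h2 : ‖∫ a in Set.Ioc (0:ℝ) A, Complex.exp (-w * Complex.cosh a + Complex.I * η * a)‖ ≤ 1 * volume.real (Set.Ioc 0 A) :=
    norm_setIntegral_le_of_norm_le_const (by simp) (fun a _ => by
      rw [norm_kern, Real.exp_le_one_iff]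
      nlinarith [Real.cosh_pos a])
  rw [one_mul, Real.volume_real_Ioc_of_le hA.le, sub_zero] at h2
  refine (norm_add_le _ _).trans ((add_le_add h2 h1).trans (le_of_eq ?_))
  rw [hAdef]
  nth_rewrite 2 [← Real.mul_self_sqrt hnw.le]
  field_simp
  norm_num

theorem Kf_bound (η : ℝ) (hη : |η| ≤ 1) (w : ℂ) (hw : 0 < w.re) : ‖Kf η w‖ ≤ 8 / Real.sqrt ‖w‖ := by
  rw [Kf_split η w hw]
  refine (norm_add_le _ _).trans ((add_le_add (half_bound η hη w hw) (half_bound (-η) (by simpa using hη) w hw)).trans (le_of_eq ?_))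
  ring

/-- joint continuity of `hf` along imaginary orders -/
theorem Gamma_lower (t : ℝ) (k : ℕ) :
    ‖(Complex.Gamma (Complex.I * t + k + 1))⁻¹‖ ≤ ‖(Complex.Gamma (Complex.I * t + 1))⁻¹‖ / k.factorial := by
  induction k with
  | zero => simp
  | succ k ih =>
    have hne : (Complex.I * t + k + 1) ≠ 0 := fun h => by
      have := congrArg Complex.re h
      simp at this
      have h2 : (0:ℝ) < k + 1 := by positivity
      linarith
    have e : Complex.I * t + (k+1 : ℕ) + 1 = (Complex.I * t + k + 1) + 1 := by push_cast; ring
    rw [e, Complex.Gamma_add_one _ hne, mul_inv, norm_mul, Nat.factorial_succ]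
    have h2 : ((k:ℝ) + 1) ≤ ‖Complex.I * t + k + 1‖ := by
      have := (le_abs_self _).trans (Complex.abs_re_le_norm (Complex.I * t + k + 1))
      simpa using this
    rw [norm_inv]
    push_cast
    calc _ ≤ ((k:ℝ)+1)⁻¹ * (‖(Complex.Gamma (Complex.I * t + 1))⁻¹‖ / k.factorial) := by gcongr
      _ = _ := by field_simp

theorem hf_cont : Continuous (fun p : ℝ × ℂ => hf (Complex.I * p.1) p.2) := by
  have hG : Continuous (fun s : ℂ => (Complex.Gamma s)⁻¹) := Complex.differentiable_one_div_Gamma.continuous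
  rw [continuous_iff_continuousAt]
  intro p
  set R : ℝ := ‖p‖ + 1
  have hK : IsCompact (Metric.closedBall (0:ℝ) R) := isCompact_closedBall _ _
  obtain ⟨C, hC⟩ := hK.exists_bound_of_continuousOn
    (f := fun t : ℝ => (Complex.Gamma (Complex.I * t + 1))⁻¹) (by
      apply Continuous.continuousOn; exact hG.comp (by fun_prop))
  have hcont : ContinuousOn (fun p : ℝ × ℂ => hf (Complex.I * p.1) p.2) (Metric.ball 0 R) := by
    unfold hf
    refine continuousOn_tsum (u := fun k : ℕ => C * (R ^ k / k.factorial)) (fun k => ?_) ?_ ?_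
    · apply Continuous.continuousOn
      simp_rw [div_eq_mul_inv, mul_inv]
      have : Continuous (fun x : ℝ × ℂ => (Complex.Gamma (Complex.I * x.1 + k + 1))⁻¹) := hG.comp (by fun_prop)
      fun_prop
    · exact (Real.summable_pow_div_factorial R).mul_left C
    · intro k q hq
      have hq' : ‖q‖ < R := by simpa using hq
      have hq1 : ‖q.1‖ ≤ R := (norm_fst_le q).trans hq'.le
      have hq2 : ‖q.2‖ ≤ R := (norm_snd_le q).trans hq'.le
      rw [div_eq_mul_inv, mul_inv, norm_mul, norm_mul, norm_pow, norm_inv, Complex.norm_natCast]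
      have h1 := Gamma_lower q.1 k
      have h2 := hC q.1 (by simpa using hq1)
      have hC0 : 0 ≤ C := (norm_nonneg _).trans h2
      have hf1 : (1:ℝ) ≤ k.factorial := by exact_mod_cast k.factorial_pos
      calc _ ≤ R ^ k * ((k.factorial : ℝ)⁻¹ * (C / 1)) := by
            gcongr
            exact h1.trans (by gcongr)
        _ = _ := by ring
  exact hcont.continuousAt (Metric.isOpen_ball.mem_nhds (by simp [R]))


theorem inv_sqrt_cosh : Integrable (fun b : ℝ => (Real.sqrt (Real.cosh b))⁻¹) ∧
    ∫ b : ℝ, (Real.sqrt (Real.cosh b))⁻¹ = Real.Gamma (1/4) ^ 2 / Real.sqrt (2 * Real.pi) := by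
  have hi := int_full_c 1 (1/4) (by simp) (by norm_num)
  have h := prod_formula _ _ hi hi (by fun_prop) (by fun_prop)
  have hv := int_full_val 1 (1/4) one_pos (by norm_num)
  simp only [Complex.ofReal_one, Complex.one_cpow, one_mul] at hv
  have key : ∀ b : ℝ, (∫ a : ℝ, Complex.exp (-1 * Complex.exp (a + b : ℝ) + 1/4 * (a + b : ℝ)) *
      Complex.exp (-1 * Complex.exp (a - b : ℝ) + 1/4 * (a - b : ℝ))) =
      ((Real.sqrt Real.pi / Real.sqrt 2 * (Real.sqrt (Real.cosh b))⁻¹ : ℝ) : ℂ) := fun b => by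
    have hc := Real.cosh_pos b
    have h1 := int_full_val (2 * Real.cosh b) (1/2) (by positivity) (by norm_num)
    rw [Complex.Gamma_one_half_eq] at h1
    have e1 : (((2 * Real.cosh b : ℝ) : ℂ)) ^ (-(1/2:ℂ)) = (((Real.sqrt (2 * Real.cosh b))⁻¹ : ℝ) : ℂ) := by
      rw [Real.sqrt_eq_rpow, ← Real.rpow_neg (by positivity), Complex.ofReal_cpow (by positivity)]
      simp
    have e2 : ((Real.pi : ℂ)) ^ (1/2:ℂ) = ((Real.sqrt Real.pi : ℝ) : ℂ) := by
      rw [Real.sqrt_eq_rpow, Complex.ofReal_cpow Real.pi_pos.le]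
      simp
    rw [e1, e2, ← Complex.ofReal_mul] at h1
    have e3 : Real.sqrt Real.pi / Real.sqrt 2 * (Real.sqrt (Real.cosh b))⁻¹ = (Real.sqrt (2 * Real.cosh b))⁻¹ * Real.sqrt Real.pi := by
      rw [Real.sqrt_mul (by norm_num), mul_inv]; ring
    rw [e3, ← h1]
    refine integral_congr_ae (Eventually.of_forall fun a => ?_)
    simp only
    rw [← Complex.exp_add]
    congr 1
    push_cast
    rw [sub_eq_add_neg (a:ℂ), Complex.exp_add, Complex.exp_add, Complex.cosh]
    ring
  simp_rw [key] at h
  have hsp : 0 < Real.sqrt Real.pi / Real.sqrt 2 := by have := Real.pi_pos; positivity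
  constructor
  · have h1 := h.1.re
    have h2 := h1.const_mul (Real.sqrt Real.pi / Real.sqrt 2)⁻¹
    refine h2.congr (Eventually.of_forall fun b => ?_)
    simp only [RCLike.re_to_complex, Complex.ofReal_re]
    rw [inv_mul_cancel_left₀ hsp.ne']
  · have h2 := h.2
    rw [hv, integral_complex_ofReal, show (1/4:ℂ) = ((1/4 : ℝ) : ℂ) by norm_num, Complex.Gamma_ofReal] at h2
    have h3 : Real.Gamma (1/4) * Real.Gamma (1/4) = 2 * ∫ b : ℝ, Real.sqrt Real.pi / Real.sqrt 2 * (Real.sqrt (Real.cosh b))⁻¹ := by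
      exact_mod_cast h2
    rw [integral_const_mul] at h3
    rw [pow_two, h3, Real.sqrt_mul (by norm_num)]
    have : 0 < Real.sqrt Real.pi := Real.sqrt_pos.2 Real.pi_pos
    have h22 : Real.sqrt 2 * Real.sqrt 2 = 2 := Real.mul_self_sqrt (by norm_num)
    field_simp
    rw [Real.sq_sqrt (by norm_num)]

theorem Bf_cont (μ : ℝ) (v : ℂ) (hv : v ∈ Complex.slitPlane) : ContinuousAt (Bf μ) v := by
  have hv2 : v / 2 ∈ Complex.slitPlane := by
    rcases hv with h | h
    · left; simpa using h
    · right; simpa using h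
  have hc : ∀ t : ℝ, Continuous (fun v : ℂ => hf (Complex.I * t) ((v/2)^2)) := fun t => by
    have := hf_cont.comp (f := fun v : ℂ => (t, (v/2)^2)) (by fun_prop)
    exact this
  have hc1 := hc μ
  have hc2 := hc (-μ)
  push_cast at hc2
  simp only [mul_neg] at hc2
  have hd : ContinuousAt (fun v : ℂ => v / 2) v := by fun_prop
  have p1 : ContinuousAt (fun v : ℂ => (v/2) ^ (-(Complex.I * μ))) v := hd.cpow continuousAt_const hv2
  have p2 : ContinuousAt (fun v : ℂ => (v/2) ^ ((Complex.I * μ))) v := hd.cpow continuousAt_const hv2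
  exact continuousAt_const.mul ((p1.mul hc2.continuousAt).sub (p2.mul hc1.continuousAt))

theorem sin_ne' (t : ℝ) (ht : t ≠ 0) : Complex.sin (Real.pi * (Complex.I * t)) ≠ 0 :=
  sin_ne _ (by simpa using ht)

theorem Bf_cont_order (t : ℝ) (ht : t ≠ 0) (v : ℂ) (hv : v ≠ 0) : ContinuousAt (fun t => Bf t v) t := by
  have hc1 : Continuous (fun t : ℝ => hf (Complex.I * t) ((v/2)^2)) :=
    hf_cont.comp (f := fun t : ℝ => (t, (v/2)^2)) (by fun_prop)
  have hc2 : Continuous (fun t : ℝ => hf (-(Complex.I * t)) ((v/2)^2)) := by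
    have := hc1.comp (continuous_neg)
    simpa [Function.comp_def] using this
  have hv2 : v / 2 ≠ 0 := div_ne_zero hv two_ne_zero
  have p1 : Continuous (fun t : ℝ => (v/2) ^ (-(Complex.I * t))) := by
    refine Continuous.const_cpow (by fun_prop) (Or.inl hv2)
  have p2 : Continuous (fun t : ℝ => (v/2) ^ ((Complex.I * t))) := by
    refine Continuous.const_cpow (by fun_prop) (Or.inl hv2)
  have p3 : ContinuousAt (fun t : ℝ => (Real.pi / Complex.sin (Real.pi * (Complex.I * t)) : ℂ)) t :=
    continuousAt_const.div (by fun_prop) (sin_ne' t ht)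
  exact p3.mul ((p1.mul hc2).sub (p2.mul hc1)).continuousAt

theorem Bf_neg (t : ℝ) (v : ℂ) : Bf (-t) v = Bf t v := by
  unfold Bf
  push_cast
  rw [mul_neg, neg_neg, mul_neg, Complex.sin_neg, div_neg]
  ring

theorem slit_of (v : ℂ) (hv : v.re = 0) (h0 : v.im ≠ 0) : v ∈ Complex.slitPlane := Or.inr h0

theorem shift_tendsto (v : ℂ) (c : ℝ) : Tendsto (fun ε : ℝ => (c:ℂ) * (v + ε)) (𝓝[>] 0) (𝓝 (c * v)) := by
  have : Continuous (fun ε : ℝ => (c:ℂ) * (v + ε)) := by fun_prop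
  have h := this.tendsto 0
  simp only [Complex.ofReal_zero, add_zero] at h
  exact h.mono_left nhdsWithin_le_nhds

theorem Bf_bound (μ : ℝ) (hμ : μ ≠ 0) (h1 : |μ| ≤ 1) (v : ℂ) (hv : v.re = 0) (h0 : v.im ≠ 0) :
    ‖Bf μ v‖ ≤ 8 / Real.sqrt ‖v‖ := by
  have ht := shift_tendsto v 1
  simp only [Complex.ofReal_one, one_mul] at ht
  have hne : v ≠ 0 := fun h => h0 (by simp [h])
  have hl := ((Bf_cont μ v (slit_of v hv h0)).tendsto.comp ht).norm
  have hr : Tendsto (fun ε : ℝ => 8 / Real.sqrt ‖v + ε‖) (𝓝[>] 0) (𝓝 (8 / Real.sqrt ‖v‖)) :=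
    tendsto_const_nhds.div ((Real.continuous_sqrt.tendsto _).comp ht.norm) (Real.sqrt_pos.2 (norm_pos_iff.2 hne)).ne'
  refine le_of_tendsto_of_tendsto hl hr ?_
  filter_upwards [self_mem_nhdsWithin] with ε hε
  have hε' : 0 < ε := hε
  have hre : 0 < (v + ε).re := by simp [hv]; exact hε'
  simp only [Function.comp]
  rw [← Kf_val μ _ hre hμ]
  exact Kf_bound μ h1 _ hre

theorem Bf_prod (η μ : ℝ) (hη : 0 < η) (hη2 : 2 * η ≤ 1) (hp : η + μ ≠ 0) (hm : η - μ ≠ 0)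
    (v : ℂ) (hv : v.re = 0) (h0 : v.im ≠ 0) :
    Bf (η + μ) v * Bf (η - μ) v =
      2 * ∫ b : ℝ, Complex.exp (2 * Complex.I * μ * b) * Bf (2 * η) ((2 * Real.cosh b : ℝ) * v) := by
  have hne : v ≠ 0 := fun h => h0 (by simp [h])
  have hvn : ‖v‖ = |v.im| := by
    rw [Complex.norm_eq_sqrt_sq_add_sq, hv]; simp [Real.sqrt_sq_eq_abs]
  have hvp : 0 < ‖v‖ := norm_pos_iff.2 hne
  have ht := shift_tendsto v 1
  simp only [Complex.ofReal_one, one_mul] at ht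
  have hc : ∀ t, ContinuousAt (Bf t) v := fun t => Bf_cont t v (slit_of v hv h0)
  have hL := ((hc (η + μ)).tendsto.comp ht).mul ((hc (η - μ)).tendsto.comp ht)
  have hR : Tendsto (fun ε : ℝ => ∫ b : ℝ, Complex.exp (2 * Complex.I * μ * b) * Kf (2 * η) (2 * Real.cosh b * (v + ε))) (𝓝[>] 0)
      (𝓝 (∫ b : ℝ, Complex.exp (2 * Complex.I * μ * b) * Bf (2 * η) ((2 * Real.cosh b : ℝ) * v))) := by
    refine tendsto_integral_filter_of_dominated_convergence
      (fun b => 8 / Real.sqrt (2 * ‖v‖) * (Real.sqrt (Real.cosh b))⁻¹) ?_ ?_ ?_ ?_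
    · filter_upwards [self_mem_nhdsWithin] with ε hε
      have hε' : 0 < ε := hε
      have hre : 0 < (v + ε).re := by simp [hv]; exact hε'
      exact (Kf_prod η μ _ hre).1.aestronglyMeasurable
    · filter_upwards [self_mem_nhdsWithin] with ε hε
      have hε' : 0 < ε := hε
      refine Eventually.of_forall fun b => ?_
      have hcp := Real.cosh_pos b
      have hre : 0 < (2 * Real.cosh b * (v + ε)).re := by
        rw [show (2 * Real.cosh b * (v + ε) : ℂ) = ((2 * Real.cosh b : ℝ) : ℂ) * (v + ε) by push_cast; ring, Complex.re_ofReal_mul]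
        simp [hv, -Complex.ofReal_cosh]; positivity
      have hb := Kf_bound (2 * η) (by rw [abs_of_pos (by positivity)]; exact hη2) _ hre
      have hn1 : ‖Complex.exp (2 * Complex.I * μ * b)‖ = 1 := by
        rw [Complex.norm_exp]; simp
      rw [norm_mul, hn1, one_mul]
      refine hb.trans ?_
      have hlow : 2 * ‖v‖ * Real.cosh b ≤ ‖(2 * Real.cosh b * (v + ε) : ℂ)‖ := by
        rw [show (2 * Real.cosh b * (v + ε) : ℂ) = ((2 * Real.cosh b : ℝ) : ℂ) * (v + ε) by push_cast; ring, norm_mul,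
          Complex.norm_real, Real.norm_of_nonneg (by positivity), hvn]
        have := Complex.abs_im_le_norm (v + ε)
        simp at this
        nlinarith
      calc _ ≤ 8 / Real.sqrt (2 * ‖v‖ * Real.cosh b) := by gcongr
        _ = _ := by rw [Real.sqrt_mul (by positivity)]; field_simp
    · exact inv_sqrt_cosh.1.const_mul _
    · refine Eventually.of_forall fun b => ?_
      have hcp := Real.cosh_pos b
      have hsl : ((2 * Real.cosh b : ℝ) : ℂ) * v ∈ Complex.slitPlane := by
        right
        rw [Complex.im_ofReal_mul]
        exact mul_ne_zero (by positivity) h0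
      have h2 := ((Bf_cont (2 * η) _ hsl).tendsto.comp (shift_tendsto v (2 * Real.cosh b))).const_mul (Complex.exp (2 * Complex.I * μ * b))
      refine h2.congr' ?_
      filter_upwards [self_mem_nhdsWithin] with ε hε
      have hε' : 0 < ε := hε
      have hre : 0 < (((2 * Real.cosh b : ℝ) : ℂ) * (v + ε)).re := by
        rw [Complex.re_ofReal_mul]
        simp [hv, -Complex.ofReal_cosh]; positivity
      simp only [Function.comp]
      rw [← Kf_val _ _ hre (by positivity)]
      push_cast
      rfl
  refine tendsto_nhds_unique hL ((hR.const_mul 2).congr' ?_)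
  filter_upwards [self_mem_nhdsWithin] with ε hε
  have hε' : 0 < ε := hε
  have hre : 0 < (v + ε).re := by simp [hv]; exact hε'
  rw [← (Kf_prod η μ _ hre).2, Kf_val _ _ hre hp, Kf_val _ _ hre hm]
  rfl


theorem J_eq (t y : ℝ) : besselJ (Complex.I * t) y =
    Complex.exp (Complex.I * t * (Real.log (y / 2) : ℝ)) * hf (Complex.I * t) (-((y/2 : ℝ):ℂ)^2) ∨ ¬ 0 < y := by
  by_cases hy : 0 < y
  swap
  · exact Or.inr hy
  left
  rw [besselJ, hf, ← tsum_mul_left]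
  refine tsum_congr fun k => ?_
  have e : Complex.exp (((Real.log (y/2) : ℝ) : ℂ)) = ((y/2 : ℝ) : ℂ) := by
    rw [← Complex.ofReal_exp, Real.exp_log (by positivity)]
  rw [add_mul, Complex.exp_add, show (2 * (k:ℂ)) * (Real.log (y/2) : ℝ) = ((2 * k : ℕ) : ℂ) * (Real.log (y/2) : ℝ) by push_cast; ring,
    Complex.exp_nat_mul, e, pow_mul, neg_pow (((y/2 : ℝ):ℂ)^2) k]
  ring

theorem J_val (t y : ℝ) (hy : 0 < y) : besselJ (Complex.I * t) y =
    Complex.exp (Complex.I * t * (Real.log (y / 2) : ℝ)) * hf (Complex.I * t) (-((y/2 : ℝ):ℂ)^2) :=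
  (J_eq t y).resolve_right (not_not.2 hy)

theorem J_cont (y : ℝ) (hy : 0 < y) : Continuous (fun t : ℝ => besselJ (Complex.I * t) y) := by
  simp_rw [fun t => J_val t y hy]
  have hc1 : Continuous (fun t : ℝ => hf (Complex.I * t) (-((y/2 : ℝ):ℂ)^2)) :=
    hf_cont.comp (f := fun t : ℝ => (t, (-((y/2 : ℝ):ℂ)^2))) (by fun_prop)
  fun_prop

theorem J_zero (y : ℝ) (hy : 0 < y) : besselJ (Complex.I * (0:ℝ)) y = (besselJ0 y : ℂ) := by
  rw [J_val 0 y hy, besselJ0, Complex.ofReal_tsum, hf]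
  simp only [Complex.ofReal_zero, mul_zero, zero_mul, Complex.exp_zero, one_mul, zero_add]
  refine tsum_congr fun k => ?_
  rw [Complex.Gamma_nat_eq_factorial, neg_pow (((y/2 : ℝ):ℂ)^2) k]
  push_cast
  rw [pow_mul]
  ring

theorem J_conj (t y : ℝ) : besselJ (Complex.I * (-t : ℝ)) y = (starRingEnd ℂ) (besselJ (Complex.I * t) y) := by
  rw [besselJ, besselJ, Complex.conj_tsum]
  refine tsum_congr fun k => ?_
  rw [map_div₀, map_mul, map_mul, ← Complex.exp_conj, ← Complex.Gamma_conj]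
  have h2 : (starRingEnd ℂ) (2:ℂ) = 2 := Complex.conj_ofNat 2
  simp [h2]

/-- `c = 1` or `-1` -/
theorem I_val (c t y : ℝ) (hy : 0 < y) (L : ℂ) (hL : Complex.log (c * Complex.I) = c * (Real.pi / 2) * Complex.I)
    (hc : c ^ 2 = 1) (hLL : L = c * y * Complex.I) :
    (L / 2) ^ (Complex.I * t) * hf (Complex.I * t) ((L / 2) ^ 2) =
      Complex.exp (-(c * Real.pi * t / 2)) * besselJ (Complex.I * t) y := by
  have hc' : (c:ℂ)^2 = 1 := by exact_mod_cast hc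
  have hc0 : (c:ℂ) ≠ 0 := fun h => by simp [h] at hc'
  have e1 : L / 2 = ((y/2 : ℝ) : ℂ) * (c * Complex.I) := by rw [hLL]; push_cast; ring
  have e2 : (L/2)^2 = -((y/2 : ℝ):ℂ)^2 := by
    rw [e1, mul_pow, mul_pow, hc', Complex.I_sq]; ring
  have hne : (c * Complex.I : ℂ) ≠ 0 := mul_ne_zero hc0 Complex.I_ne_zero
  have hy2 : 0 < y / 2 := by positivity
  rw [e2, J_val t y hy, ← mul_assoc, ← Complex.exp_add]
  congr 1
  rw [e1, Complex.cpow_def_of_ne_zero (mul_ne_zero (by exact_mod_cast hy2.ne') hne),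
    Complex.log_ofReal_mul hy2 hne, hL]
  congr 1
  linear_combination (c * (Real.pi / 2) * t) * Complex.I_sq

theorem log_one : Complex.log ((1:ℝ) * Complex.I) = (1:ℝ) * (Real.pi / 2) * Complex.I := by
  simp [Complex.log_I]

theorem log_mone : Complex.log ((-1:ℝ) * Complex.I) = (-1:ℝ) * (Real.pi / 2) * Complex.I := by
  simp [Complex.log_neg_I]

theorem Bf_val (c t y : ℝ) (hy : 0 < y) (hL : Complex.log (c * Complex.I) = c * (Real.pi / 2) * Complex.I)
    (hc : c ^ 2 = 1) : Bf t (c * y * Complex.I) = Real.pi / (Complex.I * Complex.sinh (Real.pi * t)) *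
     (Complex.exp (c * Real.pi * t / 2) * besselJ (Complex.I * (-t : ℝ)) y
      - Complex.exp (-(c * Real.pi * t / 2)) * besselJ (Complex.I * t) y) := by
  have h1 := I_val c t y hy _ hL hc rfl
  have h2 := I_val c (-t) y hy _ hL hc rfl
  rw [Bf, ← h1]
  push_cast at h2 ⊢
  rw [show -(c * Real.pi * -(t:ℂ) / 2) = c * Real.pi * t / 2 by ring] at h2
  rw [← h2, mul_neg, show (Real.pi : ℂ) * (Complex.I * t) = (Real.pi * t) * Complex.I by ring, Complex.sin_mul_I]
  rw [mul_comm Complex.I (Complex.sinh _)]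

theorem Bf_diff (t y : ℝ) (hy : 0 < y) (ht : t ≠ 0) :
    Bf t ((-1:ℝ) * y * Complex.I) - Bf t ((1:ℝ) * y * Complex.I) =
      Complex.I * Real.pi / Complex.cosh (Real.pi * t / 2) * (besselJ (Complex.I * t) y + besselJ (Complex.I * (-t : ℝ)) y) := by
  rw [Bf_val _ t y hy log_mone (by norm_num), Bf_val _ t y hy log_one (by norm_num)]
  set A := besselJ (Complex.I * t) y
  set B := besselJ (Complex.I * (-t : ℝ)) y
  set u : ℂ := Real.pi * t / 2 with hu
  have e1 : (Real.pi * t : ℂ) = 2 * u := by rw [hu]; ring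
  have hu' : u = ((Real.pi * t / 2 : ℝ) : ℂ) := by rw [hu]; push_cast; ring
  have hs : Complex.sinh u ≠ 0 := by
    rw [hu', ← Complex.ofReal_sinh]
    have : Real.sinh (Real.pi * t / 2) ≠ 0 := by
      rw [Ne, Real.sinh_eq_zero]
      exact div_ne_zero (mul_ne_zero Real.pi_ne_zero ht) two_ne_zero
    exact_mod_cast this
  have hch : Complex.cosh u ≠ 0 := by
    rw [hu', ← Complex.ofReal_cosh]
    exact_mod_cast (Real.cosh_pos _).ne'
  have e2 : ((-1:ℝ) : ℂ) * Real.pi * t / 2 = -u := by rw [hu]; push_cast; ring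
  have e3 : ((1:ℝ) : ℂ) * Real.pi * t / 2 = u := by rw [hu]; push_cast; ring
  rw [e1, e2, e3, neg_neg, Complex.sinh_two_mul, ← Complex.cosh_sub_sinh u, ← Complex.cosh_add_sinh u]
  have := Complex.I_ne_zero
  field_simp
  linear_combination (- 2 * Complex.sinh u * (A + B)) * Complex.I_sq

theorem Bf_sq_diff (t y : ℝ) (hy : 0 < y) (ht : t ≠ 0) :
    Bf t ((-1:ℝ) * y * Complex.I) ^ 2 - Bf t ((1:ℝ) * y * Complex.I) ^ 2 =
      -(4 * Real.pi ^ 2) * Complex.I * ((((besselJ (Complex.I * t) y) ^ 2).im / Real.sinh (Real.pi * t) : ℝ) : ℂ) := by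
  rw [Bf_val _ t y hy log_mone (by norm_num), Bf_val _ t y hy log_one (by norm_num), J_conj]
  set A := besselJ (Complex.I * t) y
  have hA : A ^ 2 - (starRingEnd ℂ A) ^ 2 = 2 * Complex.I * ((A ^ 2).im : ℝ) := by
    rw [← map_pow, Complex.sub_conj]; push_cast; ring
  set B := starRingEnd ℂ A
  set u : ℂ := Real.pi * t / 2 with hu
  have e1 : (Real.pi * t : ℂ) = 2 * u := by rw [hu]; ring
  have hs : Complex.sinh (2 * u) ≠ 0 := by
    rw [← e1, ← Complex.ofReal_mul, ← Complex.ofReal_sinh]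
    have : Real.sinh (Real.pi * t) ≠ 0 := by
      rw [Ne, Real.sinh_eq_zero]
      exact (mul_ne_zero Real.pi_ne_zero ht)
    exact_mod_cast this
  have e2 : ((-1:ℝ) : ℂ) * Real.pi * t / 2 = -u := by rw [hu]; push_cast; ring
  have e3 : ((1:ℝ) : ℂ) * Real.pi * t / 2 = u := by rw [hu]; push_cast; ring
  rw [Complex.ofReal_div, Complex.ofReal_sinh, Complex.ofReal_mul, e1, e2, e3, neg_neg]
  have h4 : Complex.exp u ^ 2 - Complex.exp (-u) ^ 2 = 2 * Complex.sinh (2 * u) := by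
    rw [← Complex.exp_nat_mul, ← Complex.exp_nat_mul, Complex.sinh]; push_cast
    rw [show -(2 * u) = 2 * -u by ring]; ring
  have hIm : ((A ^ 2).im : ℂ) = (A ^ 2 - B ^ 2) / (2 * Complex.I) := by
    rw [hA]; have := Complex.I_ne_zero; field_simp
  rw [hIm]
  have := Complex.I_ne_zero
  field_simp
  rw [Complex.I_sq]
  linear_combination (2*(A^2 - B^2)) * h4


theorem arg_eq (c x b : ℝ) : ((2 * Real.cosh b : ℝ) : ℂ) * ((c : ℂ) * x * Complex.I)
    = (c : ℂ) * ((2 * x * Real.cosh b : ℝ) : ℂ) * Complex.I := by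
  push_cast; ring

theorem ker_bound (c x b η : ℝ) (hc : |c| = 1) (hx : 0 < x) (hη : 0 < η) (hη2 : 2 * η ≤ 1) :
    ‖Bf (2 * η) ((2 * Real.cosh b : ℝ) * ((c : ℂ) * x * Complex.I))‖ ≤
      8 / Real.sqrt (2 * x) * (Real.sqrt (Real.cosh b))⁻¹ := by
  have hcb := Real.cosh_pos b
  have hc0 : c ≠ 0 := fun h => by simp [h] at hc
  rw [arg_eq]
  refine (Bf_bound (2 * η) (by positivity) (by rw [abs_of_pos (by positivity)]; exact hη2) _ ?_ ?_).trans (le_of_eq ?_)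
  · rw [← Complex.ofReal_mul]; simp
  · rw [← Complex.ofReal_mul, Complex.mul_I_im, Complex.ofReal_re]
    positivity
  · rw [norm_mul, norm_mul, Complex.norm_I, Complex.norm_real, Complex.norm_real, Real.norm_eq_abs, hc,
      Real.norm_eq_abs, abs_of_pos (by positivity), one_mul, mul_one, Real.sqrt_mul (by positivity)]
    rw [div_mul_eq_div_div, div_eq_mul_inv (8 / Real.sqrt (2 * x))]

theorem ker_cont (c x η μ : ℝ) (hc : |c| = 1) (hx : 0 < x) :
    Continuous (fun b : ℝ => Complex.exp (2 * Complex.I * μ * b) * Bf (2 * η) ((2 * Real.cosh b : ℝ) * ((c : ℂ) * x * Complex.I))) := by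
  have hc0 : c ≠ 0 := fun h => by simp [h] at hc
  refine Continuous.mul (by fun_prop) (continuous_iff_continuousAt.2 fun b => ?_)
  have h1 : ContinuousAt (Bf (2 * η)) ((2 * Real.cosh b : ℝ) * ((c : ℂ) * x * Complex.I)) := by
    refine Bf_cont _ _ (Or.inr ?_)
    rw [arg_eq, ← Complex.ofReal_mul, Complex.mul_I_im, Complex.ofReal_re]
    have hcb := Real.cosh_pos b
    positivity
  have h2 : ContinuousAt (fun b : ℝ => ((2 * Real.cosh b : ℝ) : ℂ) * ((c : ℂ) * x * Complex.I)) b := by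
    apply Continuous.continuousAt
    have := Real.continuous_cosh
    fun_prop
  exact ContinuousAt.comp (f := fun b : ℝ => ((2 * Real.cosh b : ℝ) : ℂ) * ((c : ℂ) * x * Complex.I)) h1 h2

theorem exp_norm (μ b : ℝ) : ‖Complex.exp (2 * Complex.I * μ * b)‖ = 1 := by
  rw [Complex.norm_exp]; simp

theorem ker_int (c x η μ : ℝ) (hc : |c| = 1) (hx : 0 < x) (hη : 0 < η) (hη2 : 2 * η ≤ 1) :
    Integrable (fun b : ℝ => Complex.exp (2 * Complex.I * μ * b) * Bf (2 * η) ((2 * Real.cosh b : ℝ) * ((c : ℂ) * x * Complex.I))) := by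
  refine (inv_sqrt_cosh.1.const_mul (8 / Real.sqrt (2 * x))).mono' (ker_cont c x η μ hc hx).aestronglyMeasurable
    (Eventually.of_forall fun b => ?_)
  rw [norm_mul, exp_norm, one_mul]
  exact ker_bound c x b η hc hx hη hη2

theorem prod_diff (η μ x : ℝ) (hx : 0 < x) (hη : 0 < η) (hη2 : 2 * η ≤ 1) (hp : η + μ ≠ 0) (hm : η - μ ≠ 0) :
    Bf (η + μ) ((-1:ℝ) * x * Complex.I) * Bf (η - μ) ((-1:ℝ) * x * Complex.I)
      - Bf (η + μ) ((1:ℝ) * x * Complex.I) * Bf (η - μ) ((1:ℝ) * x * Complex.I) =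
    2 * ∫ b : ℝ, (Complex.exp (2 * Complex.I * μ * b) * Bf (2 * η) ((2 * Real.cosh b : ℝ) * ((-1:ℝ) * x * Complex.I))
      - Complex.exp (2 * Complex.I * μ * b) * Bf (2 * η) ((2 * Real.cosh b : ℝ) * ((1:ℝ) * x * Complex.I))) := by
  rw [integral_sub (ker_int (-1) x η μ (by norm_num) hx hη hη2) (ker_int 1 x η μ (by norm_num) hx hη hη2), mul_sub,
    ← Bf_prod η μ hη hη2 hp hm _ (by simp) (by simpa using hx.ne'),
    ← Bf_prod η μ hη hη2 hp hm _ (by simp) (by simpa using hx.ne')]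

theorem lim_int (μ x : ℝ) (hx : 0 < x) :
    Tendsto (fun η : ℝ => ∫ b : ℝ, (Complex.exp (2 * Complex.I * μ * b) * Bf (2 * η) ((2 * Real.cosh b : ℝ) * ((-1:ℝ) * x * Complex.I))
      - Complex.exp (2 * Complex.I * μ * b) * Bf (2 * η) ((2 * Real.cosh b : ℝ) * ((1:ℝ) * x * Complex.I)))) (𝓝[>] 0)
      (𝓝 (∫ b : ℝ, Complex.exp (2 * Complex.I * μ * b) * (2 * Real.pi * Complex.I * besselJ0 (2 * x * Real.cosh b)))) := by
  have hev : ∀ᶠ η : ℝ in 𝓝[>] 0, 0 < η ∧ 2 * η ≤ 1 := by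
    filter_upwards [Ioo_mem_nhdsGT (show (0:ℝ) < 1/2 by norm_num)] with η h
    exact ⟨h.1, by linarith [h.2]⟩
  refine tendsto_integral_filter_of_dominated_convergence (fun b => 8 / Real.sqrt (2 * x) * (Real.sqrt (Real.cosh b))⁻¹
      + 8 / Real.sqrt (2 * x) * (Real.sqrt (Real.cosh b))⁻¹) ?_ ?_ ?_ ?_
  · exact Eventually.of_forall fun η => ((ker_cont (-1) x η μ (by norm_num) hx).sub
      (ker_cont 1 x η μ (by norm_num) hx)).aestronglyMeasurable
  · filter_upwards [hev] with η h
    refine Eventually.of_forall fun b => (norm_sub_le _ _).trans (add_le_add ?_ ?_)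
    · rw [norm_mul, exp_norm, one_mul]; exact ker_bound _ x b η (by norm_num) hx h.1 h.2
    · rw [norm_mul, exp_norm, one_mul]; exact ker_bound _ x b η (by norm_num) hx h.1 h.2
  · exact (inv_sqrt_cosh.1.const_mul _).add (inv_sqrt_cosh.1.const_mul _)
  · refine Eventually.of_forall fun b => ?_
    simp only [← mul_sub]
    refine Tendsto.const_mul _ ?_
    have hcb := Real.cosh_pos b
    have hy : 0 < 2 * x * Real.cosh b := by positivity
    set y := 2 * x * Real.cosh b with hyd
    have hJ := J_cont y hy
    have hJn : Continuous (fun t : ℝ => besselJ (Complex.I * ((-t : ℝ) : ℂ)) y) := hJ.comp continuous_neg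
    have hc : Continuous (fun η : ℝ => Complex.I * Real.pi / Complex.cosh (Real.pi * (2 * η : ℝ) / 2) *
       (besselJ (Complex.I * (2 * η : ℝ)) y + besselJ (Complex.I * (-(2 * η) : ℝ)) y)) := by
      have h1 := hJ.comp (continuous_const_mul (2:ℝ))
      have h2 := hJn.comp (continuous_const_mul (2:ℝ))
      refine Continuous.mul (Continuous.div (by fun_prop) ?_ ?_) (h1.add h2)
      · exact Complex.continuous_cosh.comp (by fun_prop)
      · intro η
        have : (Real.pi * (2 * η : ℝ) / 2 : ℂ) = ((Real.pi * (2 * η) / 2 : ℝ) : ℂ) := by push_cast; ring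
        rw [this, ← Complex.ofReal_cosh]
        exact_mod_cast (Real.cosh_pos _).ne'
    have ht := (hc.tendsto 0).mono_left (nhdsWithin_le_nhds (s := Set.Ioi 0))
    have h00 := J_zero y hy
    rw [mul_zero, neg_zero, h00] at ht
    have e : Complex.I * Real.pi / Complex.cosh (Real.pi * ((0:ℝ):ℂ) / 2) * ((besselJ0 y : ℂ) + (besselJ0 y : ℂ))
        = 2 * Real.pi * Complex.I * besselJ0 y := by
      simp; ring
    rw [e] at ht
    refine ht.congr' ?_
    filter_upwards [hev] with η h
    rw [arg_eq, arg_eq, ← hyd, ← Bf_diff (2 * η) y hy (by have := h.1; positivity)]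

theorem final_id (μ x : ℝ) (hμ : 0 < μ) (hx : 0 < x) :
    -(4 * Real.pi ^ 2) * Complex.I * ((((besselJ (Complex.I * μ) x) ^ 2).im / Real.sinh (Real.pi * μ) : ℝ) : ℂ) =
    2 * ∫ b : ℝ, Complex.exp (2 * Complex.I * μ * b) * (2 * Real.pi * Complex.I * besselJ0 (2 * x * Real.cosh b)) := by
  rw [← Bf_sq_diff μ x hx hμ.ne']
  have h1 := (lim_int μ x hx).const_mul 2
  have hB : ∀ c : ℝ, |c| = 1 → Tendsto (fun η : ℝ => Bf (η + μ) (c * x * Complex.I) * Bf (η - μ) (c * x * Complex.I)) (𝓝[>] 0)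
      (𝓝 (Bf μ (c * x * Complex.I) ^ 2)) := fun c hc => by
    have hc0 : c ≠ 0 := fun h => by simp [h] at hc
    have hv : (c : ℂ) * x * Complex.I ≠ 0 :=
      mul_ne_zero (mul_ne_zero (by exact_mod_cast hc0) (by exact_mod_cast hx.ne')) Complex.I_ne_zero
    have a1 : Tendsto (fun η : ℝ => η + μ) (𝓝[>] 0) (𝓝 μ) := by
      have : Tendsto (fun η : ℝ => η + μ) (𝓝 0) (𝓝 (0 + μ)) := Continuous.tendsto (by fun_prop) 0
      rw [zero_add] at this
      exact this.mono_left nhdsWithin_le_nhds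
    have a2 : Tendsto (fun η : ℝ => η - μ) (𝓝[>] 0) (𝓝 (-μ)) := by
      have : Tendsto (fun η : ℝ => η - μ) (𝓝 0) (𝓝 (0 - μ)) := Continuous.tendsto (by fun_prop) 0
      rw [zero_sub] at this
      exact this.mono_left nhdsWithin_le_nhds
    have := ((Bf_cont_order μ hμ.ne' _ hv).tendsto.comp a1).mul
      ((Bf_cont_order (-μ) (neg_ne_zero.2 hμ.ne') _ hv).tendsto.comp a2)
    rw [Bf_neg, ← pow_two] at this
    exact this
  have h2 := (hB (-1) (by norm_num)).sub (hB 1 (by norm_num))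
  refine tendsto_nhds_unique h2 (h1.congr' ?_)
  have h3 : (0:ℝ) < min (1/2) μ := by positivity
  filter_upwards [Ioo_mem_nhdsGT h3] with η h
  have h5 := h.2.trans_le (min_le_left _ _)
  have h6 := h.2.trans_le (min_le_right _ _)
  have h7 := h.1
  exact (prod_diff η μ x hx h.1 (by linarith) (by positivity) (by linarith)).symm

theorem final_bound (M : ℝ) (hbound : ∀ u : ℝ, 0 < u → Real.sqrt u * |besselJ0 u| ≤ M)
    (x : ℝ) (hx : 0 < x) (μ : ℝ) (hμ : 0 < μ) :
    |((besselJ (Complex.I * μ) x) ^ 2).im| / Real.sinh (Real.pi * μ)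
      ≤ Real.Gamma (1 / 4) ^ 2 * M / (2 * Real.pi * Real.sqrt (Real.pi * x)) := by
  have hpi := Real.pi_pos
  have hs : 0 < Real.sinh (Real.pi * μ) := Real.sinh_pos_iff.2 (by positivity)
  have h := congrArg norm (final_id μ x hμ hx)
  have hb : ‖∫ b : ℝ, Complex.exp (2 * Complex.I * μ * b) * (2 * Real.pi * Complex.I * besselJ0 (2 * x * Real.cosh b))‖
      ≤ ∫ b : ℝ, 2 * Real.pi * M / Real.sqrt (2 * x) * (Real.sqrt (Real.cosh b))⁻¹ := by
    refine norm_integral_le_of_norm_le (inv_sqrt_cosh.1.const_mul _) (Eventually.of_forall fun b => ?_)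
    have hcb := Real.cosh_pos b
    have := hbound (2 * x * Real.cosh b) (by positivity)
    rw [Real.sqrt_mul (by positivity)] at this
    rw [norm_mul, exp_norm, one_mul, norm_mul, norm_mul, norm_mul, Complex.norm_I, Complex.norm_real, Complex.norm_real,
      Real.norm_eq_abs, Real.norm_eq_abs, abs_of_pos hpi, Complex.norm_ofNat, mul_one]
    have s1 : 0 < Real.sqrt (2 * x) := Real.sqrt_pos.2 (by positivity)
    have s2 : 0 < Real.sqrt (Real.cosh b) := Real.sqrt_pos.2 hcb
    rw [← div_eq_mul_inv, div_div, mul_div_assoc]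
    refine mul_le_mul_of_nonneg_left ?_ (by positivity)
    rw [le_div_iff₀ (by positivity), mul_comm]
    exact this
  rw [integral_const_mul, inv_sqrt_cosh.2] at hb
  rw [norm_mul, norm_mul, norm_mul, norm_neg, norm_mul, norm_pow, Complex.norm_I, Complex.norm_real, Complex.norm_real,
      Real.norm_eq_abs, Real.norm_eq_abs, abs_of_pos hpi, Complex.norm_ofNat, Complex.norm_ofNat, abs_div, abs_of_pos hs, mul_one] at h
  set Q := |((besselJ (Complex.I * μ) x) ^ 2).im| / Real.sinh (Real.pi * μ)
  have hq : Q = (2 * ‖∫ b : ℝ, Complex.exp (2 * Complex.I * μ * b) * (2 * Real.pi * Complex.I * besselJ0 (2 * x * Real.cosh b))‖)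
      / (4 * Real.pi ^ 2) := by
    rw [← h]; field_simp
  rw [hq]
  have e : Real.sqrt (2 * x) * Real.sqrt (2 * Real.pi) = 2 * Real.sqrt (Real.pi * x) := by
    rw [← Real.sqrt_mul (by positivity), show 2 * x * (2 * Real.pi) = 2 ^ 2 * (Real.pi * x) by ring,
      Real.sqrt_mul (by positivity), Real.sqrt_sq (by norm_num)]
  have s3 : 0 < Real.sqrt (Real.pi * x) := Real.sqrt_pos.2 (by positivity)
  calc _ ≤ (2 * (2 * Real.pi * M / Real.sqrt (2 * x) * (Real.Gamma (1/4) ^ 2 / Real.sqrt (2 * Real.pi)))) / (4 * Real.pi ^ 2) := by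
        gcongr
    _ = (2 * (2 * Real.pi * M * Real.Gamma (1/4) ^ 2 / (Real.sqrt (2 * x) * Real.sqrt (2 * Real.pi)))) / (4 * Real.pi ^ 2) := by
        rw [div_mul_div_comm]
    _ = _ := by
        rw [e]; field_simp; ring

theorem statement10 (M : ℝ) (hM : 0 ≤ M)
    (hbound : ∀ u : ℝ, 0 < u → Real.sqrt u * |besselJ0 u| ≤ M)
    (x : ℝ) (hx : 0 < x) (n : ℕ) (hn : 1 ≤ n) :
    |((besselJ (Complex.I * n / 2) x) ^ 2).im| / Real.sinh (Real.pi * n / 2)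
      ≤ Real.Gamma (1 / 4) ^ 2 * M / (2 * Real.pi * Real.sqrt (Real.pi * x)) := by
  have hn' : (0:ℝ) < n := by exact_mod_cast hn
  have h := final_bound M hbound x hx (n / 2) (by positivity)
  rw [show Complex.I * (((n:ℝ) / 2 : ℝ) : ℂ) = Complex.I * n / 2 by push_cast; ring,
    show Real.pi * ((n:ℝ) / 2) = Real.pi * n / 2 by ring] at h
  exact h
end
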